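/- arXiv:1302.3961 — 4 statements merged into one kernel-verified Lean document; each statement's English description precedes it below -/
import Mathlib

section
/- Let n ≥ 2, let p > 1 with p ≠ n, and let 1 ≤ q < p. There exist constants Θ = Θ(n,p,q) ≥ 0 and C = C(n,p,q) > 0 such that for every bounded domain Ω ⊂ ℝⁿ containing the origin, every u ∈ C_c^∞(Ω \ {0}), every open ball B_r ⊂ ℝⁿ of radius r ∈ (0, diam(Ω)) whose closure contains the origin, and every D ≥ e^Θ · diam(Ω), one has r^{n/p} · X^{1/p}(r/D) · ( (1/(ω_n rⁿ)) ∫_{B_r} |u(x)|^q / |x|^q dx )^{1/q} ≤ C · ( ∫_Ω |∇u|^p dx − |(p−n)/p|^p ∫_Ω |u|^p/|x|^p dx )^{1/p}, where u is extended by zero outside Ω. -/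
open MeasureTheory Metric Set

lemma bern (p : ℝ) (hp : 1 < p) : ∃ c : ℝ, 0 < c ∧ ∀ t : ℝ,
    c * t ^ 2 / (1 + |t|) ≤ |1 + t| ^ p - 1 - p * t := by
  rcases le_total p 2 with h2 | h2
  · refine ⟨(p - 1) ^ 2, by nlinarith, fun t => ?_⟩
    rcases le_or_gt (-1) t with ht | ht
    · rcases eq_or_lt_of_le ht with rfl | ht'
      · rw [show (1 + -1 : ℝ) = 0 by norm_num, abs_zero, Real.zero_rpow (by linarith)]
        norm_num
        nlinarith
      · have h1 : 0 < 1 + t := by linarith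
        rw [abs_of_pos h1]
        have hb : (1 + t) ^ (2 - p) ≤ 1 + (2 - p) * t :=
          rpow_one_add_le_one_add_mul_self ht (by linarith) (by linarith)
        have hpos : 0 < (1 + t) ^ (2 - p) := Real.rpow_pos_of_pos h1 _
        have hm : (1 + t) ^ (2 - p) * (1 + t) ^ p = (1 + t) ^ 2 := by
          rw [← Real.rpow_add h1, ← Real.rpow_natCast]; norm_num
        have hpp : 0 < (1 + t) ^ p := Real.rpow_pos_of_pos h1 _
        have hden : 0 < 1 + (2 - p) * t := by linarith
        have h3 : (1 + t) ^ 2 ≤ (1 + (2 - p) * t) * (1 + t) ^ p := by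
          rw [← hm]; gcongr
        have h4 : (p - 1) ^ 2 * t ^ 2 / (1 + |t|) ≤ (p - 1) ^ 2 * t ^ 2 / (1 + (2 - p) * t) := by
          apply div_le_div_of_nonneg_left (by positivity) hden
          have := le_abs_self t
          have := neg_abs_le t
          have := abs_nonneg t
          nlinarith
        refine h4.trans ?_
        rw [div_le_iff₀ hden]
        nlinarith
    · have h0 : 0 ≤ |1 + t| ^ p := by positivity
      rw [abs_of_neg (by linarith : t < 0), div_le_iff₀ (by linarith)]
      have h5 : (p - 1) * (-t) ≤ |1 + t| ^ p - 1 - p * t := by nlinarith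
      have h6 : (p-1)^2 ≤ p - 1 := by nlinarith
      have : (p-1)^2 * t^2 ≤ (p-1) * (-t) * (1 + -t) := by
        have : (p-1)^2 * t^2 ≤ (p-1) * t^2 := by gcongr
        nlinarith [mul_pos (by linarith : 0 < p - 1) (by linarith : 0 < -t)]
      refine this.trans ?_
      gcongr
      linarith
  · refine ⟨1, one_pos, fun t => ?_⟩
    have hb := one_add_mul_self_le_rpow_one_add (s := 2 * t + t ^ 2) (by nlinarith [sq_nonneg (t+1)])
      (p := p / 2) (by linarith)
    have : (1 + (2 * t + t ^ 2)) ^ (p / 2) = |1 + t| ^ p := by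
      rw [show 1 + (2 * t + t ^ 2) = |1 + t| ^ (2:ℝ) by
        rw [show (2:ℝ) = ((2:ℕ):ℝ) by norm_num, Real.rpow_natCast, sq_abs]; push_cast; ring]
      rw [← Real.rpow_mul (abs_nonneg _)]; congr 1; ring
    rw [this] at hb
    have h4 : 1 * t ^ 2 / (1 + |t|) ≤ 1 * t ^ 2 := by
      apply div_le_self (by positivity); linarith [abs_nonneg t]
    nlinarith [sq_nonneg t]

lemma rem_ineq (p : ℝ) (hp : 1 < p) : ∃ K : ℝ, 0 < K ∧ ∀ a b ε : ℝ, 0 < ε → ε ≤ 1 →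
    0 ≤ |a + b| ^ p - |a| ^ p - p * (|a| ^ (p - 2) * a) * b ∧
    |a| ^ (p - 1) * |b| ≤ ε * |a| ^ p +
      K / ε * (|a + b| ^ p - |a| ^ p - p * (|a| ^ (p - 2) * a) * b) := by
  obtain ⟨c, hc, hb⟩ := bern p hp
  have key : ∀ t ε : ℝ, 0 < ε → ε ≤ 1 → |t| ≤ ε + 2 / c / ε * (|1 + t| ^ p - 1 - p * t) := by
    intro t ε he he1
    have h1 := hb t
    have h0 : 0 ≤ c * t ^ 2 / (1 + |t|) := by positivity
    rcases le_total |t| ε with h | h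
    · have : 0 ≤ 2 / c / ε * (|1 + t| ^ p - 1 - p * t) := by
        apply mul_nonneg (by positivity); linarith
      linarith
    · have h2 : c * ε * |t| / 2 ≤ c * t ^ 2 / (1 + |t|) := by
        rw [div_le_div_iff₀ (by norm_num) (by positivity), ← sq_abs t]
        have : ε * (1 + |t|) ≤ 2 * |t| := by nlinarith [abs_nonneg t]
        nlinarith [mul_nonneg hc.le (abs_nonneg t)]
      have h3 : |t| = 2 / c / ε * (c * ε * |t| / 2) := by field_simp
      have h4 : 2 / c / ε * (c * ε * |t| / 2) ≤ 2 / c / ε * (|1 + t| ^ p - 1 - p * t) := by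
        gcongr; linarith
      linarith
  refine ⟨2 / c, by positivity, fun a b ε he he1 => ?_⟩
  rcases eq_or_ne a 0 with rfl | ha
  · simp only [abs_zero, Real.zero_rpow (by linarith : p - 1 ≠ 0), Real.zero_rpow (by linarith : p ≠ 0)]
    simp
    constructor <;> positivity
  · have hA : 0 < |a| := abs_pos.2 ha
    have e1 : |a + b| ^ p = |a| ^ p * |1 + b / a| ^ p := by
      rw [← Real.mul_rpow (by positivity) (by positivity), ← abs_mul]; congr 2; field_simp
    have e2 : |a| ^ (p - 2) * a * b = |a| ^ p * (b / a) := by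
      rw [Real.rpow_sub hA, show (2:ℝ) = ((2:ℕ):ℝ) by norm_num, Real.rpow_natCast, sq_abs]
      field_simp
    have e3 : |a| ^ (p - 1) * |b| = |a| ^ p * |b / a| := by
      rw [Real.rpow_sub hA, Real.rpow_one, abs_div]; field_simp
    have e4 : |a + b| ^ p - |a| ^ p - p * (|a| ^ (p - 2) * a) * b =
        |a| ^ p * (|1 + b / a| ^ p - 1 - p * (b / a)) := by
      rw [e1, mul_assoc p, e2]; ring
    have hP : 0 ≤ |a| ^ p := by positivity
    rw [e4, e3]
    constructor
    · apply mul_nonneg hP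
      have := hb (b / a)
      have h0 : 0 ≤ c * (b/a) ^ 2 / (1 + |b/a|) := by positivity
      linarith
    · calc _ ≤ |a| ^ p * (ε + 2 / c / ε * (|1 + b / a| ^ p - 1 - p * (b / a))) := by
            gcongr; exact key _ _ he he1
        _ = _ := by ring
lemma div_id (n : ℕ) (G : EuclideanSpace ℝ (Fin n) → ℝ) (hG : ContDiff ℝ 1 G)
    (hc : HasCompactSupport G) :
    Integrable (fun x => (n : ℝ) * G x + fderiv ℝ G x x) ∧
    ∫ x, ((n : ℝ) * G x + fderiv ℝ G x x) = 0 := by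
  have hGc := hG.continuous
  have hGi : Integrable G := hGc.integrable_of_hasCompactSupport hc
  have hdc : Continuous (fderiv ℝ G) := hG.continuous_fderiv (by simp)
  have hdx : Continuous (fun x => fderiv ℝ G x x) := hdc.clm_apply continuous_id
  have hdxi : Integrable (fun x => fderiv ℝ G x x) := by
    apply hdx.integrable_of_hasCompactSupport
    apply (hc.fderiv ℝ).mono
    intro x hx h0
    apply hx
    simp only at h0 ⊢
    rw [h0]; simp
  let e : Fin n → EuclideanSpace ℝ (Fin n) := fun i => EuclideanSpace.single i 1
  have hde : ∀ i, Continuous (fun x => x i * fderiv ℝ G x (e i)) := fun i => by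
    have : Continuous (fun x => fderiv ℝ G x (e i)) := hdc.clm_apply continuous_const
    fun_prop
  have hdei : ∀ i, Integrable (fun x => x i * fderiv ℝ G x (e i)) := fun i => by
    apply (hde i).integrable_of_hasCompactSupport
    apply (hc.fderiv ℝ).mono
    intro x hx h0
    apply hx
    simp only at h0 ⊢
    rw [h0]; simp
  have hf : ∀ i (x : EuclideanSpace ℝ (Fin n)),
      HasFDerivAt (fun x : EuclideanSpace ℝ (Fin n) => x i) (EuclideanSpace.proj (𝕜 := ℝ) i) x :=
    fun i x => (EuclideanSpace.proj (𝕜 := ℝ) i).hasFDerivAt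
  have hf1 : ∀ i (x : EuclideanSpace ℝ (Fin n)),
      fderiv ℝ (fun x : EuclideanSpace ℝ (Fin n) => x i) x (e i) = 1 := fun i x => by
    rw [(hf i x).fderiv]; simp [e]
  have hI : ∀ i, ∫ x, x i * fderiv ℝ G x (e i) = - ∫ x, G x := fun i => by
    rw [integral_mul_fderiv_eq_neg_fderiv_mul_of_integrable
      (f := fun x : EuclideanSpace ℝ (Fin n) => x i) (g := G) (v := e i)]
    · simp only [hf1, one_mul]
    · simpa only [hf1, one_mul] using hGi
    · exact hdei i
    · apply Continuous.integrable_of_hasCompactSupport (by fun_prop)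
      exact hc.mul_left
    · intro x _; exact (hf i x).differentiableAt
    · intro x _; exact hG.differentiable (by simp) x
  have hs : ∀ x : EuclideanSpace ℝ (Fin n), fderiv ℝ G x x = ∑ i, x i * fderiv ℝ G x (e i) := by
    intro x
    have hx : x = ∑ i, x i • e i := by
      ext j; simp [e, Pi.single_apply]
    have h2 : ∀ L : EuclideanSpace ℝ (Fin n) →L[ℝ] ℝ, L x = ∑ i, x i * L (e i) := by
      intro L
      conv_lhs => rw [hx]
      simp
    exact h2 _
  refine ⟨(hGi.const_mul _).add hdxi, ?_⟩
  rw [integral_add (hGi.const_mul _) hdxi, integral_const_mul]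
  simp_rw [hs]
  rw [integral_finsetSum _ (fun i _ => hdei i)]
  simp [hI]

lemma fd_formula (n : ℕ) (p : ℝ) (hp : 1 < p) (u : EuclideanSpace ℝ (Fin n) → ℝ)
    (k : ℝ → ℝ) (k' : ℝ) (x : EuclideanSpace ℝ (Fin n)) (hx : x ≠ 0)
    (hu : DifferentiableAt ℝ u x) (hk : HasDerivAt k k' ‖x‖) :
    fderiv ℝ (fun x => |u x| ^ p * k ‖x‖) x x =
      p * |u x| ^ (p - 2) * u x * fderiv ℝ u x x * k ‖x‖ + |u x| ^ p * (k' * ‖x‖) := by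
  have hn : DifferentiableAt ℝ (fun x : EuclideanSpace ℝ (Fin n) => ‖x‖) x :=
    (contDiffAt_norm ℝ hx (n := 1)).differentiableAt (by simp)
  have h1 := (hasDerivAt_abs_rpow (u x) hp).comp_hasFDerivAt x hu.hasFDerivAt
  have h2 := hk.comp_hasFDerivAt x hn.hasFDerivAt
  have h3 := h1.mul h2
  have h4 : fderiv ℝ (fun x => |u x| ^ p * k ‖x‖) x = _ := h3.fderiv
  rw [h4]
  have h5 := hn.fderiv_norm_self
  simp [h5]
  ring

lemma cont_cs {n : ℕ} (m : WithTop ℕ∞) (u : EuclideanSpace ℝ (Fin n) → ℝ) (F : ℝ → ℝ) (hF0 : F 0 = 0)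
    (hF : ContDiff ℝ m F) (hu : ContDiff ℝ m u) (hc : HasCompactSupport u)
    (ψ : EuclideanSpace ℝ (Fin n) → ℝ) (hψ : ∀ x ∈ tsupport u, ContDiffAt ℝ m ψ x) :
    ContDiff ℝ m (fun x => F (u x) * ψ x) ∧ HasCompactSupport (fun x => F (u x) * ψ x) := by
  constructor
  · rw [contDiff_iff_contDiffAt]
    intro x
    by_cases hx : x ∈ tsupport u
    · exact (hF.comp hu).contDiffAt.mul (hψ x hx)
    · have : (fun x => F (u x) * ψ x) =ᶠ[nhds x] fun _ => 0 := by
        filter_upwards [notMem_tsupport_iff_eventuallyEq.1 hx] with y hy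
        simp [hy, hF0]
      exact contDiffAt_const.congr_of_eventuallyEq this
  · apply hc.mono
    intro x hx h0
    apply hx
    simp [h0, hF0]

set_option maxHeartbeats 4000000 in
lemma main_ineq (n : ℕ) (p : ℝ) (hp : 1 < p) (hpn : p ≠ (n : ℝ)) :
    ∃ C : ℝ, 0 < C ∧ ∀ u : EuclideanSpace ℝ (Fin n) → ℝ, ContDiff ℝ (⊤ : ℕ∞) u →
      HasCompactSupport u → (0 : EuclideanSpace ℝ (Fin n)) ∉ tsupport u →
      ∀ (g g1 : ℝ → ℝ) (N : ℝ), 0 ≤ N →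
      (∀ x ∈ tsupport u, ContDiffAt ℝ 1 g ‖x‖ ∧ HasDerivAt g (g1 ‖x‖ / ‖x‖) ‖x‖ ∧ 0 < g ‖x‖ ∧
        0 < g1 ‖x‖ ∧ g1 ‖x‖ ≤ g ‖x‖ ∧ g ‖x‖ ^ 2 ≤ N * g1 ‖x‖) →
      ∀ W : EuclideanSpace ℝ (Fin n) → ℝ, (∀ x, 0 ≤ W x) →
      (∀ x ∈ tsupport u, W x ≤ |u x| ^ p * ‖x‖ ^ (-p) * g1 ‖x‖) →
      (∀ x, x ∉ tsupport u → W x = 0) →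
      ∫ x, W x ≤ C * N * ((∫ x, ‖fderiv ℝ u x‖ ^ p)
                - |(p - n) / p| ^ p * ∫ x, |u x| ^ p / ‖x‖ ^ p) := by
  obtain ⟨K, hK, hrem⟩ := rem_ineq p hp
  set H : ℝ := (n - p) / p with hH
  have hp0 : 0 < p := by linarith
  have hHne : H ≠ 0 := by
    rw [hH]; apply div_ne_zero (sub_ne_zero.2 hpn.symm) hp0.ne'
  have hHa : 0 < |H| := abs_pos.2 hHne
  have hpH : p * H = n - p := by rw [hH]; field_simp
  have hHabs : |(p - n) / p| = |H| := by
    rw [hH, ← abs_neg]; congr 1; ring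
  set δ : ℝ := min 1 (1 / (2 * p * |H|)) with hδ
  have hδ0 : 0 < δ := by rw [hδ]; positivity
  have hδ1 : δ ≤ 1 := min_le_left _ _
  have hδ2 : p * |H| * δ ≤ 1 / 2 := by
    have : δ ≤ 1 / (2 * p * |H|) := min_le_right _ _
    calc p * |H| * δ ≤ p * |H| * (1 / (2 * p * |H|)) := by gcongr
      _ = 1 / 2 := by field_simp
  have hHq : 0 < |H| ^ (p - 1) := by positivity
  refine ⟨2 * (p * K / (|H| ^ (p - 1) * δ)), by positivity, ?_⟩
  intro u hu hc h0 g g1 N hN hg W hW hW1 hW2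
  have hu1 : ContDiff ℝ 1 u := hu.of_le (by exact_mod_cast le_top)
  have hne : ∀ x ∈ tsupport u, x ≠ 0 := fun x hx h => h0 (h ▸ hx)
  have habs : ContDiff ℝ 1 (fun t : ℝ => |t| ^ p) := by
    simpa using contDiff_norm_rpow (E := ℝ) hp
  have hz : |(0:ℝ)| ^ p = 0 := by simp [hp0.ne']
  have hnorm : ∀ x ∈ tsupport u, ContDiffAt ℝ 1 (fun x : EuclideanSpace ℝ (Fin n) => ‖x‖ ^ (-p)) x :=
    fun x hx => (contDiffAt_norm ℝ (hne x hx)).rpow_const_of_ne (norm_ne_zero_iff.2 (hne x hx))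
  set G : EuclideanSpace ℝ (Fin n) → ℝ := fun x => |u x| ^ p * (‖x‖ ^ (-p) * g ‖x‖) with hGdef
  set G1 : EuclideanSpace ℝ (Fin n) → ℝ := fun x => |u x| ^ p * ‖x‖ ^ (-p) with hG1def
  obtain ⟨hG, hGc⟩ := cont_cs 1 u (fun t : ℝ => |t| ^ p) hz habs hu1 hc
    (fun x => ‖x‖ ^ (-p) * g ‖x‖) (fun x hx => (hnorm x hx).mul
      ((hg x hx).1.comp x (contDiffAt_norm ℝ (hne x hx))))
  obtain ⟨hG1, hG1c⟩ := cont_cs 1 u (fun t : ℝ => |t| ^ p) hz habs hu1 hc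
    (fun x => ‖x‖ ^ (-p)) hnorm
  obtain ⟨hSi, hS0⟩ := div_id n G hG hGc
  obtain ⟨hS1i, hS10⟩ := div_id n G1 hG1 hG1c
  set S : EuclideanSpace ℝ (Fin n) → ℝ := fun x => (n : ℝ) * G x + fderiv ℝ G x x with hSdef
  set S1 : EuclideanSpace ℝ (Fin n) → ℝ := fun x => (n : ℝ) * G1 x + fderiv ℝ G1 x x with hS1def
  have hG1i : Integrable G1 := hG1.continuous.integrable_of_hasCompactSupport hG1c
  have hDi : Integrable (fun x => ‖fderiv ℝ u x‖ ^ p) := by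
    apply Continuous.integrable_of_hasCompactSupport
    · exact ((hu1.continuous_fderiv (by simp)).norm).rpow_const (fun _ => Or.inr hp0.le)
    · apply (hc.fderiv ℝ).mono
      intro x hx h0
      apply hx
      simp [h0, hp0.ne']
  set κ : ℝ := |H| ^ (p - 2) * H with hκ
  set E : EuclideanSpace ℝ (Fin n) → ℝ :=
    fun x => ‖fderiv ℝ u x‖ ^ p - |H| ^ p * G1 x + κ * S1 x with hE
  have hEi : Integrable E := (hDi.sub (hG1i.const_mul _)).add (hS1i.const_mul _)
  set C0 : ℝ := p * K / (|H| ^ (p - 1) * δ) with hC0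
  have hC0p : 0 < C0 := by rw [hC0]; positivity
  have hpt : ∀ x, W x ≤ 2 * S x + 2 * C0 * N * E x := by
    intro x
    by_cases hx : x ∈ tsupport u
    · refine (hW1 x hx).trans ?_
      obtain ⟨-, hgd, hgp, hg1p, hg1g, hgN⟩ := hg x hx
      have hxn := hne x hx
      have ht : 0 < ‖x‖ := norm_pos_iff.2 hxn
      set t := ‖x‖ with htdef
      set y := fderiv ℝ u x x with hy
      have hud : DifferentiableAt ℝ u x := hu1.differentiable (by simp) x
      have hd0 : HasDerivAt (fun t : ℝ => t ^ (-p)) (-p * t ^ (-p - 1)) t :=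
        Real.hasDerivAt_rpow_const (Or.inl ht.ne')
      have htm : t ^ (-p - 1) * t = t ^ (-p) := by
        rw [Real.rpow_sub_one ht.ne']; field_simp
      have f1 : fderiv ℝ G1 x x = _ := fd_formula n p hp u _ _ x hxn hud hd0
      have f2 : fderiv ℝ G x x = _ := fd_formula n p hp u _ _ x hxn hud (hd0.mul hgd)
      set tp := t ^ (-p) with htp
      have htp0 : 0 < tp := Real.rpow_pos_of_pos ht _
      have habsu : |u x| ^ p = |u x| ^ (p - 2) * u x * u x := by
        rcases eq_or_ne (u x) 0 with h | h
        · simp [h, hp0.ne']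
        · have : 0 < |u x| := abs_pos.2 h
          rw [Real.rpow_sub this, show (2:ℝ) = ((2:ℕ):ℝ) by norm_num, Real.rpow_natCast, sq_abs]
          field_simp
      set v := |u x| ^ (p - 2) * u x with hv
      have hvabs : |v| = |u x| ^ (p - 1) := by
        rcases eq_or_ne (u x) 0 with h | h
        · simp [hv, h, (by linarith : p - 1 ≠ 0)]
        · have : 0 < |u x| := abs_pos.2 h
          rw [hv, abs_mul, abs_of_nonneg (by positivity : 0 ≤ |u x| ^ (p - 2))]
          rw [show p - 1 = (p - 2) + 1 by ring, Real.rpow_add_one this.ne']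
      set A := |u x| ^ p * tp with hA
      have hA0 : 0 ≤ A := by rw [hA]; positivity
      set B := v * (H * u x + y) * tp with hB
      have hS1x : S1 x = p * B := by
        simp only [hS1def, hG1def]
        rw [f1]
        have : |u x| ^ p * (-p * t ^ (-p - 1) * t) = - p * (|u x| ^ p * tp) := by
          rw [← htm]; ring
        rw [this, hB, ← htdef, ← htp]
        rw [habsu]
        linear_combination (-(v * u x * tp)) * hpH
      have hSx : S x = A * g1 t + p * g t * B := by
        simp only [hSdef, hGdef]
        rw [f2]
        have : |u x| ^ p * ((-p * t ^ (-p - 1) * g t + tp * (g1 t / t)) * t) =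
            - p * (|u x| ^ p * tp) * g t + |u x| ^ p * tp * g1 t := by
          rw [← htm]; field_simp
        rw [this, hB, hA, ← htdef, ← htp]
        rw [habsu]
        simp only [Pi.mul_apply]
        linear_combination (-(v * u x * tp * g t)) * hpH
      set ε := δ * (g1 t / g t) with hε
      have hε0 : 0 < ε := by rw [hε]; positivity
      have hε1 : ε ≤ 1 := by
        have : g1 t / g t ≤ 1 := by rw [div_le_one hgp]; exact hg1g
        rw [hε]; nlinarith [div_pos hg1p hgp]
      obtain ⟨r0, r1⟩ := hrem (-(H * u x)) (H * u x + y) ε hε0 hε1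
      have ea : -(H * u x) + (H * u x + y) = y := by ring
      rw [ea] at r0 r1
      have eb : |-(H * u x)| = |H| * |u x| := by rw [abs_neg, abs_mul]
      rw [eb] at r0 r1
      rw [Real.mul_rpow hHa.le (abs_nonneg _), Real.mul_rpow hHa.le (abs_nonneg _)] at r0 
      rw [Real.mul_rpow hHa.le (abs_nonneg _), Real.mul_rpow hHa.le (abs_nonneg _),
        Real.mul_rpow hHa.le (abs_nonneg _), ← hvabs] at r1
      set Rm := |y| ^ p - |H| ^ p * |u x| ^ p -
        p * (|H| ^ (p - 2) * |u x| ^ (p - 2) * -(H * u x)) * (H * u x + y) with hRm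
      have hRE : tp * Rm ≤ E x := by
        have e1 : tp * |y| ^ p ≤ ‖fderiv ℝ u x‖ ^ p := by
          have : |y| ≤ ‖fderiv ℝ u x‖ * t := (fderiv ℝ u x).le_opNorm x
          calc tp * |y| ^ p ≤ tp * (‖fderiv ℝ u x‖ * t) ^ p := by gcongr
            _ = ‖fderiv ℝ u x‖ ^ p := by
              rw [Real.mul_rpow (norm_nonneg _) ht.le, htp, Real.rpow_neg ht.le]
              have := Real.rpow_pos_of_pos ht p
              field_simp
        have e2 : E x = ‖fderiv ℝ u x‖ ^ p - |H| ^ p * A + κ * (p * B) := by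
          rw [← hS1x]
        rw [e2, hRm, hB, hA, hκ, hv]
        linarith
      have hE0 : 0 ≤ E x := le_trans (mul_nonneg htp0.le r0) hRE
      have hBabs : |B| = |v| * |H * u x + y| * tp := by
        rw [hB, abs_mul, abs_mul, abs_of_pos htp0]
      have hHp : |H| ^ p = |H| ^ (p - 1) * |H| := by
        rw [← Real.rpow_add_one hHa.ne']; congr 1; ring
      have hmain : |H| ^ (p - 1) * |B| ≤ ε * (|H| ^ (p - 1) * |H|) * A + K / ε * E x := by
        calc |H| ^ (p - 1) * |B| = (|H| ^ (p - 1) * |v| * |H * u x + y|) * tp := by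
              rw [hBabs]; ring
          _ ≤ (ε * (|H| ^ p * |u x| ^ p) + K / ε * Rm) * tp := by gcongr
          _ = ε * (|H| ^ (p - 1) * |H|) * A + K / ε * (tp * Rm) := by rw [hHp, hA]; ring
          _ ≤ _ := by gcongr
      have hB2 : |B| ≤ ε * |H| * A + K / ε * E x / |H| ^ (p - 1) := by
        rw [← sub_nonneg] at hmain ⊢
        have : ε * |H| * A + K / ε * E x / |H| ^ (p - 1) - |B| =
          (ε * (|H| ^ (p - 1) * |H|) * A + K / ε * E x - |H| ^ (p - 1) * |B|) / |H| ^ (p - 1) := by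
          field_simp
        rw [this]; positivity
      have h3 : p * g t * |B| ≤ A * g1 t / 2 + C0 * N * E x := by
        calc p * g t * |B| ≤ p * g t * (ε * |H| * A + K / ε * E x / |H| ^ (p - 1)) := by gcongr
          _ = (p * |H| * δ) * (A * g1 t) + C0 * (g t ^ 2 / g1 t) * E x := by
            rw [hε, hC0]; field_simp
          _ ≤ (1 / 2) * (A * g1 t) + C0 * N * E x := by
            gcongr
            rw [div_le_iff₀ hg1p]; exact hgN
          _ = _ := by ring
      have h4 : -(p * g t * B) ≤ p * g t * |B| := by
        rw [← mul_neg]; gcongr; exact neg_le_abs B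
      rw [hSx]
      linarith
    · rw [hW2 x hx]
      have hev := notMem_tsupport_iff_eventuallyEq.1 hx
      have hux : u x = 0 := hev.self_of_nhds
      have g0 : G =ᶠ[nhds x] fun _ => 0 := by
        filter_upwards [hev] with z hz
        simp [hGdef, hz, hp0.ne']
      have g10 : G1 =ᶠ[nhds x] fun _ => 0 := by
        filter_upwards [hev] with z hz
        simp [hG1def, hz, hp0.ne']
      have d0 : fderiv ℝ G x = 0 := by rw [g0.fderiv_eq]; simp
      have d10 : fderiv ℝ G1 x = 0 := by rw [g10.fderiv_eq]; simp
      have du : fderiv ℝ u x = 0 := by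
        rw [hev.fderiv_eq]; simp
      have z1 := g0.self_of_nhds
      have z2 := g10.self_of_nhds
      simp [hSdef, hS1def, hE, d0, d10, du, z1, z2, hp0.ne']
  have hG1eq : ∫ x, |u x| ^ p / ‖x‖ ^ p = ∫ x, G1 x := by
    congr 1; ext x; simp only [hG1def]; rw [Real.rpow_neg (norm_nonneg _)]; rfl
  calc ∫ x, W x ≤ ∫ x, (2 * S x + 2 * C0 * N * E x) := by
        apply integral_mono_of_nonneg (Filter.Eventually.of_forall hW)
          ((hSi.const_mul _).add (hEi.const_mul _)) (Filter.Eventually.of_forall hpt)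
    _ = _ := by
        rw [integral_add (hSi.const_mul _) (hEi.const_mul _), integral_const_mul,
          integral_const_mul, hS0]
        simp only [hE]
        have hsub : Integrable (fun x => ‖fderiv ℝ u x‖ ^ p - |H| ^ p * G1 x) :=
          hDi.sub (hG1i.const_mul _)
        rw [integral_add hsub (hS1i.const_mul _),
          integral_sub hDi (hG1i.const_mul _), integral_const_mul, integral_const_mul, hS10, hG1eq,
          hHabs]
        ring

lemma final_arith (p q ρ ω X N A I M C3 : ℝ) (hp : 1 < p) (hq1 : 1 ≤ q) (hqp : q < p)
    (hρ : 0 < ρ) (hω : 0 ≤ ω) (hX : 0 ≤ X) (hN : 0 ≤ N) (hXN : X * N ≤ 1) (hA : 0 ≤ A)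
    (hI : 0 ≤ I) (hM : 0 ≤ M) (hC3 : 0 ≤ C3)
    (h : A ≤ (C3 * N * I) ^ (q / p) * (ρ * M) ^ ((p - q) / p)) :
    ρ ^ (1 / p) * X ^ (1 / p) * ((1 / (ω * ρ)) * A) ^ (1 / q) ≤
      (ω⁻¹ ^ (1 / q) * C3 ^ (1 / p) * M ^ (1 / q - 1 / p) + 1) * I ^ (1 / p) := by
  have hq0 : 0 < q := by linarith
  have hp0 : 0 < p := by linarith
  have h1 : A ^ (1 / q) ≤ C3 ^ (1 / p) * N ^ (1 / p) * I ^ (1 / p) *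
      (ρ ^ (1 / q - 1 / p) * M ^ (1 / q - 1 / p)) := by
    calc A ^ (1 / q) ≤ ((C3 * N * I) ^ (q / p) * (ρ * M) ^ ((p - q) / p)) ^ (1 / q) := by
          gcongr
      _ = (C3 * N * I) ^ (1 / p) * (ρ * M) ^ (1 / q - 1 / p) := by
          rw [Real.mul_rpow (by positivity) (by positivity), ← Real.rpow_mul (by positivity),
            ← Real.rpow_mul (by positivity)]
          congr 2 <;> field_simp
      _ = _ := by
          rw [Real.mul_rpow (by positivity) hI, Real.mul_rpow hC3 hN, Real.mul_rpow hρ.le hM]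
  have e1 : (1 / (ω * ρ)) ^ (1 / q) = ω⁻¹ ^ (1 / q) * ρ ^ (-(1 / q)) := by
    rw [one_div (ω * ρ), mul_inv, Real.mul_rpow (by positivity) (by positivity),
      Real.inv_rpow hρ.le, Real.rpow_neg hρ.le]
  have e2 : ρ ^ (1 / p) * ρ ^ (-(1 / q)) * ρ ^ (1 / q - 1 / p) = 1 := by
    rw [← Real.rpow_add hρ, ← Real.rpow_add hρ]
    convert Real.rpow_zero ρ using 2; ring
  have e3 : X ^ (1 / p) * N ^ (1 / p) ≤ 1 := by
    rw [← Real.mul_rpow hX hN]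
    exact Real.rpow_le_one (by positivity) hXN (by positivity)
  rw [Real.mul_rpow (by positivity) hA, e1]
  calc ρ ^ (1 / p) * X ^ (1 / p) * (ω⁻¹ ^ (1 / q) * ρ ^ (-(1 / q)) * A ^ (1 / q))
      ≤ ρ ^ (1 / p) * X ^ (1 / p) * (ω⁻¹ ^ (1 / q) * ρ ^ (-(1 / q)) *
        (C3 ^ (1 / p) * N ^ (1 / p) * I ^ (1 / p) *
        (ρ ^ (1 / q - 1 / p) * M ^ (1 / q - 1 / p)))) := by gcongr
    _ = (ρ ^ (1 / p) * ρ ^ (-(1 / q)) * ρ ^ (1 / q - 1 / p)) * (X ^ (1 / p) * N ^ (1 / p)) *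
        (ω⁻¹ ^ (1 / q) * C3 ^ (1 / p) * M ^ (1 / q - 1 / p) * I ^ (1 / p)) := by ring
    _ ≤ 1 * (ω⁻¹ ^ (1 / q) * C3 ^ (1 / p) * M ^ (1 / q - 1 / p) * I ^ (1 / p)) := by
        rw [e2, one_mul]; gcongr
    _ ≤ _ := by
        have : 0 ≤ I ^ (1 / p) := by positivity
        linarith

lemma weight_props (β r d N : ℝ) (hβ : 0 < β) (hβ1 : β ≤ 1) (hr : 0 < r) (hrd : r < d)
    (hN : N = 1 + Real.log (d / r)) :
    ∃ g g1 : ℝ → ℝ, ∀ t, 0 < t → t ≤ d →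
      ContDiffAt ℝ 1 g t ∧ HasDerivAt g (g1 t / t) t ∧ 0 < g t ∧
        0 < g1 t ∧ g1 t ≤ g t ∧ g t ^ 2 ≤ N * g1 t ∧
        (t ≤ 2 * r → (t / r) ^ β ≤ (3 + 1 / β) ^ 2 / β * g1 t) := by
  have hd : 0 < d := hr.trans hrd
  have hN1 : 1 ≤ N := by
    have := Real.log_nonneg ((one_le_div hr).2 hrd.le)
    linarith
  have hN0 : 0 < N := by linarith
  let h : ℝ → ℝ := fun t => r ^ β * t ^ (-β) + (1 + Real.log d - Real.log t) / N
  refine ⟨fun t => (h t)⁻¹, fun t => (β * (r ^ β * t ^ (-β)) + 1 / N) / h t ^ 2, ?_⟩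
  intro t ht htd
  set a := r ^ β * t ^ (-β) with ha
  have ha0 : 0 < a := by positivity
  have hlog : Real.log t ≤ Real.log d := Real.log_le_log ht htd
  have hb : 1 / N ≤ (1 + Real.log d - Real.log t) / N := by gcongr; linarith
  have hN' : 0 < 1 / N := by positivity
  have hht : h t = a + (1 + Real.log d - Real.log t) / N := rfl
  have hh0 : 0 < h t := by rw [hht]; linarith
  have hder : HasDerivAt h (-(β * a + 1 / N) / t) t := by
    have h1 : HasDerivAt (fun t : ℝ => t ^ (-β)) (-β * t ^ (-β - 1)) t :=
      Real.hasDerivAt_rpow_const (Or.inl ht.ne')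
    have h2 := (h1.const_mul (r ^ β)).add
      (((Real.hasDerivAt_log ht.ne').const_sub (1 + Real.log d)).div_const N)
    convert! h2 using 1
    rw [Real.rpow_sub_one ht.ne', ha]
    field_simp
    ring
  have hcd : ContDiffAt ℝ 1 h t := by
    apply ContDiffAt.add
    · exact contDiffAt_const.mul (contDiffAt_id.rpow_const_of_ne ht.ne')
    · exact (contDiffAt_const.sub (Real.contDiffAt_log.2 ht.ne')).div_const N
  refine ⟨hcd.inv hh0.ne', ?_, by positivity, by positivity, ?_, ?_, ?_⟩
  · convert! hder.inv hh0.ne' using 1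
    show (β * a + 1 / N) / h t ^ 2 / t = _
    field_simp
  · show (β * a + 1 / N) / h t ^ 2 ≤ (h t)⁻¹
    rw [div_le_iff₀ (by positivity)]
    have : (h t)⁻¹ * h t ^ 2 = h t := by field_simp
    rw [this, hht]
    nlinarith
  · show (h t)⁻¹ ^ 2 ≤ N * ((β * a + 1 / N) / h t ^ 2)
    rw [← mul_div_assoc, inv_pow, inv_eq_one_div]
    gcongr
    have : N * (β * a + 1 / N) = N * β * a + 1 := by field_simp
    rw [this]
    have : 0 < N * β * a := by positivity
    linarith
  · intro ht2
    show (t / r) ^ β ≤ (3 + 1 / β) ^ 2 / β * ((β * a + 1 / N) / h t ^ 2)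
    have ea : a = (r / t) ^ β := by
      rw [ha, Real.div_rpow hr.le ht.le, Real.rpow_neg ht.le]; rfl
    have ea' : (t / r) ^ β = 1 / a := by
      rw [ea, ← inv_div, Real.inv_rpow (by positivity), one_div]
    have h1 : 1 ≤ 2 * a := by
      have : (1/2 : ℝ) ^ (1:ℝ) ≤ (r / t) ^ β := by
        calc (1/2 : ℝ) ^ (1:ℝ) ≤ (1/2 : ℝ) ^ β :=
              Real.rpow_le_rpow_of_exponent_ge (by norm_num) (by norm_num) hβ1
          _ ≤ (r / t) ^ β := by
              apply Real.rpow_le_rpow (by norm_num) _ hβ.le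
              rw [div_le_div_iff₀ (by norm_num) ht]; linarith
      rw [Real.rpow_one] at this
      rw [ea]; linarith
    have h2 : Real.log (r / t) ≤ a / β := by
      rw [ea]; exact Real.log_le_rpow_div (by positivity) hβ
    have h3 : (1 + Real.log d - Real.log t) / N = 1 + Real.log (r / t) / N := by
      rw [Real.log_div hr.ne' ht.ne']
      have : 1 + Real.log d - Real.log t = N + (Real.log r - Real.log t) := by
        rw [hN, Real.log_div hd.ne' hr.ne']; ring
      rw [this]; field_simp
    have h4 : Real.log (r / t) / N ≤ a / β := by
      rw [div_le_iff₀ hN0]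
      have : 0 < a / β := by positivity
      nlinarith
    have h5 : h t ≤ (3 + 1 / β) * a := by
      rw [hht, h3]
      have : a / β = 1 / β * a := by ring
      linarith
    rw [ea', ← mul_div_assoc, div_le_div_iff₀ ha0 (by positivity), one_mul]
    calc h t ^ 2 ≤ ((3 + 1 / β) * a) ^ 2 := by gcongr
      _ = (3 + 1 / β) ^ 2 / β * (β * a) * a := by field_simp
      _ ≤ _ := by gcongr; linarith

lemma sing_int (n : ℕ) (hn : 2 ≤ n) (γ : ℝ) (hγ : γ < n) (r : ℝ) (hr : 0 < r) :
    IntegrableOn (fun x : EuclideanSpace ℝ (Fin n) => (‖x‖ / r) ^ (-γ)) (ball 0 (2 * r)) ∧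
    ∫ x in ball (0 : EuclideanSpace ℝ (Fin n)) (2 * r), (‖x‖ / r) ^ (-γ) =
      r ^ n * ∫ x in ball (0 : EuclideanSpace ℝ (Fin n)) 2, ‖x‖ ^ (-γ) := by
  constructor
  · refine integrableOn_ball_of_norm_le_rpow (C := r ^ γ) (α := γ) ?_ ?_ ?_ ?_
    · simp; omega
    · simpa using hγ
    · refine Filter.Eventually.of_forall fun x => ?_
      rw [Real.norm_of_nonneg (by positivity), Real.div_rpow (norm_nonneg _) hr.le,
        Real.rpow_neg hr.le, div_inv_eq_mul, mul_comm]
    · exact Measurable.aestronglyMeasurable (by fun_prop)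
  · have h := Measure.setIntegral_comp_smul_of_pos volume
      (fun x : EuclideanSpace ℝ (Fin n) => (‖x‖ / r) ^ (-γ)) (ball 0 2) hr
    rw [_root_.smul_ball hr.ne'] at h
    simp only [smul_zero, Real.norm_of_nonneg hr.le, norm_smul, finrank_euclideanSpace,
      Fintype.card_fin, smul_eq_mul] at h
    have e : ∀ x : EuclideanSpace ℝ (Fin n), r * ‖x‖ / r = ‖x‖ := fun x => by field_simp
    simp only [e] at h
    rw [h, mul_comm r 2]
    field_simp

set_option maxHeartbeats 4000000 in
/-- local logarithmic improvement for balls whose closure contains the origin,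
all `p ≠ n`. -/
theorem hardy_local_improvement_ball_origin (n : ℕ) (hn : 2 ≤ n) (p q : ℝ)
    (hp : 1 < p) (hpn : p ≠ (n : ℝ)) (hq1 : 1 ≤ q) (hqp : q < p) :
    ∃ Θ C : ℝ, 0 ≤ Θ ∧ 0 < C ∧
      ∀ Ω : Set (EuclideanSpace ℝ (Fin n)), IsOpen Ω → IsConnected Ω →
        Bornology.IsBounded Ω → (0 : EuclideanSpace ℝ (Fin n)) ∈ Ω →
        ∀ u : EuclideanSpace ℝ (Fin n) → ℝ, ContDiff ℝ (⊤ : ℕ∞) u →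
          HasCompactSupport u → tsupport u ⊆ Ω \ {0} →
          ∀ (c : EuclideanSpace ℝ (Fin n)) (r : ℝ), 0 < r → r < Metric.diam Ω →
            (0 : EuclideanSpace ℝ (Fin n)) ∈ Metric.closedBall c r →
          ∀ D : ℝ, Real.exp Θ * Metric.diam Ω ≤ D →
            r ^ ((n : ℝ) / p) * ((1 - Real.log (r / D))⁻¹) ^ (1 / p) *
              ((1 / ((volume (Metric.ball (0 : EuclideanSpace ℝ (Fin n)) 1)).toReal * r ^ (n : ℕ))) *
                ∫ x in Metric.ball c r, |u x| ^ q / ‖x‖ ^ q) ^ (1 / q) ≤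
              C * ((∫ x in Ω, ‖fderiv ℝ u x‖ ^ p)
                - |(p - n) / p| ^ p * ∫ x in Ω, |u x| ^ p / ‖x‖ ^ p) ^ (1 / p) := by
  obtain ⟨C1, hC1, hmain⟩ := main_ineq n p hp hpn
  have hq0 : 0 < q := by linarith
  have hp0 : 0 < p := by linarith
  have hpq : 0 < p - q := by linarith
  set β : ℝ := min 1 ((p - q) / (2 * q)) with hβdef
  have hβ : 0 < β := by rw [hβdef]; positivity
  have hβ1 : β ≤ 1 := min_le_left _ _
  set γ : ℝ := β * q / (p - q) with hγdef
  have hγ : γ < n := by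
    have h1 : β ≤ (p - q) / (2 * q) := min_le_right _ _
    have h2 : γ ≤ 1 / 2 := by
      calc γ ≤ (p - q) / (2 * q) * q / (p - q) := by rw [hγdef]; gcongr
        _ = 1 / 2 := by field_simp
    have h3 : (2 : ℝ) ≤ n := by exact_mod_cast hn
    linarith
  set ω := (volume (Metric.ball (0 : EuclideanSpace ℝ (Fin n)) 1)).toReal with hω
  set M := ∫ x in ball (0 : EuclideanSpace ℝ (Fin n)) 2, ‖x‖ ^ (-γ) with hM
  have hω0 : 0 ≤ ω := ENNReal.toReal_nonneg
  have hM0 : 0 ≤ M := integral_nonneg fun x => by positivity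
  set C2 : ℝ := (3 + 1 / β) ^ 2 / β with hC2
  have hC2p : 0 < C2 := by rw [hC2]; positivity
  refine ⟨0, ω⁻¹ ^ (1 / q) * (C2 * C1) ^ (1 / p) * M ^ (1 / q - 1 / p) + 1, le_rfl,
    by positivity, ?_⟩
  intro Ω hΩ _ hbd h0Ω u hu hc hsupp c r hr hrd h0c D hD
  set d := Metric.diam Ω with hd
  rw [Real.exp_zero, one_mul] at hD
  have hd0 : 0 < d := hr.trans hrd
  have hD0 : 0 < D := hd0.trans_le hD
  have h0u : (0 : EuclideanSpace ℝ (Fin n)) ∉ tsupport u := fun h => (hsupp h).2 rfl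
  have hout : ∀ x, x ∉ Ω → x ∉ tsupport u := fun x hx h => hx (hsupp h).1
  rw [setIntegral_eq_integral_of_forall_compl_eq_zero (s := Ω) (f := fun x => ‖fderiv ℝ u x‖ ^ p)
      (fun x hx => by
        have hev := notMem_tsupport_iff_eventuallyEq.1 (hout x hx)
        have : fderiv ℝ u x = 0 := by rw [hev.fderiv_eq]; simp
        simp [this, hp0.ne']),
    setIntegral_eq_integral_of_forall_compl_eq_zero (s := Ω) (f := fun x => |u x| ^ p / ‖x‖ ^ p)
      (fun x hx => by
        have : u x = 0 := image_eq_zero_of_notMem_tsupport (hout x hx)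
        simp [this, hp0.ne'])]
  set I := (∫ x, ‖fderiv ℝ u x‖ ^ p) - |(p - n) / p| ^ p * ∫ x, |u x| ^ p / ‖x‖ ^ p with hI
  set N := 1 + Real.log (d / r) with hN
  have hN1 : 1 ≤ N := by
    have := Real.log_nonneg ((one_le_div hr).2 hrd.le)
    linarith
  have hN0 : 0 < N := by linarith
  obtain ⟨g, g1, hg⟩ := weight_props β r d N hβ hβ1 hr hrd hN
  have hts : ∀ x ∈ tsupport u, 0 < ‖x‖ ∧ ‖x‖ ≤ d := by
    intro x hx
    refine ⟨norm_pos_iff.2 (fun h => h0u (h ▸ hx)), ?_⟩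
    have := Metric.dist_le_diam_of_mem hbd (hsupp hx).1 h0Ω
    rwa [dist_zero_right] at this
  have hball : ball c r ⊆ ball (0 : EuclideanSpace ℝ (Fin n)) (2 * r) := by
    apply ball_subset_ball'
    rw [mem_closedBall, dist_comm] at h0c
    linarith
  set W0 : EuclideanSpace ℝ (Fin n) → ℝ :=
    fun x => |u x| ^ p * (‖x‖ ^ (-p) * (‖x‖ / r) ^ β) with hW0
  have hW := hmain u hu hc h0u g g1 N hN0.le
    (fun x hx => by
      obtain ⟨a1, a2, a3, a4, a5, a6, -⟩ := hg ‖x‖ (hts x hx).1 (hts x hx).2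
      exact ⟨a1, a2, a3, a4, a5, a6⟩)
    ((ball c r).indicator (fun x => C2⁻¹ * W0 x))
    (fun x => Set.indicator_nonneg (fun x _ => by positivity) x)
    (fun x hx => by
      obtain ⟨-, -, -, a4, -, -, a7⟩ := hg ‖x‖ (hts x hx).1 (hts x hx).2
      by_cases hxb : x ∈ ball c r
      · rw [Set.indicator_of_mem hxb]
        have h2r : ‖x‖ ≤ 2 * r := by
          have := hball hxb
          rw [mem_ball_zero_iff] at this
          exact this.le
        have h7 := a7 h2r
        calc C2⁻¹ * W0 x = |u x| ^ p * ‖x‖ ^ (-p) * (C2⁻¹ * (‖x‖ / r) ^ β) := by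
              simp only [hW0]; ring
          _ ≤ |u x| ^ p * ‖x‖ ^ (-p) * (C2⁻¹ * (C2 * g1 ‖x‖)) := by gcongr
          _ = _ := by field_simp
      · rw [Set.indicator_of_notMem hxb]
        positivity)
    (fun x hx => by
      have : u x = 0 := image_eq_zero_of_notMem_tsupport hx
      apply Set.indicator_apply_eq_zero.2
      intro _
      simp [hW0, this, hp0.ne'])
  rw [integral_indicator measurableSet_ball, integral_const_mul, ← hI] at hW
  have hW0n : 0 ≤ ∫ x in ball c r, W0 x := integral_nonneg fun x => by
    simp only [hW0]; positivity
  have hWI : ∫ x in ball c r, W0 x ≤ C2 * C1 * N * I := by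
    rw [inv_mul_le_iff₀ hC2p] at hW
    linarith
  have hI0 : 0 ≤ I := by
    by_contra hneg
    push Not at hneg
    have : C2 * C1 * N * I < 0 := mul_neg_of_pos_of_neg (by positivity) hneg
    linarith
  -- Hölder
  obtain ⟨hsi, hsv⟩ := sing_int n hn γ hγ r hr
  set s : ℝ := β * q / p with hs
  set f : EuclideanSpace ℝ (Fin n) → ℝ :=
    fun x => |u x| ^ q * (‖x‖ ^ (-q) * (‖x‖ / r) ^ s) with hf
  set e : EuclideanSpace ℝ (Fin n) → ℝ := fun x => (‖x‖ / r) ^ (-s) with he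
  have hf0 : ∀ x, 0 ≤ f x := fun x => by simp only [hf]; positivity
  have he0 : ∀ x, 0 ≤ e x := fun x => by simp only [he]; positivity
  have hfc := cont_cs 0 u (fun t : ℝ => |t| ^ q) (by simp [hq0.ne'])
    (contDiff_zero.2 (continuous_abs.rpow_const (fun _ => Or.inr hq0.le)))
    (hu.of_le (by simp)) hc (fun x => ‖x‖ ^ (-q) * (‖x‖ / r) ^ s)
    (fun x hx => by
      have hx0 : 0 < ‖x‖ := (hts x hx).1
      have hxne : x ≠ 0 := norm_pos_iff.1 hx0
      exact ((contDiffAt_norm ℝ hxne).rpow_const_of_ne hx0.ne').mul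
        (((contDiffAt_norm ℝ hxne).div_const r).rpow_const_of_ne (by positivity)))
  have hconj : (p / q).HolderConjugate (p / (p - q)) := by
    rw [Real.holderConjugate_iff]
    refine ⟨by rw [lt_div_iff₀ hq0]; linarith, ?_⟩
    field_simp
    ring
  have hfm : MemLp f (ENNReal.ofReal (p / q)) (volume.restrict (ball c r)) :=
    (hfc.1.continuous.memLp_of_hasCompactSupport hfc.2).restrict _
  have hepow : ∀ x, e x ^ (p / (p - q)) = (‖x‖ / r) ^ (-γ) := fun x => by
    simp only [he]
    rw [← Real.rpow_mul (by positivity)]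
    congr 1
    rw [hs, hγdef]; field_simp
  have hem : MemLp e (ENNReal.ofReal (p / (p - q))) (volume.restrict (ball c r)) := by
    rw [← integrable_norm_rpow_iff]
    · rw [ENNReal.toReal_ofReal (by positivity)]
      have : (fun x => ‖e x‖ ^ (p / (p - q))) = fun x => (‖x‖ / r) ^ (-γ) := by
        ext x
        rw [Real.norm_of_nonneg (he0 x), hepow]
      rw [this]
      exact hsi.mono_set hball
    · exact Measurable.aestronglyMeasurable (by simp only [he]; fun_prop)
    · simp; positivity
    · simp
  have hH := integral_mul_le_Lp_mul_Lq_of_nonneg (μ := volume.restrict (ball c r)) hconj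
    (Filter.Eventually.of_forall hf0) (Filter.Eventually.of_forall he0) hfm hem
  have hfe : ∀ x, f x * e x = |u x| ^ q / ‖x‖ ^ q := by
    intro x
    by_cases hx : x ∈ tsupport u
    · have hx0 : 0 < ‖x‖ := (hts x hx).1
      simp only [hf, he]
      have : (‖x‖ / r) ^ s * (‖x‖ / r) ^ (-s) = 1 := by
        rw [← Real.rpow_add (by positivity)]; simp
      rw [mul_assoc, mul_assoc, this, mul_one, Real.rpow_neg hx0.le]
      rfl
    · have : u x = 0 := image_eq_zero_of_notMem_tsupport hx
      simp [hf, this, hq0.ne']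
  have hfp : ∀ x, f x ^ (p / q) = W0 x := by
    intro x
    simp only [hf, hW0]
    rw [Real.mul_rpow (by positivity) (by positivity), Real.mul_rpow (by positivity) (by positivity),
      ← Real.rpow_mul (by positivity), ← Real.rpow_mul (by positivity),
      ← Real.rpow_mul (by positivity)]
    rw [hs]
    congr 2
    · field_simp
    · congr 1; field_simp
    · congr 1; field_simp
  simp only [hfe, hfp, hepow] at hH
  have hEM : ∫ x in ball c r, (‖x‖ / r) ^ (-γ) ≤ r ^ n * M := by
    rw [hM, ← hsv]
    apply setIntegral_mono_set hsi
    · exact Filter.Eventually.of_forall fun x => by simp only [Pi.zero_apply]; positivity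
    · exact hball.eventuallyLE
  have hE0 : 0 ≤ ∫ x in ball c r, (‖x‖ / r) ^ (-γ) := integral_nonneg fun x => by positivity
  have hAle : ∫ x in ball c r, |u x| ^ q / ‖x‖ ^ q ≤
      (C2 * C1 * N * I) ^ (q / p) * (r ^ n * M) ^ ((p - q) / p) := by
    refine hH.trans ?_
    rw [one_div_div, one_div_div]
    gcongr
  have hlog : N ≤ 1 - Real.log (r / D) := by
    rw [hN, Real.log_div hd0.ne' hr.ne', Real.log_div hr.ne' hD0.ne']
    have := Real.log_le_log hd0 hD
    linarith
  have hXpos : 0 < 1 - Real.log (r / D) := by linarith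
  have hrn : r ^ ((n : ℝ) / p) = (r ^ n) ^ (1 / p) := by
    rw [← Real.rpow_natCast, ← Real.rpow_mul hr.le]; congr 1; ring
  rw [hrn]
  exact final_arith p q (r ^ n) ω (1 - Real.log (r / D))⁻¹ N _ I M (C2 * C1) hp hq1 hqp
    (by positivity) hω0 (by positivity) hN0.le
    (by rw [inv_mul_le_iff₀ hXpos]; linarith)
    (integral_nonneg fun x => by positivity) hI0 hM0 (by positivity) hAle
end

section
/- Let p > n ≥ 2. There exist constants Θ = Θ(n,p) ≥ 0 and C = C(n,p) > 0 such that for every bounded domain Ω ⊂ ℝⁿ containing the origin, every u ∈ C_c^∞(Ω \ {0}), and every D ≥ e^Θ · diam(Ω), one has sup_{x ∈ Ω} { |u(x)| · |x|^{n/p − 1} · X^{1/p}(|x|/D) } ≤ C · ( ∫_Ω |∇u|^p dx − ((p−n)/p)^p ∫_Ω |u|^p/|x|^p dx )^{1/p}. -/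
open MeasureTheory Metric Set

lemma hm_scalar {p b N s : ℝ} (hp : 2 < p) (hb : 0 ≤ b) (hN : |s| ≤ N) :
    (p/2) * b^(p-2) * (s-b)^2 ≤ N^p + (p-1) * b^p - p * b^(p-1) * s := by
  have hN0 : 0 ≤ N := (abs_nonneg s).trans hN
  rcases hb.eq_or_lt with rfl | hb'
  · rw [Real.zero_rpow (by linarith), Real.zero_rpow (by linarith), Real.zero_rpow (by linarith)]
    have := Real.rpow_nonneg hN0 p
    simpa using this
  have e1 : b^(p-1) = b^(p-2) * b := by
    rw [← Real.rpow_add_one hb'.ne']; ring_nf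
  have e2 : b^p = b^(p-2) * b^2 := by
    rw [← Real.rpow_natCast, ← Real.rpow_add hb']; norm_num
  have hB : 0 < b^(p-2) := Real.rpow_pos_of_pos hb' _
  have hs : s^2 ≤ N^2 := by rw [← sq_abs]; gcongr
  have ber := one_add_mul_self_le_rpow_one_add (s := (N/b)^2 - 1) (by nlinarith [sq_nonneg (N/b)]) (p := p/2) (by linarith)
  have e3 : (1 + ((N/b)^2 - 1))^(p/2) = N^p / b^p := by
    rw [add_sub_cancel, ← Real.rpow_natCast, ← Real.rpow_mul (by positivity), Real.div_rpow hN0 hb]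
    congr 2 <;> push_cast <;> ring
  rw [e3, le_div_iff₀ (by positivity), e2] at ber
  have e4 : (1 + p/2 * ((N/b)^2 - 1)) * (b^(p-2) * b^2) = b^(p-2) * (b^2 + p/2 * (N^2 - b^2)) := by
    field_simp
  rw [e4] at ber
  rw [e1, e2]
  nlinarith [mul_le_mul_of_nonneg_left hs (by positivity : 0 ≤ p/2 * b^(p-2))]

lemma hm_grad {p b N s : ℝ} (hp : 2 < p) (hb : 0 ≤ b) (hN : |s| ≤ N) :
    N^p ≤ 2 * (N^p + (p-1) * b^p - p * b^(p-1) * s) + (2*p)^p * b^p := by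
  have hN0 : 0 ≤ N := (abs_nonneg s).trans hN
  have hbp : 0 ≤ b^p := Real.rpow_nonneg hb _
  have hpp : 0 ≤ (p-1) * b^p := mul_nonneg (by linarith) hbp
  have hR := hm_scalar hp hb hN
  have hR0 : 0 ≤ (p/2) * b^(p-2) * (s-b)^2 := by
    have := Real.rpow_nonneg hb (p-2)
    have : 0 < p := by linarith
    positivity
  rcases le_total N (2*p*b) with h | h
  · have : N^p ≤ (2*p*b)^p := Real.rpow_le_rpow hN0 h (by linarith)
    rw [Real.mul_rpow (by linarith) hb] at this
    linarith
  · have h1 : p * b^(p-1) * s ≤ N^p / 2 := by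
      rcases hN0.eq_or_lt with h0 | h0
      · have : s = 0 := by rw [← h0] at hN; exact abs_nonpos_iff.mp hN
        rw [this]; have := Real.rpow_nonneg hN0 p; simp; linarith
      have hb2 : b ≤ N / (2*p) := by rw [le_div_iff₀ (by linarith)]; linarith
      have h2 : b^(p-1) ≤ N^(p-1) / (2*p) := by
        calc b^(p-1) ≤ (N/(2*p))^(p-1) := Real.rpow_le_rpow hb hb2 (by linarith)
          _ = N^(p-1) / (2*p)^(p-1) := Real.div_rpow hN0 (by linarith) _
          _ ≤ _ := by
            gcongr
            conv_lhs => rw [← Real.rpow_one (2*p)]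
            exact Real.rpow_le_rpow_of_exponent_le (by linarith) (by linarith)
      have h3 : N^p = N^(p-1) * N := by rw [← Real.rpow_add_one h0.ne']; ring_nf
      have h4 : 0 ≤ b^(p-1) := Real.rpow_nonneg hb _
      calc p * b^(p-1) * s ≤ p * b^(p-1) * N := by
            gcongr
            exact (le_abs_self s).trans hN
        _ ≤ p * (N^(p-1)/(2*p)) * N := by gcongr
        _ = _ := by rw [h3]; field_simp
    have : 0 ≤ (2*p)^p * b^p := mul_nonneg (Real.rpow_nonneg (by linarith) _) hbp
    linarith

/-- pointwise inequality -/
lemma hm_point {p H a N s k w e e0 A : ℝ} (hp : 2 < p) (hH : 0 < H) (ha : 0 ≤ a) (hN : |s| ≤ N)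
    (hA : A = (p/2) * H^(p-2)) (he : 0 ≤ e) (hee : e ≤ e0)
    (hw : p^2/(2*A) * k^2 + e ≤ w) :
    e * (1/(4*(e0 + (2*p)^p*H^p + 1))) * (N^p + a^p) ≤
     N^p - H^p * a^p + (w + p * H * (H^(p-1) - k)) * a^p - p * (H^(p-1) - k) * a^(p-1) * s := by
  have hN0 : 0 ≤ N := (abs_nonneg s).trans hN
  have hb : 0 ≤ H * a := by positivity
  have hR := hm_scalar hp hb hN
  have hG := hm_grad hp hb hN
  rw [Real.mul_rpow hH.le ha, Real.mul_rpow hH.le ha, Real.mul_rpow hH.le ha] at hR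
  rw [Real.mul_rpow hH.le ha, Real.mul_rpow hH.le ha] at hG
  set R := N^p + (p-1) * (H^p * a^p) - p * (H^(p-1) * a^(p-1)) * s with hRdef
  have hA0 : 0 < A := by rw [hA]; have := Real.rpow_pos_of_pos hH (p-2); positivity
  have hap : 0 ≤ a^p := Real.rpow_nonneg ha _
  have hNp : 0 ≤ N^p := Real.rpow_nonneg hN0 _
  have ha2 : 0 ≤ a^(p-2) := Real.rpow_nonneg ha _
  have e1 : a^(p-1) = a^(p-2) * a := by
    rcases ha.eq_or_lt with rfl | h
    · rw [Real.zero_rpow (by linarith), mul_zero]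
    rw [← Real.rpow_add_one h.ne']; ring_nf
  have e2 : a^p = a^(p-2) * a^2 := by
    rcases ha.eq_or_lt with rfl | h
    · rw [Real.zero_rpow (by linarith)]; ring
    rw [← Real.rpow_natCast, ← Real.rpow_add h]; norm_num
  have eH : H * H^(p-1) = H^p := by
    rw [mul_comm, ← Real.rpow_add_one hH.ne']; ring_nf
  have hR' : A * a^(p-2) * (s - H*a)^2 ≤ R := by
    rw [hA]; linarith [hR]
  have hR0 : 0 ≤ R := le_trans (by positivity) hR'
  -- E = R + w a^p + p k a^(p-1) (s - H a)
  have hE : N^p - H^p * a^p + (w + p * H * (H^(p-1) - k)) * a^p - p * (H^(p-1) - k) * a^(p-1) * s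
      = R + w * a^p + p * k * a^(p-2) * a * (s - H * a) := by
    rw [hRdef, ← eH, e2, e1]; ring
  have hyoung : 0 ≤ (A/2) * (s - H*a)^2 + p * k * a * (s - H*a) + p^2/(2*A) * k^2 * a^2 := by
    have : (A/2) * (s - H*a)^2 + p * k * a * (s - H*a) + p^2/(2*A) * k^2 * a^2
      = (A * (s-H*a) + p*k*a)^2 / (2*A) := by field_simp; ring
    rw [this]; positivity
  have hE2 : R/2 + e * a^p ≤ R + w * a^p + p * k * a^(p-2) * a * (s - H * a) := by
    have h1 := mul_nonneg ha2 hyoung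
    have h2 := mul_le_mul_of_nonneg_right hw hap
    rw [e2] at h2 ⊢
    nlinarith [h1, h2, hR']
  rw [hE]
  refine le_trans ?_ hE2
  set T := (2*p)^p*H^p with hT
  have hT0 : 0 ≤ T := mul_nonneg (Real.rpow_nonneg (by linarith) _) (Real.rpow_nonneg hH.le _)
  have hG' : N^p ≤ 2 * R + T * a^p := by rw [hT]; linarith
  have he0 : 0 ≤ e0 := he.trans hee
  have h3 : e * N^p ≤ 2 * (e0+T+1) * R + e * (e0 + T+1) * a^p := by
    have h4 := mul_le_mul_of_nonneg_left hG' he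
    have h5 : e * R ≤ (e0+T+1) * R := by gcongr; linarith
    have h6 : e * (T * a^p) ≤ e * ((e0+T+1) * a^p) := by gcongr; linarith
    linarith
  have h7 : e * a^p ≤ e * (e0+T+1) * a^p := by
    have : e * 1 ≤ e * (e0+T+1) := by gcongr; linarith
    exact mul_le_mul_of_nonneg_right (by linarith) hap
  have hpos : 0 < 4 * (e0+T+1) := by linarith
  rw [mul_one_div, div_mul_eq_mul_div, div_le_iff₀ hpos]
  have : 0 ≤ e * (e0+T+1) * a^p := by positivity
  nlinarith

lemma hm_div {n : ℕ} {Φ : EuclideanSpace ℝ (Fin n) → ℝ} (h1 : ContDiff ℝ 1 Φ)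
    (h2 : HasCompactSupport Φ) :
    Integrable (fun y => fderiv ℝ Φ y y + n * Φ y) ∧ ∫ y, (fderiv ℝ Φ y y + n * Φ y) = 0 := by
  have hc' : Continuous (fderiv ℝ Φ) := h1.continuous_fderiv one_ne_zero
  have hs' : HasCompactSupport (fderiv ℝ Φ) := h2.fderiv ℝ
  have hsv : ∀ g : EuclideanSpace ℝ (Fin n) → EuclideanSpace ℝ (Fin n),
      HasCompactSupport (fun y => fderiv ℝ Φ y (g y)) := fun g =>
    hs'.mono (fun y hy => by
      rw [Function.mem_support] at hy ⊢
      intro h; apply hy; rw [h]; simp)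
  have hI0 : Integrable Φ := h1.continuous.integrable_of_hasCompactSupport h2
  have key : ∀ i : Fin n, Integrable (fun y : EuclideanSpace ℝ (Fin n) => y i * fderiv ℝ Φ y (EuclideanSpace.single i 1)) ∧
      ∫ y : EuclideanSpace ℝ (Fin n), y i * fderiv ℝ Φ y (EuclideanSpace.single i 1) = - ∫ y, Φ y := by
    intro i
    have hfd : ∀ x : EuclideanSpace ℝ (Fin n), HasFDerivAt (fun y : EuclideanSpace ℝ (Fin n) => y i)
        (EuclideanSpace.proj i : EuclideanSpace ℝ (Fin n) →L[ℝ] ℝ) x := fun x =>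
      (EuclideanSpace.proj i : EuclideanSpace ℝ (Fin n) →L[ℝ] ℝ).hasFDerivAt
    have hval : ∀ x : EuclideanSpace ℝ (Fin n), fderiv ℝ (fun y : EuclideanSpace ℝ (Fin n) => y i) x (EuclideanSpace.single i 1) = 1 := by
      intro x; rw [(hfd x).fderiv]; simp
    have hcy : Continuous (fun y : EuclideanSpace ℝ (Fin n) => y i) := by fun_prop
    have hint : Integrable (fun y : EuclideanSpace ℝ (Fin n) => y i * fderiv ℝ Φ y (EuclideanSpace.single i 1)) := by
      apply Continuous.integrable_of_hasCompactSupport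
      · exact hcy.mul (hc'.clm_apply continuous_const)
      · exact (hsv _).mul_left
    refine ⟨hint, ?_⟩
    rw [integral_mul_fderiv_eq_neg_fderiv_mul_of_integrable]
    · simp_rw [hval, one_mul]
    · simp_rw [hval, one_mul]; exact hI0
    · exact hint
    · exact (hcy.mul h1.continuous).integrable_of_hasCompactSupport h2.mul_left
    · exact fun x _ => (hfd x).differentiableAt
    · exact fun x _ => (h1.differentiable one_ne_zero) x
  have hsum : ∀ y : EuclideanSpace ℝ (Fin n), fderiv ℝ Φ y y = ∑ i, y i * fderiv ℝ Φ y (EuclideanSpace.single i 1) := by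
    intro y
    have h := congrArg (fderiv ℝ Φ y) ((EuclideanSpace.basisFun (Fin n) ℝ).sum_repr y)
    rw [map_sum] at h
    rw [← h]
    simp
  simp_rw [hsum]
  have hIs := integrable_finsetSum Finset.univ (fun i _ => (key i).1)
  refine ⟨hIs.add (hI0.const_mul _), ?_⟩
  rw [integral_add hIs (hI0.const_mul _), integral_finsetSum _ (fun i _ => (key i).1), integral_const_mul]
  simp [(key _).2]

lemma hm_holder {n : ℕ} {p : ℝ} (hp : 1 < p) {f : EuclideanSpace ℝ (Fin n) → ℝ} (hf : Continuous f)
    (hf0 : ∀ y, 0 ≤ f y) :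
    ∫ y in closedBall 0 1, f y ≤
      (volume.real (closedBall (0 : EuclideanSpace ℝ (Fin n)) 1)) ^ (1 - 1/p) *
        (∫ y in closedBall 0 1, f y ^ p) ^ (1/p) := by
  have hq := Real.HolderConjugate.conjExponent hp
  have hfin : IsFiniteMeasure (volume.restrict (closedBall (0 : EuclideanSpace ℝ (Fin n)) 1)) :=
    ⟨by simpa using measure_closedBall_lt_top⟩
  have hm : MemLp f (ENNReal.ofReal p) (volume.restrict (closedBall (0 : EuclideanSpace ℝ (Fin n)) 1)) := by
    obtain ⟨C, hC⟩ := (isCompact_closedBall (0 : EuclideanSpace ℝ (Fin n)) 1).exists_bound_of_continuousOn hf.continuousOn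
    refine MemLp.of_bound hf.aestronglyMeasurable C ?_
    exact (ae_restrict_iff' measurableSet_closedBall).2 (Filter.Eventually.of_forall hC)
  have := integral_mul_le_Lp_mul_Lq_of_nonneg hq (μ := volume.restrict (closedBall (0 : EuclideanSpace ℝ (Fin n)) 1))
    (f := f) (g := fun _ => 1) (Filter.Eventually.of_forall hf0) (Filter.Eventually.of_forall (fun _ => zero_le_one))
    hm (memLp_const _)
  simp only [mul_one, Real.one_rpow] at this
  rw [mul_comm]
  convert this using 2
  have h1 : 1/p.conjExponent = 1 - 1/p := by
    have := hq.inv_add_inv_eq_one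
    rw [one_div, one_div]; linarith
  rw [h1]; simp

lemma hm_scale {n : ℕ} (f : EuclideanSpace ℝ (Fin n) → ℝ) (x : EuclideanSpace ℝ (Fin n)) {s : ℝ} (hs : 0 < s) :
    ∫ y in closedBall 0 1, f (x + s • y) = (s^n)⁻¹ * ∫ y in closedBall x s, f y := by
  rw [Measure.setIntegral_comp_smul_of_pos volume (fun z => f (x + z)) _ hs]
  rw [smul_unitClosedBall_of_nonneg hs.le]
  simp only [finrank_euclideanSpace, Fintype.card_fin, smul_eq_mul]
  congr 1
  have := (measurePreserving_add_left (volume : Measure (EuclideanSpace ℝ (Fin n))) x).setIntegral_preimage_emb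
    (measurableEmbedding_addLeft x) f (closedBall x s)
  rw [← this]
  simp

lemma hm_morrey {n : ℕ} (hn : 2 ≤ n) {p : ℝ} (hp : (n:ℝ) < p) {u : EuclideanSpace ℝ (Fin n) → ℝ}
    (hu : ContDiff ℝ 1 u) (x : EuclideanSpace ℝ (Fin n)) {ρ : ℝ} (hρ : 0 < ρ) :
    (volume.real (closedBall (0 : EuclideanSpace ℝ (Fin n)) 1)) ^ (1/p) * |u x| ≤
      ρ ^ (-(n/p)) * (∫ y in closedBall x ρ, |u y| ^ p) ^ (1/p) +
      ρ ^ (1 - n/p) / (1 - n/p) * (∫ y in closedBall x ρ, ‖fderiv ℝ u y‖ ^ p) ^ (1/p) := by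
  have hn' : (2:ℝ) ≤ n := by exact_mod_cast hn
  have hp0 : 0 < p := by linarith
  have hH : 0 < 1 - n/p := by rw [sub_pos, div_lt_one hp0]; exact hp
  set V := volume.real (closedBall (0 : EuclideanSpace ℝ (Fin n)) 1) with hV
  have hVpos : 0 < V := by
    rw [hV, Measure.real, ENNReal.toReal_pos_iff]
    exact ⟨measure_closedBall_pos _ _ one_pos, measure_closedBall_lt_top⟩
  set J := ∫ y in closedBall x ρ, ‖fderiv ℝ u y‖ ^ p with hJ
  have hc' : Continuous (fderiv ℝ u) := hu.continuous_fderiv one_ne_zero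
  have hcJ : Continuous (fun y => ‖fderiv ℝ u y‖ ^ p) := hc'.norm.rpow_const (fun _ => Or.inr hp0.le)
  have hcl : ∀ s : ℝ, Continuous (fun y => x + s • y : EuclideanSpace ℝ (Fin n) → _) := fun s => by fun_prop
  -- general scaled Hölder
  have hold : ∀ g : EuclideanSpace ℝ (Fin n) → ℝ, Continuous g → (∀ y, 0 ≤ g y) → ∀ s, 0 < s →
      ∫ y in closedBall 0 1, g (x + s • y) ≤ V^(1-1/p) * (s^(-(n/p)) * (∫ y in closedBall x s, g y ^ p)^(1/p)) := by
    intro g hg hg0 s hs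
    refine (hm_holder (by linarith : 1 < p) (hg.comp (hcl s)) (fun y => hg0 _)).trans ?_
    have := hm_scale (fun z => g z ^ p) x hs
    simp only [Function.comp]
    rw [this, Real.mul_rpow (by positivity)
      (integral_nonneg (fun y => Real.rpow_nonneg (hg0 y) _))]
    apply le_of_eq
    congr 2
    rw [← Real.rpow_natCast, ← Real.rpow_neg hs.le, ← Real.rpow_mul hs.le]
    congr 1; ring
  set m : ℝ → ℝ := fun s => ∫ y in closedBall 0 1, u (x + s • y) with hm
  have hder : ∀ s, HasDerivAt m (∫ y in closedBall 0 1, fderiv ℝ u (x + s • y) y) s := by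
    intro s
    obtain ⟨C, hC⟩ := (isCompact_closedBall x (|s|+1)).exists_bound_of_continuousOn hc'.continuousOn
    have hfin : IsFiniteMeasure (volume.restrict (closedBall (0 : EuclideanSpace ℝ (Fin n)) 1)) :=
      ⟨by simpa using measure_closedBall_lt_top⟩
    refine (hasDerivAt_integral_of_dominated_loc_of_deriv_le (μ := volume.restrict (closedBall (0 : EuclideanSpace ℝ (Fin n)) 1))
      (F := fun s y => u (x + s • y)) (F' := fun s y => fderiv ℝ u (x + s • y) y) (bound := fun _ => C)
      (ball_mem_nhds s one_pos) ?_ ?_ ?_ ?_ (integrable_const _) ?_).2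
    · exact Filter.Eventually.of_forall fun t => (hu.continuous.comp (hcl t)).aestronglyMeasurable
    · exact (hu.continuous.comp (hcl s)).continuousOn.integrableOn_compact (isCompact_closedBall _ _)
    · exact ((hc'.comp (hcl s)).clm_apply continuous_id).aestronglyMeasurable
    · refine (ae_restrict_iff' measurableSet_closedBall).2 (Filter.Eventually.of_forall ?_)
      intro y hy t ht
      rw [mem_closedBall_zero_iff] at hy
      have ht' : |t| ≤ |s| + 1 := by
        rw [mem_ball, Real.dist_eq] at ht
        have := abs_sub_abs_le_abs_sub t s
        linarith
      have h1 := hC (x + t • y) (by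
        rw [mem_closedBall, dist_eq_norm, add_sub_cancel_left, norm_smul, Real.norm_eq_abs]
        nlinarith [norm_nonneg y, abs_nonneg t])
      calc _ ≤ ‖fderiv ℝ u (x + t • y)‖ * ‖y‖ := ContinuousLinearMap.le_opNorm _ _
        _ ≤ C * 1 := by gcongr; exact (norm_nonneg _).trans h1
        _ = C := mul_one _
    · refine Filter.Eventually.of_forall ?_
      intro y t _
      have h1 : HasDerivAt (fun t : ℝ => x + t • y) y t := by
        simpa using ((hasDerivAt_id t).smul_const y).const_add x
      exact ((hu.differentiable one_ne_zero) _).hasFDerivAt.comp_hasDerivAt t h1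
  have hbd : ∀ s ∈ Ioo 0 ρ, |∫ y in closedBall 0 1, fderiv ℝ u (x + s • y) y| ≤
      V^(1-1/p) * (s^(-(n/p)) * J^(1/p)) := by
    intro s hs
    refine le_trans ?_ ((hold (fun y => ‖fderiv ℝ u y‖) hc'.norm (fun _ => norm_nonneg _) s hs.1).trans ?_)
    · rw [← Real.norm_eq_abs]
      refine (norm_integral_le_integral_norm _).trans ?_
      refine setIntegral_mono_on ?_ ?_ measurableSet_closedBall ?_
      · exact (((hc'.comp (hcl s)).clm_apply continuous_id).norm).continuousOn.integrableOn_compact (isCompact_closedBall _ _)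
      · exact ((hc'.norm.comp (hcl s))).continuousOn.integrableOn_compact (isCompact_closedBall _ _)
      · intro y hy
        rw [mem_closedBall_zero_iff] at hy
        calc _ ≤ ‖fderiv ℝ u (x + s • y)‖ * ‖y‖ := ContinuousLinearMap.le_opNorm _ _
          _ ≤ ‖fderiv ℝ u (x + s • y)‖ * 1 := by gcongr
          _ = _ := mul_one _
    · have : ∫ y in closedBall x s, ‖fderiv ℝ u y‖ ^ p ≤ J := by
        refine setIntegral_mono_set (hcJ.continuousOn.integrableOn_compact (isCompact_closedBall _ _)) ?_ ?_
        · exact Filter.Eventually.of_forall fun y => Real.rpow_nonneg (norm_nonneg _) _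
        · exact (closedBall_subset_closedBall hs.2.le).eventuallyLE
      have h0 : 0 ≤ ∫ y in closedBall x s, ‖fderiv ℝ u y‖ ^ p :=
        integral_nonneg fun y => Real.rpow_nonneg (norm_nonneg _) _
      have := Real.rpow_nonneg hs.1.le (-(n/p))
      gcongr
  have hBd : ∀ s ∈ Ioo 0 ρ, HasDerivAt (fun s => V^(1-1/p) * (s^(1-n/p)/(1-n/p) * J^(1/p)))
      (V^(1-1/p) * (s^(-(n/p)) * J^(1/p))) s := by
    intro s hs
    have := (Real.hasDerivAt_rpow_const (x := s) (p := 1 - n/p) (Or.inl hs.1.ne'))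
    have h2 := (((this.div_const (1-n/p)).mul_const (J^(1/p))).const_mul (V^(1-1/p)))
    rw [mul_div_cancel_left₀ _ hH.ne', show 1 - n/p - 1 = -(n/p) by ring] at h2
    exact h2
  have hBc : Continuous (fun s : ℝ => V^(1-1/p) * (s^(1-n/p)/(1-n/p) * J^(1/p))) := by
    have : Continuous (fun s : ℝ => s^(1-n/p)) := Real.continuous_rpow_const hH.le
    fun_prop
  have hmc : Continuous m := continuous_iff_continuousAt.2 fun s => (hder s).continuousAt
  have hfin1 : |m ρ - m 0| ≤ V^(1-1/p) * (ρ^(1-n/p)/(1-n/p) * J^(1/p)) := by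
    have mono1 : MonotoneOn (fun s => V^(1-1/p) * (s^(1-n/p)/(1-n/p) * J^(1/p)) - m s) (Icc 0 ρ) := by
      apply monotoneOn_of_deriv_nonneg (convex_Icc _ _) (hBc.sub hmc).continuousOn
      · rw [interior_Icc]; intro s hs
        exact ((hBd s hs).sub (hder s)).differentiableAt.differentiableWithinAt
      · rw [interior_Icc]; intro s hs
        rw [((hBd s hs).sub (hder s)).deriv]
        linarith [(abs_le.1 (hbd s hs)).2]
    have mono2 : MonotoneOn (fun s => V^(1-1/p) * (s^(1-n/p)/(1-n/p) * J^(1/p)) + m s) (Icc 0 ρ) := by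
      apply monotoneOn_of_deriv_nonneg (convex_Icc _ _) (hBc.add hmc).continuousOn
      · rw [interior_Icc]; intro s hs
        exact ((hBd s hs).add (hder s)).differentiableAt.differentiableWithinAt
      · rw [interior_Icc]; intro s hs
        rw [((hBd s hs).add (hder s)).deriv]
        linarith [(abs_le.1 (hbd s hs)).1]
    have q1 := mono1 (left_mem_Icc.2 hρ.le) (right_mem_Icc.2 hρ.le) hρ.le
    have q2 := mono2 (left_mem_Icc.2 hρ.le) (right_mem_Icc.2 hρ.le) hρ.le
    simp only [Real.zero_rpow hH.ne', zero_div, zero_mul, mul_zero] at q1 q2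
    rw [abs_le]; constructor <;> linarith
  have hm0 : m 0 = V * u x := by simp [hm, hV]
  have hmρ : |m ρ| ≤ V^(1-1/p) * (ρ^(-(n/p)) * (∫ y in closedBall x ρ, |u y| ^ p)^(1/p)) := by
    refine le_trans ?_ (hold (fun y => |u y|) hu.continuous.abs (fun _ => abs_nonneg _) ρ hρ)
    exact abs_integral_le_integral_abs
  have hVV : V = V^(1-1/p) * V^(1/p) := by
    rw [← Real.rpow_add hVpos]; simp
  have hVp : 0 < V^(1-1/p) := Real.rpow_pos_of_pos hVpos _
  have : V * |u x| ≤ V^(1-1/p) * (ρ ^ (-(n/p)) * (∫ y in closedBall x ρ, |u y| ^ p) ^ (1/p) +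
      ρ ^ (1 - n/p) / (1 - n/p) * J ^ (1/p)) := by
    have h1 : V * |u x| = |m 0| := by rw [hm0, abs_mul, abs_of_pos hVpos]
    have h2 : |m 0| ≤ |m ρ| + |m ρ - m 0| := by
      have := abs_sub_abs_le_abs_sub (m 0) (m ρ)
      rw [abs_sub_comm] at this; linarith
    rw [h1]; linarith
  have h9 : V * |u x| = V^(1-1/p) * (V^(1/p) * |u x|) := by rw [← mul_assoc, ← hVV]
  rw [h9] at this
  exact le_of_mul_le_mul_left this hVp

lemma hm_phi {n : ℕ} {p : ℝ} (hp : 2 < p) {u : EuclideanSpace ℝ (Fin n) → ℝ}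
    (hu : ContDiff ℝ 1 u) (hc : HasCompactSupport u) {g : ℝ → ℝ}
    (h0 : ∀ y ∈ tsupport u, y ≠ 0) (hg : ∀ y ∈ tsupport u, ContDiffAt ℝ 1 g ‖y‖) :
    ContDiff ℝ 1 (fun y => |u y|^p * g ‖y‖) ∧ HasCompactSupport (fun y => |u y|^p * g ‖y‖) ∧
    (∀ y ∉ tsupport u, fderiv ℝ (fun y => |u y|^p * g ‖y‖) y = 0) ∧
    ∀ y ∈ tsupport u, ∀ g', HasDerivAt g g' ‖y‖ →
      fderiv ℝ (fun y => |u y|^p * g ‖y‖) y y =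
        p * |u y|^(p-2) * u y * fderiv ℝ u y y * g ‖y‖ + |u y|^p * (g' * ‖y‖) := by
  have hz : ∀ y ∉ tsupport u, (fun y => |u y|^p * g ‖y‖) =ᶠ[nhds y] fun _ => 0 := by
    intro y hy
    filter_upwards [(isClosed_tsupport u).isOpen_compl.mem_nhds hy] with z hz
    rw [image_eq_zero_of_notMem_tsupport hz, abs_zero, Real.zero_rpow (by linarith), zero_mul]
  have hcd : ContDiff ℝ 1 (fun y => |u y|^p * g ‖y‖) := by
    rw [contDiff_iff_contDiffAt]
    intro y
    by_cases hy : y ∈ tsupport u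
    · have h1 : ContDiff ℝ 1 (fun y => |u y|^p) := hu.norm_rpow (by linarith)
      exact h1.contDiffAt.mul ((hg y hy).comp y (contDiffAt_norm ℝ (h0 y hy)))
    · exact contDiffAt_const.congr_of_eventuallyEq (hz y hy)
  refine ⟨hcd, ?_, ?_, ?_⟩
  · refine hc.mono ?_
    intro y hy
    rw [Function.mem_support] at hy ⊢
    intro h; apply hy; rw [h, abs_zero, Real.zero_rpow (by linarith), zero_mul]
  · intro y hy
    rw [(hz y hy).fderiv_eq]; simp
  · intro y hy g' hg'
    have hl : HasDerivAt (fun t : ℝ => t • y) y 1 := by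
      simpa using (hasDerivAt_id (1:ℝ)).smul_const y
    have hF : HasDerivAt (fun t : ℝ => |u (t • y)|^p * g ‖t • y‖)
        (fderiv ℝ (fun y => |u y|^p * g ‖y‖) y y) 1 := by
      have := ((hcd.differentiable one_ne_zero) ((1:ℝ) • y)).hasFDerivAt.comp_hasDerivAt (1:ℝ) hl
      rw [one_smul] at this
      exact this
    have hU : HasDerivAt (fun t : ℝ => u (t • y)) (fderiv ℝ u y y) 1 := by
      have := ((hu.differentiable one_ne_zero) ((1:ℝ) • y)).hasFDerivAt.comp_hasDerivAt (1:ℝ) hl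
      rw [one_smul] at this
      exact this
    have hU2 : HasDerivAt (fun t : ℝ => |u (t • y)|^p) (p * |u y|^(p-2) * u y * fderiv ℝ u y y) 1 := by
      have := (hasDerivAt_abs_rpow (u ((1:ℝ) • y)) (by linarith : 1 < p)).comp (1:ℝ) hU
      rw [one_smul] at this
      exact this
    have hN : HasDerivAt (fun t : ℝ => g (t * ‖y‖)) (g' * ‖y‖) 1 := by
      have h3 : HasDerivAt (fun t : ℝ => t * ‖y‖) ‖y‖ 1 := by
        simpa using (hasDerivAt_id (1:ℝ)).mul_const ‖y‖
      have h4 : HasDerivAt g g' (1 * ‖y‖) := by rwa [one_mul]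
      exact h4.comp (1:ℝ) h3
    have hN2 : HasDerivAt (fun t : ℝ => g ‖t • y‖) (g' * ‖y‖) 1 := by
      refine hN.congr_of_eventuallyEq ?_
      filter_upwards [lt_mem_nhds (zero_lt_one (α := ℝ))] with t ht
      rw [norm_smul, Real.norm_eq_abs, abs_of_pos ht]
    have := hF.unique (hU2.mul hN2)
    rw [this]; simp

lemma hm_pt2 {n : ℕ} {p H c1 A r U d N q w e : ℝ} (hp : 2 < p) (hH : 0 < H) (hpn : p * H = p - n)
    (hr : 0 < r) (hN : |d| ≤ N * r) 
    (hA : A = (p/2) * H^(p-2)) (he : 0 ≤ e) (hee : e ≤ c1)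
    (hw : p^2/(2*A) * (H^(p-1) - q)^2 + e ≤ w) :
    e * (1/(4*(c1 + (2*p)^p*H^p + 1))) * (N^p + |U|^p / r^p) ≤
      N^p - H^p * (|U|^p / r^p) - ((p * |U|^(p-2) * U * d * (r^(-p) * q) +
        |U|^p * ((-p * r^(-p-1) * q + r^(-p) * (-w / r)) * r)) + n * (|U|^p * (r^(-p) * q))) := by
  have ha : 0 ≤ |U| / r := by positivity
  obtain ⟨σ, hσ, hσU⟩ : ∃ σ : ℝ, |σ| = 1 ∧ U = σ * |U| := by
    rcases le_total 0 U with h | h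
    · exact ⟨1, by simp, by rw [abs_of_nonneg h, one_mul]⟩
    · exact ⟨-1, by simp, by rw [abs_of_nonpos h]; ring⟩
  have hs : |σ * d / r| ≤ N := by
    rw [abs_div, abs_mul, hσ, one_mul, abs_of_pos hr, div_le_iff₀ hr]; exact hN
  have := hm_point (k := H^(p-1) - q) hp hH ha hs hA he hee hw
  rw [Real.div_rpow (abs_nonneg _) hr.le, Real.div_rpow (abs_nonneg _) hr.le] at this
  refine this.trans (le_of_eq ?_)
  have e1 : r^(-p) = (r^p)⁻¹ := Real.rpow_neg hr.le _
  have e2 : r^(-p-1) = (r^p)⁻¹ / r := by rw [Real.rpow_sub_one hr.ne', e1]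
  have e3 : r^(p-1) = r^p / r := Real.rpow_sub_one hr.ne' _
  have e4 : |U|^(p-2) * U = σ * |U|^(p-1) := by
    rcases eq_or_ne U 0 with h | h
    · rw [h, abs_zero, Real.zero_rpow (by linarith), mul_zero, Real.zero_rpow (by linarith), mul_zero]
    · have : |U|^(p-1) = |U|^(p-2) * |U| := by
        rw [← Real.rpow_add_one (abs_ne_zero.2 h)]; ring_nf
      rw [this]; nth_rewrite 2 [hσU]; ring
  have hrp : 0 < r^p := Real.rpow_pos_of_pos hr _
  have e5 : p * |U|^(p-2) * U * d * (r^(-p) * q) = p * (|U|^(p-2) * U) * d * (r^(-p) * q) := by ring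
  have hn : (n:ℝ) = p - p * H := by linarith
  rw [e5, e4, e1, e2, e3, hn]
  field_simp
  ring

lemma hm_energy (n : ℕ) (hn : 2 ≤ n) (p : ℝ) (hp : (n : ℝ) < p) :
    ∃ c : ℝ, 0 < c ∧ ∀ u : EuclideanSpace ℝ (Fin n) → ℝ, ContDiff ℝ 1 u → HasCompactSupport u →
      ∀ D r0 M : ℝ, 0 < r0 → r0 ≤ D → M = 1 + Real.log D - Real.log r0 →
      (∀ y ∈ tsupport u, 0 < ‖y‖ ∧ ‖y‖ ≤ D) →
      ∀ S : Set (EuclideanSpace ℝ (Fin n)), MeasurableSet S →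
        (∀ y ∈ S, r0 / 2 ≤ ‖y‖ ∧ ‖y‖ ≤ 3 * r0 / 2) →
        Integrable (fun y => ‖fderiv ℝ u y‖^p) ∧ Integrable (fun y => |u y|^p / ‖y‖^p) ∧ 
        c / M * ∫ y in S, (‖fderiv ℝ u y‖^p + |u y|^p / ‖y‖^p) ≤
          (∫ y, ‖fderiv ℝ u y‖^p) - ((p-n)/p)^p * ∫ y, |u y|^p / ‖y‖^p := by
  have hn' : (2:ℝ) ≤ n := by exact_mod_cast hn
  have hp2 : 2 < p := by linarith
  have hp0 : 0 < p := by linarith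
  set H := (p-n)/p with hHdef
  have hH : 0 < H := div_pos (by linarith) hp0
  have hpn : p * H = p - n := by rw [hHdef]; field_simp
  set A := (p/2) * H^(p-2) with hA
  have hA0 : 0 < A := by have := Real.rpow_pos_of_pos hH (p-2); positivity
  set c1 := 2*A/p^2 with hc1
  have hc10 : 0 < c1 := by positivity
  set β := 1/(4*(c1 + (2*p)^p*H^p + 1)) with hβ
  have hβ0 : 0 < β := by
    have h1 : 0 ≤ (2*p)^p*H^p := mul_nonneg (Real.rpow_nonneg (by linarith) _) (Real.rpow_nonneg hH.le _)
    positivity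
  refine ⟨c1/24 * β, by positivity, ?_⟩
  intro u hu hc D r0 M hr0 hr0D hM hsupp S hS hSr
  have hD : 0 < D := hr0.trans_le hr0D
  have hM1 : 1 ≤ M := by
    have := Real.log_le_log hr0 hr0D
    linarith
  have h0 : ∀ y ∈ tsupport u, y ≠ 0 := fun y hy => norm_pos_iff.1 (hsupp y hy).1
  -- the functions
  set ψ : ℝ → ℝ := fun r => 1 + Real.log D - Real.log r + M * r0 / r with hψ
  set q : ℝ → ℝ := fun r => H^(p-1) - c1 / ψ r with hq
  set g : ℝ → ℝ := fun r => r^(-p) * q r with hg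
  have hψpos : ∀ r, 0 < r → r ≤ D → 1 ≤ ψ r := by
    intro r h1 h2
    have := Real.log_le_log h1 h2
    have : 0 ≤ M * r0 / r := by positivity
    simp only [hψ]; linarith
  have hψd : ∀ r, 0 < r → HasDerivAt ψ (-(1 + M * r0 / r) / r) r := by
    intro r hr
    have h1 := (((hasDerivAt_const r (1 + Real.log D)).sub (Real.hasDerivAt_log hr.ne')).add
      ((hasDerivAt_const r (M*r0)).div (hasDerivAt_id r) hr.ne'))
    refine h1.congr_deriv ?_
    simp only [id]; field_simp; ring
  have hψc : ∀ r, 0 < r → ContDiffAt ℝ 1 ψ r := by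
    intro r hr
    exact (contDiffAt_const.sub (Real.contDiffAt_log.2 hr.ne')).add (contDiffAt_const.div contDiffAt_id hr.ne')
  have hpc : ∀ r : ℝ, 0 < r → ContDiffAt ℝ 1 (fun r : ℝ => r^(-p)) r := fun r hr =>
    Real.contDiffAt_rpow_const (Or.inl hr.ne')
  have hgc : ∀ r, 0 < r → r ≤ D → ContDiffAt ℝ 1 g r := by
    intro r hr hrD
    have := hψpos r hr hrD
    exact (hpc r hr).mul (contDiffAt_const.sub (contDiffAt_const.div (hψc r hr) (by linarith)))
  set W : ℝ → ℝ := fun r => c1 * (1 + M * r0 / r) / ψ r ^ 2 with hW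
  have hgd : ∀ r, 0 < r → r ≤ D → HasDerivAt g (-p * r^(-p-1) * q r + r^(-p) * (-W r / r)) r := by
    intro r hr hrD
    have hψ1 := hψpos r hr hrD
    have hψ0 : ψ r ≠ 0 := by linarith
    have h1 : HasDerivAt q (-W r / r) r := by
      have := (hasDerivAt_const r (H^(p-1))).sub ((hasDerivAt_const r c1).div (hψd r hr) hψ0)
      refine this.congr_deriv ?_
      simp only [hW]; field_simp; ring
    exact (Real.hasDerivAt_rpow_const (Or.inl hr.ne')).mul h1
  obtain ⟨hΦ1, hΦ2, hΦ3, hΦ4⟩ := hm_phi hp2 hu hc h0 (fun y hy => hgc _ (hsupp y hy).1 (hsupp y hy).2)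
  obtain ⟨hdi, hd0⟩ := hm_div hΦ1 hΦ2
  obtain ⟨hΨ1, hΨ2, -, -⟩ := hm_phi (g := fun r => r^(-p)) hp2 hu hc h0 (fun y hy => hpc _ (hsupp y hy).1)
  have hI1 : Integrable (fun y => ‖fderiv ℝ u y‖^p) := by
    apply Continuous.integrable_of_hasCompactSupport
    · exact (hu.continuous_fderiv one_ne_zero).norm.rpow_const (fun _ => Or.inr hp0.le)
    · refine (hc.fderiv ℝ).mono ?_
      intro y hy
      rw [Function.mem_support] at hy ⊢
      intro h; apply hy; rw [h, norm_zero, Real.zero_rpow hp0.ne']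
  have hI2 : Integrable (fun y => |u y|^p / ‖y‖^p) := by
    have := hΨ1.continuous.integrable_of_hasCompactSupport hΨ2 (μ := volume)
    refine this.congr (Filter.Eventually.of_forall fun y => ?_)
    simp only
    rw [Real.rpow_neg (norm_nonneg _), div_eq_mul_inv]
  refine ⟨hI1, hI2, ?_⟩
  set E : EuclideanSpace ℝ (Fin n) → ℝ := fun y => ‖fderiv ℝ u y‖^p - H^p * (|u y|^p / ‖y‖^p) -
    (fderiv ℝ (fun y => |u y|^p * g ‖y‖) y y + n * (|u y|^p * g ‖y‖)) with hE
  have hEi : Integrable E := (hI1.sub (hI2.const_mul _)).sub hdi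
  have hEint : ∫ y, E y = (∫ y, ‖fderiv ℝ u y‖^p) - H^p * ∫ y, |u y|^p / ‖y‖^p := by
    have hsub : Integrable (fun y => ‖fderiv ℝ u y‖^p - H^p * (|u y|^p / ‖y‖^p)) :=
      hI1.sub (hI2.const_mul _)
    simp only [hE]
    rw [integral_sub hsub hdi, hd0, sub_zero, integral_sub hI1 (hI2.const_mul _), integral_const_mul]
  -- pointwise bound
  have hpt : ∀ y e, 0 ≤ e → e ≤ c1 → (y ∈ tsupport u → e ≤ c1 * (M * r0 / ‖y‖) / ψ ‖y‖ ^ 2) →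
      e * β * (‖fderiv ℝ u y‖^p + |u y|^p / ‖y‖^p) ≤ E y := by
    intro y e he hee hey
    by_cases hy : y ∈ tsupport u
    · obtain ⟨hr, hrD⟩ := hsupp y hy
      have hψ1 := hψpos _ hr hrD
      simp only [hE]
      rw [hΦ4 y hy _ (hgd _ hr hrD)]
      refine hm_pt2 hp2 hH hpn hr ?_ hA he hee ?_
      · exact (fderiv ℝ u y).le_opNorm y
      · have h1 := hey hy
        have h2 : p^2/(2*A) * (H^(p-1) - q ‖y‖)^2 = c1 / ψ ‖y‖ ^ 2 := by
          simp only [hq]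
          rw [sub_sub_cancel, hc1]; field_simp
        rw [h2]
        have h3 : W ‖y‖ = c1 / ψ ‖y‖ ^ 2 + c1 * (M * r0 / ‖y‖) / ψ ‖y‖ ^ 2 := by
          simp only [hW]; ring
        rw [h3]; linarith
    · have h1 : u y = 0 := image_eq_zero_of_notMem_tsupport hy
      have h2 : fderiv ℝ u y = 0 := by
        have := tsupport_fderiv_subset ℝ (f := u)
        exact image_eq_zero_of_notMem_tsupport (fun h => hy (this h))
      simp only [hE]
      rw [hΦ3 y hy, h1, h2]
      simp [Real.zero_rpow hp0.ne']
  have hE0 : ∀ y, 0 ≤ E y := by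
    intro y
    have := hpt y 0 le_rfl hc10.le (fun hy => by
      have := (hsupp y hy).1; positivity)
    simpa using this
  have hES : ∀ y ∈ S, c1/24*β/M * (‖fderiv ℝ u y‖^p + |u y|^p / ‖y‖^p) ≤ E y := by
    intro y hyS
    have := hpt y (c1/(24*M)) (by positivity) (by
        rw [div_le_iff₀ (by positivity)]; nlinarith) (fun hy => ?_)
    · convert this using 2; field_simp
    · obtain ⟨hr, hrD⟩ := hsupp y hy
      obtain ⟨ha, hb⟩ := hSr y hyS
      have hψ1 := hψpos _ hr hrD
      have hψ4 : ψ ‖y‖ ≤ 4 * M := by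
        have h1 : Real.log (r0/2) ≤ Real.log ‖y‖ := Real.log_le_log (by positivity) ha
        rw [Real.log_div hr0.ne' two_ne_zero] at h1
        have h2 : Real.log 2 < 1 := by linarith [Real.log_two_lt_d9]
        have h3 : M * r0 / ‖y‖ ≤ 2 * M := by
          rw [div_le_iff₀ hr]; nlinarith
        simp only [hψ]; linarith
      have h5 : 2 * M / 3 ≤ M * r0 / ‖y‖ := by
        rw [le_div_iff₀ hr]; nlinarith
      have h6 : ψ ‖y‖ ^ 2 ≤ (4*M)^2 := by gcongr
      calc c1/(24*M) = c1 * (2 * M / 3) / (4*M)^2 := by field_simp; norm_num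
        _ ≤ c1 * (M * r0 / ‖y‖) / ψ ‖y‖ ^ 2 := by gcongr
  rw [← hEint, ← integral_const_mul]
  calc _ ≤ ∫ y in S, E y := setIntegral_mono_on ((hI1.add hI2).integrableOn.const_mul _) hEi.integrableOn hS hES
    _ ≤ ∫ y, E y := setIntegral_le_integral hEi (Filter.Eventually.of_forall hE0)

set_option maxHeartbeats 600000

/-- pointwise Hardy–Morrey estimate with one point at the origin. -/
theorem hardy_morrey_pointwise_origin (n : ℕ) (hn : 2 ≤ n) (p : ℝ) (hp : (n : ℝ) < p) :
    ∃ Θ C : ℝ, 0 ≤ Θ ∧ 0 < C ∧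
      ∀ Ω : Set (EuclideanSpace ℝ (Fin n)), IsOpen Ω → IsConnected Ω →
        Bornology.IsBounded Ω → (0 : EuclideanSpace ℝ (Fin n)) ∈ Ω →
        ∀ u : EuclideanSpace ℝ (Fin n) → ℝ, ContDiff ℝ (⊤ : ℕ∞) u →
          HasCompactSupport u → tsupport u ⊆ Ω \ {0} →
          ∀ D : ℝ, Real.exp Θ * Metric.diam Ω ≤ D →
          ∀ x ∈ Ω,
            |u x| * ‖x‖ ^ ((n : ℝ) / p - 1) * ((1 - Real.log (‖x‖ / D))⁻¹) ^ (1 / p) ≤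
              C * ((∫ y in Ω, ‖fderiv ℝ u y‖ ^ p)
                - ((p - n) / p) ^ p * ∫ y in Ω, |u y| ^ p / ‖y‖ ^ p) ^ (1 / p) := by
  obtain ⟨c, hc, hen⟩ := hm_energy n hn p hp
  have hn' : (2:ℝ) ≤ n := by exact_mod_cast hn
  have hp0 : 0 < p := by linarith
  have hH : 0 < 1 - n/p := by rw [sub_pos, div_lt_one hp0]; exact hp
  set V := volume.real (closedBall (0 : EuclideanSpace ℝ (Fin n)) 1) with hV
  have hVpos : 0 < V := by
    rw [hV, Measure.real, ENNReal.toReal_pos_iff]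
    exact ⟨measure_closedBall_pos _ _ one_pos, measure_closedBall_lt_top⟩
  have hVp : 0 < V^(1/p) := Real.rpow_pos_of_pos hVpos _
  have hcp : 0 < c^(1/p) := Real.rpow_pos_of_pos hc _
  refine ⟨0, (3 + 1/(1-n/p)) / V^(1/p) / c^(1/p), le_rfl, by positivity, ?_⟩
  intro Ω _ _ hb h0 u hu' hcs hsup D hD x hx
  have hu : ContDiff ℝ 1 u := hu'.of_le (by exact_mod_cast le_top)
  rw [Real.exp_zero, one_mul] at hD
  have hnormD : ∀ y ∈ Ω, ‖y‖ ≤ D := fun y hy => by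
    have := Metric.dist_le_diam_of_mem hb hy h0
    rw [dist_zero_right] at this; linarith
  have hz : ∀ y, y ∉ Ω → y ∉ tsupport u := fun y hy h => hy (hsup h).1
  have hi1 : ∫ y in Ω, ‖fderiv ℝ u y‖ ^ p = ∫ y, ‖fderiv ℝ u y‖ ^ p := by
    apply setIntegral_eq_integral_of_forall_compl_eq_zero
    intro y hy
    have h2 : fderiv ℝ u y = 0 := image_eq_zero_of_notMem_tsupport
      (fun h => hz y hy (tsupport_fderiv_subset ℝ (f := u) h))
    rw [h2, norm_zero, Real.zero_rpow hp0.ne']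
  have hi2 : ∫ y in Ω, |u y| ^ p / ‖y‖ ^ p = ∫ y, |u y| ^ p / ‖y‖ ^ p := by
    apply setIntegral_eq_integral_of_forall_compl_eq_zero
    intro y hy
    rw [image_eq_zero_of_notMem_tsupport (hz y hy), abs_zero, Real.zero_rpow hp0.ne', zero_div]
  rw [hi1, hi2]
  set I := (∫ y, ‖fderiv ℝ u y‖ ^ p) - ((p - n) / p) ^ p * ∫ y, |u y| ^ p / ‖y‖ ^ p with hI
  have hsupp : ∀ y ∈ tsupport u, 0 < ‖y‖ ∧ ‖y‖ ≤ D := fun y hy =>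
    ⟨norm_pos_iff.2 (fun h => (hsup hy).2 h), hnormD y (hsup hy).1⟩
  by_cases hux : u x = 0
  · rw [hux, abs_zero, zero_mul, zero_mul]
    refine mul_nonneg (by positivity) ?_
    rcases le_or_gt 0 I with h | h
    · exact Real.rpow_nonneg h _
    · rw [Real.rpow_def_of_neg h]
      refine mul_nonneg (Real.exp_pos _).le (Real.cos_nonneg_of_mem_Icc ⟨?_, ?_⟩)
      · have : 0 ≤ 1/p * Real.pi := by positivity
        linarith [Real.pi_pos]
      · have : 1/p ≤ 1/2 := one_div_le_one_div_of_le (by norm_num) (by linarith)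
        nlinarith [Real.pi_pos]
  have hxs : x ∈ tsupport u := subset_tsupport u hux
  obtain ⟨hr0, hrD⟩ := hsupp x hxs
  have hDpos : 0 < D := hr0.trans_le hrD
  set r0 := ‖x‖ with hr0def
  set M := 1 - Real.log (r0 / D) with hM
  have hM' : M = 1 + Real.log D - Real.log r0 := by
    rw [hM, Real.log_div hr0.ne' hDpos.ne']; ring
  have hM1 : 1 ≤ M := by
    have := Real.log_le_log hr0 hrD
    linarith
  have hM0 : 0 < M := by linarith
  have hS : ∀ y ∈ closedBall x (r0/2), r0 / 2 ≤ ‖y‖ ∧ ‖y‖ ≤ 3 * r0 / 2 := by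
    intro y hy
    rw [mem_closedBall, dist_eq_norm] at hy
    have h1 := norm_sub_norm_le x y
    have h2 := norm_sub_norm_le y x
    rw [norm_sub_rev] at h1
    constructor <;> linarith
  obtain ⟨hI1, hI2, hE⟩ := hen u hu hcs D r0 M hr0 hrD hM' hsupp _ measurableSet_closedBall hS
  rw [← hI, integral_add hI1.integrableOn hI2.integrableOn] at hE
  set J := ∫ y in closedBall x (r0/2), ‖fderiv ℝ u y‖ ^ p with hJ
  set K := ∫ y in closedBall x (r0/2), |u y| ^ p / ‖y‖ ^ p with hK
  have hJ0 : 0 ≤ J := integral_nonneg fun y => by positivity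
  have hK0 : 0 ≤ K := integral_nonneg fun y => by positivity
  have hI0 : 0 ≤ I := by
    have h1 : 0 ≤ c / M := div_nonneg hc.le hM0.le
    exact le_trans (mul_nonneg h1 (add_nonneg hJ0 hK0)) hE
  have hQ : J + K ≤ M * I / c := by
    rw [le_div_iff₀ hc]
    rw [div_mul_eq_mul_div, div_le_iff₀ hM0] at hE
    linarith
  set Q := M * I / c with hQdef
  have hQ0 : 0 ≤ Q := by positivity
  have hρ : 0 < r0/2 := by positivity
  have hmor := hm_morrey hn hp hu x hρ
  have hL : ∫ y in closedBall x (r0/2), |u y| ^ p ≤ (3*(r0/2))^p * Q := by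
    calc _ ≤ ∫ y in closedBall x (r0/2), (3*(r0/2))^p * (|u y| ^ p / ‖y‖ ^ p) := by
          refine setIntegral_mono_on ?_ (hI2.integrableOn.const_mul _) measurableSet_closedBall ?_
          · exact (hu.continuous.abs.rpow_const (fun _ => Or.inr hp0.le)).continuousOn.integrableOn_compact
              (isCompact_closedBall _ _)
          · intro y hy
            obtain ⟨h1, h2⟩ := hS y hy
            have hy0 : 0 < ‖y‖ := by linarith
            have h3 : ‖y‖^p ≤ (3*(r0/2))^p := Real.rpow_le_rpow hy0.le (by linarith) hp0.le
            have h4 : 0 < ‖y‖^p := Real.rpow_pos_of_pos hy0 _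
            rw [← mul_div_assoc, le_div_iff₀ h4, mul_comm]
            gcongr
      _ = (3*(r0/2))^p * K := integral_const_mul _ _
      _ ≤ _ := by gcongr; linarith
  have hL' : (∫ y in closedBall x (r0/2), |u y| ^ p)^(1/p) ≤ 3*(r0/2) * Q^(1/p) := by
    calc _ ≤ ((3*(r0/2))^p * Q)^(1/p) := by
          refine Real.rpow_le_rpow (integral_nonneg fun y => by positivity) hL (by positivity)
      _ = _ := by
        rw [Real.mul_rpow (by positivity) hQ0, ← Real.rpow_mul (by positivity), mul_one_div_cancel hp0.ne', Real.rpow_one]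
  have hJ' : J^(1/p) ≤ Q^(1/p) := Real.rpow_le_rpow hJ0 (by linarith) (by positivity)
  have hfin : V^(1/p) * |u x| ≤ r0^(1-n/p) * ((3 + 1/(1-n/p)) * Q^(1/p)) := by
    have e1 : (r0/2)^(1-n/p) = (r0/2)^(-(n/p)) * (r0/2) := by
      rw [← Real.rpow_add_one hρ.ne']; ring_nf
    calc _ ≤ _ := hmor
      _ ≤ (r0/2)^(-(n/p)) * (3*(r0/2) * Q^(1/p)) + (r0/2)^(1-n/p) / (1-n/p) * Q^(1/p) := by gcongr
      _ = (r0/2)^(1-n/p) * ((3 + 1/(1-n/p)) * Q^(1/p)) := by rw [e1]; ring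
      _ ≤ _ := by
        have : (r0/2)^(1-n/p) ≤ r0^(1-n/p) := Real.rpow_le_rpow hρ.le (by linarith) hH.le
        gcongr
  have hQ1 : Q^(1/p) = M^(1/p) * I^(1/p) / c^(1/p) := by
    rw [hQdef, Real.div_rpow (by positivity) hc.le, Real.mul_rpow hM0.le hI0]
  have hMp : 0 < M^(1/p) := Real.rpow_pos_of_pos hM0 _
  have hrH : 0 < r0^(1-n/p) := Real.rpow_pos_of_pos hr0 _
  rw [Real.inv_rpow hM0.le, show (n:ℝ)/p - 1 = -(1-n/p) by ring, Real.rpow_neg hr0.le]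
  rw [hQ1] at hfin
  have h8 : |u x| ≤ r0^(1-n/p) * ((3 + 1/(1-n/p)) * (M^(1/p) * I^(1/p) / c^(1/p))) / V^(1/p) := by
    rw [le_div_iff₀ hVp, mul_comm]; exact hfin
  calc _ ≤ (r0^(1-n/p) * ((3 + 1/(1-n/p)) * (M^(1/p) * I^(1/p) / c^(1/p))) / V^(1/p)) * (r0^(1-n/p))⁻¹ * (M^(1/p))⁻¹ := by
        gcongr
    _ = _ := by
      generalize (3 + 1/(1-(n:ℝ)/p)) = G
      field_simp
end

section
/- Let p > 1. There exists a constant c_p > 0 depending only on p such that for every u ∈ C_c^∞((0,1)) and every D ≥ 1, one has sup_{x ∈ (0,1)} { |u(x)| · x^{1/p − 1} · X^{1/p}(x/D) } ≤ c_p · ( ∫_0^1 |u'(t)|^p dt − ((p−1)/p)^p ∫_0^1 |u(t)|^p / t^p dt )^{1/p}. -/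
open MeasureTheory Metric Set

lemma psi01 (p : ℝ) (hp : 1 < p) (r : ℝ) (h0 : 0 ≤ r) (h1 : r ≤ 1) :
    (min 1 (p-1)) / 2 * (1 - r)^2 ≤ r ^ p - p * r + p - 1 := by
  set m := min 1 (p-1) with hm
  have hm0 : 0 < m := lt_min one_pos (by linarith)
  have key : ∀ s : ℝ, 0 ≤ s → s ≤ 1 → s ^ (p-1) ≤ 1 + m * (s - 1) := by
    intro s hs0 hs1
    rcases le_total 1 (p-1) with h | h
    · have : m = 1 := min_eq_left h
      rw [this]
      have := Real.rpow_le_rpow_of_exponent_ge' hs0 hs1 zero_le_one h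
      rw [Real.rpow_one] at this
      linarith
    · have : m = p-1 := min_eq_right h
      rw [this]
      have := rpow_one_add_le_one_add_mul_self (s := s - 1) (by linarith) (p := p-1) (by linarith) h
      simpa using this
  have hd : ∀ s : ℝ, HasDerivAt (fun s : ℝ => s ^ p - p * s + p - 1 - m/2 * (1-s)^2)
      (p * s ^ (p-1) - p + m * (1 - s)) s := by
    intro s
    have e1 := Real.hasDerivAt_rpow_const (x := s) (p := p) (Or.inr hp.le)
    have e2 := ((hasDerivAt_id s).const_sub 1).pow 2 |>.const_mul (m/2)
    have e3 := ((((e1.sub ((hasDerivAt_id s).const_mul p)).add_const p).sub_const 1).sub e2)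
    refine e3.congr_deriv ?_
    simp; ring
  have anti : AntitoneOn (fun s : ℝ => s ^ p - p * s + p - 1 - m/2 * (1-s)^2) (Icc 0 1) := by
    apply antitoneOn_of_deriv_nonpos (convex_Icc 0 1)
    · exact fun s _ => (hd s).continuousAt.continuousWithinAt
    · exact fun s _ => (hd s).differentiableAt.differentiableWithinAt
    · intro s hs
      rw [interior_Icc] at hs
      rw [(hd s).deriv]
      have k := key s hs.1.le hs.2.le
      have : 0 ≤ m * (1 - s) := mul_nonneg hm0.le (by linarith [hs.2])
      nlinarith
  have := anti ⟨h0, h1⟩ ⟨zero_le_one, le_rfl⟩ h1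
  simp at this
  linarith

lemma scal (p : ℝ) (hp : 1 < p) : ∃ B : ℝ, 0 < B ∧ ∀ r X : ℝ, 0 ≤ X → X ≤ 1 →
    0 ≤ B * (|r| ^ p - p * r + p - 1) + (p-1) * (r - 1) * X + X ^ 2 := by
  set m := min 1 (p-1) with hm
  have hm0 : 0 < m := lt_min one_pos (by linarith)
  have hq : 0 < p - 1 := by linarith
  set q := p - 1 with hqd
  refine ⟨(q^2 + q)/m, by positivity, fun r X hX0 hX1 => ?_⟩
  have hB : (q^2+q)/m * m = q^2+q := by field_simp
  have hBp : 0 < (q^2+q)/m := by positivity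
  set B := (q^2+q)/m
  rcases le_total 1 r with h | h
  · have := one_add_mul_self_le_rpow_one_add (s := r - 1) (by linarith) hp.le
    rw [abs_of_nonneg (by linarith)]
    have h2 : 0 ≤ r ^ p - p * r + p - 1 := by
      rw [show 1 + (r-1) = r by ring] at this; linarith
    have h3 : 0 ≤ q * (r-1) := mul_nonneg hq.le (by linarith)
    positivity
  rcases le_total 0 r with h0 | h0
  · rw [abs_of_nonneg h0]
    have h2 := mul_le_mul_of_nonneg_left (psi01 p hp r h0 h) hBp.le
    have h3 : B * (min 1 (p-1) / 2 * (1-r)^2) = (q^2+q)/2 * (1-r)^2 := by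
      rw [← hB]; ring
    have h4 : 0 ≤ q * (1-r)^2 := by positivity
    nlinarith [sq_nonneg (q * (1-r) / 2 - X), sq_nonneg (q*(1-r))]
  · have h2 : m * (1 - r) ≤ |r| ^ p - p * r + p - 1 := by
      have : 0 ≤ |r| ^ p := by positivity
      have a1 : m ≤ 1 := min_le_left _ _
      have a2 : m ≤ p-1 := min_le_right _ _
      nlinarith
    have h2 := mul_le_mul_of_nonneg_left h2 hBp.le
    have h3 : B * (m * (1-r)) = (q^2+q) * (1-r) := by rw [← hB]; ring
    have h4 : 0 ≤ q * (1-r) := mul_nonneg hq.le (by linarith)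
    nlinarith [mul_le_mul_of_nonneg_left hX1 h4, mul_nonneg (sq_nonneg q) (by linarith : 0 ≤ 1-r)]

lemma ptw (p : ℝ) (hp : 1 < p) : ∃ A : ℝ, 0 < A ∧ ∀ a b t X : ℝ, 0 < t → 0 ≤ X → X ≤ 1 →
    -((p * |a| ^ (p-2) * a * b * t ^ (1-p) + |a| ^ p * ((1-p) * t ^ (-p))) * X
      + |a| ^ p * t ^ (-p) * X ^ 2) ≤
    A * (|b| ^ p - ((p-1)/p) ^ p * (|a| ^ p / t ^ p)
      - ((p-1)/p) ^ (p-1) * (p * |a| ^ (p-2) * a * b * t ^ (1-p) + |a| ^ p * ((1-p) * t ^ (-p)))) := by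
  obtain ⟨B, hB, h⟩ := scal p hp
  have hp0 : 0 < p := by linarith
  have hH : 0 < (p-1)/p := div_pos (by linarith) hp0
  have hpH : p - 1 = p * ((p-1)/p) := by field_simp
  set H := (p-1)/p with hHd
  have hHp : 0 < H ^ p := by positivity
  refine ⟨B / H ^ p, by positivity, fun a b t X ht hX0 hX1 => ?_⟩
  rcases eq_or_ne a 0 with rfl | ha
  · have : (|(0:ℝ)|) ^ p = 0 := by simp [hp0.ne']
    rw [this]; simp
    positivity
  have hap : 0 < |a| := abs_pos.mpr ha
  obtain ⟨r, hr⟩ : ∃ r, b = H * r * a / t := ⟨b * t / (H * a), by field_simp⟩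
  have e1 : |b| ^ p = H ^ p * |r| ^ p * (|a| ^ p * t ^ (-p)) := by
    rw [hr, abs_div, abs_mul, abs_mul, abs_of_pos hH, abs_of_pos ht,
      Real.div_rpow (by positivity) ht.le, Real.mul_rpow (by positivity) hap.le,
      Real.mul_rpow hH.le (abs_nonneg _), Real.rpow_neg ht.le]
    ring
  have e2 : |a| ^ (p-2) * a * b * t ^ (1-p) = H * r * (|a| ^ p * t ^ (-p)) := by
    have i1 : |a| ^ p = |a| ^ (p-2) * (a * a) := by
      rw [← abs_mul_abs_self a, ← pow_two, ← Real.rpow_natCast, ← Real.rpow_add hap]; norm_num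
    have i2 : t ^ (1-p) = t * t ^ (-p) := by
      rw [sub_eq_add_neg, Real.rpow_add ht, Real.rpow_one]
    rw [i1, i2, hr]; field_simp
  have e3 : |a| ^ p / t ^ p = |a| ^ p * t ^ (-p) := by rw [Real.rpow_neg ht.le]; rfl
  have e4 : H ^ p = H ^ (p-1) * H := by
    conv_rhs => rw [← Real.rpow_add_one hH.ne']
    norm_num
  have e5 : p * |a| ^ (p-2) * a * b * t ^ (1-p) = p * H * r * (|a| ^ p * t ^ (-p)) := by
    linear_combination p * e2
  rw [e1, e3, e5]
  set W := |a| ^ p * t ^ (-p) with hW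
  have hW0 : 0 ≤ W := by positivity
  have e6 : |a| ^ p * ((1-p) * t ^ (-p)) = (1-p) * W := by rw [hW]; ring
  rw [e6]
  have hh := mul_nonneg hW0 (h r X hX0 hX1)
  have e7 : H ^ p * |r| ^ p * W - H ^ p * W - H ^ (p-1) * (p * H * r * W + (1-p) * W)
      = H ^ p * (W * (|r| ^ p - p * r + p - 1)) := by
    have : (1 - p) = - (p * H) := by linarith
    have e8 : H ^ (p-1) * (p * H * r * W + (1-p) * W) = H ^ p * (W * (p * r - p)) := by
      rw [this, e4]; ring
    rw [e8]; ring
  rw [e7]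
  have e9 : B / H ^ p * (H ^ p * (W * (|r| ^ p - p * r + p - 1))) = B * (W * (|r| ^ p - p * r + p - 1)) := by
    field_simp
  rw [e9, ← hpH]
  nlinarith

/-- one-dimensional pointwise Hardy–Morrey estimate at the origin. -/
theorem hardy_morrey_pointwise_dim_one (p : ℝ) (hp : 1 < p) :
    ∃ c : ℝ, 0 < c ∧
      ∀ u : ℝ → ℝ, ContDiff ℝ (⊤ : ℕ∞) u → HasCompactSupport u →
        tsupport u ⊆ Set.Ioo (0 : ℝ) 1 →
        ∀ D : ℝ, 1 ≤ D → ∀ x ∈ Set.Ioo (0 : ℝ) 1,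
          |u x| * x ^ (1 / p - 1) * ((1 - Real.log (x / D))⁻¹) ^ (1 / p) ≤
            c * ((∫ t in Set.Ioo (0 : ℝ) 1, |deriv u t| ^ p)
              - ((p - 1) / p) ^ p * ∫ t in Set.Ioo (0 : ℝ) 1, |u t| ^ p / t ^ p) ^ (1 / p) := by
  obtain ⟨A, hA, key⟩ := ptw p hp
  have hp0 : 0 < p := by linarith
  refine ⟨A ^ (1/p), by positivity, fun u hu hc hs D hD x hx => ?_⟩
  have hx0 : 0 < x := hx.1
  have hx1 : x < 1 := hx.2
  -- support
  obtain ⟨e, he0, hex, heu⟩ : ∃ e : ℝ, 0 < e ∧ e < x ∧ ∀ t ≤ e, t ∉ tsupport u := by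
    rcases (tsupport u).eq_empty_or_nonempty with h | h
    · exact ⟨x/2, by linarith, by linarith, fun t _ => by simp [h]⟩
    · obtain ⟨z, hz, hzm⟩ := (show IsCompact (tsupport u) from hc).exists_isLeast h
      have hz0 := (hs hz).1
      refine ⟨min x z / 2, by positivity, ?_, ?_⟩
      · have := min_le_left x z; linarith
      · intro t ht htu
        have := hzm htu
        have h2 := min_le_right x z
        linarith
  have hu0 : ∀ t, t ∉ tsupport u → u t = 0 := fun t => image_eq_zero_of_notMem_tsupport
  have hdu0 : ∀ t, t ∉ tsupport u → deriv u t = 0 := fun t ht => by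
    by_contra hne
    exact ht (tsupport_deriv_subset (subset_tsupport _ hne))
  have hu1 : u 1 = 0 := hu0 1 fun h => by simpa using (hs h).2
  have hdc : Continuous (deriv u) := hu.continuous_deriv (by simp)
  have huc : Continuous u := hu.continuous
  have hud : ∀ t, HasDerivAt u (deriv u t) t := fun t =>
    ((hu.differentiable (by simp)) t).hasDerivAt
  set H := (p-1)/p with hH
  set E : ℝ → ℝ := fun t => |deriv u t| ^ p - H ^ p * (|u t| ^ p / t ^ p) with hE
  have c1 : Continuous fun t => |deriv u t| ^ p := hdc.abs.rpow_const fun _ => Or.inr hp0.le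
  have c2 : ContinuousOn (fun t => |u t| ^ p / t ^ p) (Icc e 1) := by
    apply ContinuousOn.div
    · exact (huc.abs.rpow_const fun _ => Or.inr hp0.le).continuousOn
    · exact (Real.continuous_rpow_const hp0.le).continuousOn
    · intro t ht
      have : 0 < t := lt_of_lt_of_le he0 ht.1
      positivity
  have c3 : ContinuousOn E (Icc e 1) := c1.continuousOn.sub (c2.const_mul _)
  have hI : (∫ t in Set.Ioo (0 : ℝ) 1, |deriv u t| ^ p)
      - H ^ p * ∫ t in Set.Ioo (0 : ℝ) 1, |u t| ^ p / t ^ p = ∫ t in e..1, E t := by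
    have hsub : Ioo e 1 ⊆ Ioo 0 1 := Ioo_subset_Ioo_left he0.le
    have hz : ∀ t ∈ Ioo (0:ℝ) 1 \ Ioo e 1, t ∉ tsupport u := by
      intro t ht
      apply heu
      by_contra hlt
      exact ht.2 ⟨not_le.mp hlt, ht.1.2⟩
    rw [setIntegral_eq_of_subset_of_forall_sdiff_eq_zero measurableSet_Ioo hsub
        (fun t ht => by rw [hdu0 t (hz t ht)]; simp [hp0.ne']),
      setIntegral_eq_of_subset_of_forall_sdiff_eq_zero (f := fun t => |u t| ^ p / t ^ p)
        measurableSet_Ioo hsub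
        (fun t ht => by rw [hu0 t (hz t ht)]; simp [hp0.ne'])]
    rw [← integral_Ioc_eq_integral_Ioo, ← integral_Ioc_eq_integral_Ioo,
      ← intervalIntegral.integral_of_le (by linarith), ← intervalIntegral.integral_of_le (by linarith),
      ← intervalIntegral.integral_const_mul, ← intervalIntegral.integral_sub]
    · exact c1.intervalIntegrable _ _
    · apply ContinuousOn.intervalIntegrable
      rw [uIcc_of_le (by linarith)]
      exact c2.const_mul _
  rw [hI]
  set G : ℝ → ℝ := fun t => |u t| ^ p * t ^ (1-p) with hG
  set G' : ℝ → ℝ := fun t => p * |u t| ^ (p-2) * u t * deriv u t * t ^ (1-p)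
      + |u t| ^ p * ((1-p) * t ^ (-p)) with hG'
  set X : ℝ → ℝ := fun t => (1 - Real.log t)⁻¹ with hX
  have dG : ∀ t, 0 < t → HasDerivAt G (G' t) t := by
    intro t ht
    have d1 := (hasDerivAt_abs_rpow (u t) hp).comp t (hud t)
    have d2 := Real.hasDerivAt_rpow_const (x := t) (p := 1-p) (Or.inl ht.ne')
    refine (d1.mul d2).congr_deriv ?_
    rw [show 1 - p - 1 = -p by ring]
    rfl
  have hXpos : ∀ t, 0 < t → t ≤ 1 → 1 ≤ 1 - Real.log t := by
    intro t h0 h1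
    have := Real.log_nonpos h0.le h1
    linarith
  have dX : ∀ t, 0 < t → t ≤ 1 → HasDerivAt X (X t ^ 2 / t) t := by
    intro t h0 h1
    have h2 := hXpos t h0 h1
    have h3 : 1 - Real.log t ≠ 0 := by linarith
    refine (((Real.hasDerivAt_log h0.ne').const_sub 1).inv h3).congr_deriv ?_
    simp only [hX]
    field_simp
  have hGe : G e = 0 := by simp [hG, hu0 e (heu e le_rfl), hp0.ne']
  have hG1 : G 1 = 0 := by simp [hG, hu1, hp0.ne']
  have hGt : ∀ t, 0 < t → G t / t = |u t| ^ p * t ^ (-p) := by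
    intro t ht
    simp only [hG]
    rw [sub_eq_add_neg, Real.rpow_add ht, Real.rpow_one]
    field_simp
  have I1 : H ^ (p-1) * G x ≤ ∫ t in e..x, E t := by
    have := intervalIntegral.sub_le_integral_of_hasDeriv_right_of_le (a := e) (b := x)
      (g := fun t => H ^ (p-1) * G t) (g' := fun t => H ^ (p-1) * G' t) (φ := E) hex.le
      (fun t ht => ((dG t (by linarith [ht.1])).const_mul _).continuousAt.continuousWithinAt)
      (fun t ht => ((dG t (by linarith [ht.1])).const_mul _).hasDerivWithinAt)
      ((c3.mono (Icc_subset_Icc_right hx1.le)).integrableOn_Icc)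
      (fun t ht => by
        have k := key (u t) (deriv u t) t 0 (by linarith [ht.1]) le_rfl zero_le_one
        simp only [mul_zero, ne_eq, OfNat.ofNat_ne_zero, not_false_eq_true, zero_pow, add_zero, neg_zero] at k
        have k2 := nonneg_of_mul_nonneg_right k hA
        simp only [hE, hG']
        linarith)
    simpa [hGe] using this
  have I2 : G x * X x / A - H ^ (p-1) * G x ≤ ∫ t in x..1, E t := by
    have dF : ∀ t, 0 < t → t ≤ 1 → HasDerivAt (fun t => H ^ (p-1) * G t - G t * X t / A)
        (H ^ (p-1) * G' t - (G' t * X t + G t * (X t ^ 2 / t)) / A) t := fun t h0 h1 =>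
      ((dG t h0).const_mul _).sub (((dG t h0).mul (dX t h0 h1)).div_const A)
    have := intervalIntegral.sub_le_integral_of_hasDeriv_right_of_le (a := x) (b := 1)
      (g := fun t => H ^ (p-1) * G t - G t * X t / A)
      (g' := fun t => H ^ (p-1) * G' t - (G' t * X t + G t * (X t ^ 2 / t)) / A) (φ := E) hx1.le
      (fun t ht => (dF t (by linarith [ht.1]) ht.2).continuousAt.continuousWithinAt)
      (fun t ht => (dF t (by linarith [ht.1]) ht.2.le).hasDerivWithinAt)
      ((c3.mono (Icc_subset_Icc_left hex.le)).integrableOn_Icc)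
      (fun t ht => by
        have ht0 : 0 < t := by linarith [ht.1]
        have hXt := hXpos t ht0 ht.2.le
        have k := key (u t) (deriv u t) t (X t) ht0 (inv_nonneg.mpr (by linarith))
          (inv_le_one_of_one_le₀ hXt)
        have e1 : G t * (X t ^ 2 / t) = |u t| ^ p * t ^ (-p) * X t ^ 2 := by
          rw [← hGt t ht0]; ring
        rw [e1]
        have k2 : -(G' t * X t + |u t| ^ p * t ^ (-p) * X t ^ 2) ≤ A * (E t - H ^ (p-1) * G' t) := k
        have k3 : -(G' t * X t + |u t| ^ p * t ^ (-p) * X t ^ 2) / A ≤ E t - H ^ (p-1) * G' t := by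
          rw [div_le_iff₀ hA]; linarith
        rw [neg_div] at k3
        linarith)
    simp only [hG1, mul_zero, zero_mul, zero_div] at this
    linarith
  have I3 : G x * X x ≤ A * ∫ t in e..1, E t := by
    have : (∫ t in e..x, E t) + ∫ t in x..1, E t = ∫ t in e..1, E t := by
      apply intervalIntegral.integral_add_adjacent_intervals
      · apply ContinuousOn.intervalIntegrable
        rw [uIcc_of_le hex.le]
        exact c3.mono (Icc_subset_Icc_right hx1.le)
      · apply ContinuousOn.intervalIntegrable
        rw [uIcc_of_le hx1.le]
        exact c3.mono (Icc_subset_Icc_left hex.le)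
    have h2 : G x * X x / A ≤ ∫ t in e..1, E t := by linarith
    rw [div_le_iff₀ hA] at h2
    linarith
  have hXx := hXpos x hx0 hx1.le
  have hX0 : 0 ≤ X x := inv_nonneg.mpr (by linarith)
  have hG0 : 0 ≤ G x := by simp only [hG]; positivity
  have hInn : 0 ≤ ∫ t in e..1, E t := by
    have := (mul_nonneg hG0 hX0).trans I3
    exact nonneg_of_mul_nonneg_right this hA
  have hXD : (1 - Real.log (x/D))⁻¹ ≤ X x := by
    apply inv_anti₀ (by linarith)
    have : Real.log (x / D) ≤ Real.log x :=
      Real.log_le_log (by positivity) (div_le_self hx0.le hD)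
    linarith
  have hXD0 : 0 ≤ (1 - Real.log (x/D))⁻¹ := by
    have : Real.log (x / D) ≤ Real.log x :=
      Real.log_le_log (by positivity) (div_le_self hx0.le hD)
    exact inv_nonneg.mpr (by linarith)
  have hip : 0 ≤ 1/p := by positivity
  have hroot : |u x| * x ^ (1/p - 1) = (G x) ^ (1/p) := by
    simp only [hG]
    rw [Real.mul_rpow (by positivity) (by positivity), ← Real.rpow_mul (abs_nonneg _),
      ← Real.rpow_mul hx0.le, mul_one_div_cancel hp0.ne', Real.rpow_one]
    congr 2
    field_simp
  calc |u x| * x ^ (1 / p - 1) * ((1 - Real.log (x / D))⁻¹) ^ (1 / p)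
      ≤ |u x| * x ^ (1 / p - 1) * (X x) ^ (1/p) := by
        apply mul_le_mul_of_nonneg_left (Real.rpow_le_rpow hXD0 hXD hip)
        positivity
    _ = (G x * X x) ^ (1/p) := by rw [hroot, Real.mul_rpow hG0 hX0]
    _ ≤ (A * ∫ t in e..1, E t) ^ (1/p) := Real.rpow_le_rpow (mul_nonneg hG0 hX0) I3 hip
    _ = A ^ (1/p) * (∫ t in e..1, E t) ^ (1/p) := Real.mul_rpow hA.le hInn
end

section
/- Let n ≥ 1 and p > n. There exists a constant C = C(n,p) > 0 such that the following holds. Let Ω ⊊ ℝⁿ be a domain with finite Lebesgue measure Lⁿ(Ω), let d(x) := dist(x, ℝⁿ∖Ω), and assume that −Δd ≥ 0 in the sense of distributions on Ω, i.e. ∫_Ω d(x) Δφ(x) dx ≤ 0 for every nonnegative φ ∈ C_c^∞(Ω). Then for every u ∈ C_c^∞(Ω), sup_{x ∈ Ω} |u(x)| ≤ C · (Lⁿ(Ω))^{1/n − 1/p} · ( ∫_Ω |∇u|^p dx − ((p−1)/p)^p ∫_Ω |u|^p / d^p dx )^{1/p}. -/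
open MeasureTheory Metric Set

/-- The (pointwise) Laplacian of a function on Euclidean space,
as the sum of its repeated directional derivatives along the coordinate directions. -/
noncomputable def lapl {n : ℕ} (φ : EuclideanSpace ℝ (Fin n) → ℝ)
    (x : EuclideanSpace ℝ (Fin n)) : ℝ :=
  ∑ i : Fin n,
    fderiv ℝ (fun y => fderiv ℝ φ y (EuclideanSpace.single i (1 : ℝ))) x
      (EuclideanSpace.single i (1 : ℝ))

lemma hs_absorb (q p ε M : ℝ) (hq : 0 ≤ q) (hqp : q < p) (hε : 0 < ε) (hM : 0 ≤ M) :
    ∃ K : ℝ, 0 ≤ K ∧ ∀ r : ℝ, 0 ≤ r → M * r ^ q ≤ ε * r ^ p + K := by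
  set r0 : ℝ := (M / ε) ^ (1 / (p - q)) with hr0
  have hr0n : 0 ≤ r0 := by positivity
  have h1 : r0 ^ (p - q) = M / ε := by
    rw [hr0, ← Real.rpow_mul (by positivity), one_div, inv_mul_cancel₀ (by linarith), Real.rpow_one]
  refine ⟨M * r0 ^ q, by positivity, fun r hr => ?_⟩
  rcases le_total r r0 with h | h
  · have : r ^ q ≤ r0 ^ q := Real.rpow_le_rpow hr h hq
    have h3 : 0 ≤ ε * r ^ p := by positivity
    nlinarith
  · rcases hr.eq_or_lt with h0 | h0
    · subst h0
      have : r0 = 0 := le_antisymm h hr0n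
      rw [this]
      have h3 : 0 ≤ ε * (0:ℝ) ^ p := by positivity
      linarith
    have h2 : M / ε ≤ r ^ (p - q) := by
      rw [← h1]; exact Real.rpow_le_rpow hr0n h (by linarith)
    have h3 : M ≤ ε * r ^ (p - q) := by
      rw [div_le_iff₀ hε] at h2; linarith
    have h4 : r ^ p = r ^ (p - q) * r ^ q := by
      rw [← Real.rpow_add h0]; congr 1; ring
    have h5 : 0 ≤ r ^ q := by positivity
    have h6 : 0 ≤ M * r0 ^ q := by positivity
    rw [h4]
    nlinarith

lemma hs_rpow_split (s e : ℝ) (hs : 0 ≤ s) (he : 1 < e) : s ^ e = s ^ (e - 1) * s := by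
  rcases hs.eq_or_lt with h0 | h0
  · subst h0
    rw [Real.zero_rpow (by linarith), mul_zero]
  · rw [← Real.rpow_add_one h0.ne']; congr 1; ring

/-- Young: p x - (p-1) ≤ x^p, strict for x ≠ 1. -/
lemma hs_bern (p x : ℝ) (hp : 1 < p) (hx : 0 ≤ x) (hx1 : x ≠ 1) :
    p * x - (p - 1) < x ^ p := by
  have := one_add_mul_self_lt_rpow_one_add (s := x - 1) (by linarith) (sub_ne_zero.2 hx1) hp
  have e : 1 + (x - 1) = x := by ring
  rw [e] at this
  linarith

set_option maxHeartbeats 1000000 in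
lemma hs_core (p q θ : ℝ) (hq : 1 < q) (hqp : q < p) (hθ0 : 0 < θ) (hθ : θ < 1) :
    ∃ c K : ℝ, 0 < c ∧ 0 ≤ K ∧ ∀ s r a : ℝ, 0 ≤ s → |a| ≤ r →
      c * r ^ q + p * s ^ (p - 1) * a - (p - 1) * s ^ p ≤
        r ^ p + K + s ^ (q - 1) * a - θ * s ^ q := by
  have hp : 1 < p := hq.trans hqp
  obtain ⟨τ, hτ1, hτ2⟩ := exists_between hθ
  have hτ0 : 0 < τ := hθ0.trans hτ1
  set κ := τ ^ p - p * τ + (p - 1) with hκ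
  have hκ0 : 0 < κ := by
    have := hs_bern p τ hp hτ0.le hτ2.ne
    linarith
  -- M with p ≤ M^(p-1)/2
  set M : ℝ := (2 * p) ^ (1 / (p - 1)) with hMd
  have hM0 : 0 < M := by positivity
  have hM : M ^ (p - 1) = 2 * p := by
    rw [hMd, ← Real.rpow_mul (by positivity), one_div, inv_mul_cancel₀ (by linarith), Real.rpow_one]
  set c0 := (1 - θ / τ) * (M ^ (q - 1))⁻¹ with hc0
  have hc0p : 0 < c0 := by
    have : θ / τ < 1 := (div_lt_one hτ0).2 hτ1
    have : 0 < 1 - θ / τ := by linarith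
    positivity
  set c := min (1/4) c0 with hc
  have hcp : 0 < c := lt_min (by norm_num) hc0p
  obtain ⟨K1, hK1, hA1⟩ := hs_absorb q p (1/4) c (by linarith) hqp (by norm_num) hcp.le
  obtain ⟨K2, hK2, hA2⟩ := hs_absorb 1 p (1/4) (p+1) (by linarith) hp (by norm_num) (by linarith)
  obtain ⟨K3, hK3, hA3⟩ := hs_absorb q p κ (c + θ) (by linarith) hqp hκ0 (by linarith)
  refine ⟨c, K1 + K2 + K3 + θ, hcp, by linarith, fun s r a hs har => ?_⟩
  have hr : 0 ≤ r := (abs_nonneg a).trans har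
  have ha1 := (abs_le.1 har).1
  have ha2 := (abs_le.1 har).2
  have hrp : 0 ≤ r ^ p := by positivity
  have hrq : 0 ≤ r ^ q := by positivity
  have hsp : 0 ≤ s ^ (p-1) := by positivity
  have hsq : 0 ≤ s ^ (q-1) := by positivity
  have hspp : 0 ≤ s ^ p := by positivity
  have hsqq : 0 ≤ s ^ q := by positivity
  rcases lt_or_ge s 1 with hs1 | hs1
  · have e1 : s ^ (p-1) ≤ 1 := Real.rpow_le_one hs hs1.le (by linarith)
    have e2 : s ^ (q-1) ≤ 1 := Real.rpow_le_one hs hs1.le (by linarith)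
    have e3 : s ^ q ≤ 1 := Real.rpow_le_one hs hs1.le (by linarith)
    have b1 : p * s ^ (p - 1) * a ≤ p * r := by
      have : s ^ (p-1) * a ≤ 1 * r :=
        (mul_le_mul_of_nonneg_left ha2 hsp).trans (mul_le_mul_of_nonneg_right e1 hr)
      rw [mul_assoc]
      exact mul_le_mul_of_nonneg_left (by linarith) (by linarith)
    have b2 : - r ≤ s ^ (q-1) * a := by
      have h1 := mul_le_mul_of_nonneg_left ha1 hsq
      have h2 := mul_le_mul_of_nonneg_right e2 hr
      linarith
    have h1 := hA1 r hr
    have h2 := hA2 r hr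
    rw [Real.rpow_one] at h2
    have b3 : θ * s ^ q ≤ θ := mul_le_of_le_one_right hθ0.le e3
    have b4 : 0 ≤ (p-1) * s ^ p := mul_nonneg (by linarith) hspp
    linarith
  · have hs0 : 0 < s := by linarith
    have hmono : s ^ (q-1) ≤ p * s ^ (p-1) := by
      have : s ^ (q-1) ≤ s ^ (p-1) := Real.rpow_le_rpow_of_exponent_le hs1 (by linarith)
      have h2 : s ^ (p-1) ≤ p * s ^ (p-1) := le_mul_of_one_le_left hsp hp.le
      linarith
    have hared : (p * s ^ (p-1) - s ^ (q-1)) * a ≤ (p * s ^ (p-1) - s ^ (q-1)) * r :=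
      mul_le_mul_of_nonneg_left ha2 (by linarith)
    have sp : s ^ p = s ^ (p-1) * s := hs_rpow_split s p hs hp
    have sq : s ^ q = s ^ (q-1) * s := hs_rpow_split s q hs hq
    suffices H : c * r ^ q + p * s ^ (p - 1) * r - (p - 1) * s ^ p ≤
        r ^ p + (K1 + K2 + K3 + θ) + s ^ (q - 1) * r - θ * s ^ q by linarith [hared, H]
    obtain ⟨ρ, hρ⟩ : ∃ ρ, r = ρ * s := ⟨r / s, by field_simp⟩
    have hρ0 : 0 ≤ ρ := by
      by_contra h; push Not at h; linarith [mul_neg_of_neg_of_pos h hs0]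
    have hrps : r ^ p = ρ ^ p * s ^ p := by rw [hρ, Real.mul_rpow hρ0 hs]
    have bern : p * ρ - (p-1) ≤ ρ ^ p := by
      by_cases h : ρ = 1
      · subst h; simp
      · exact (hs_bern p ρ hp hρ0 h).le
    have young : p * s ^ (p - 1) * r - (p - 1) * s ^ p ≤ r ^ p := by
      rw [hrps, hρ, sp]
      have h1 : 0 ≤ s ^ (p-1) * s := by positivity
      linarith [mul_le_mul_of_nonneg_right bern h1]
    rcases lt_or_ge ρ τ with hρτ | hρτ
    · -- strict region
      have hκρ : κ ≤ ρ ^ p - p * ρ + (p-1) := by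
        have hx := one_add_mul_self_le_rpow_one_add (s := ρ / τ - 1) (by
          have : 0 ≤ ρ / τ := by positivity
          linarith) hp.le
        rw [show 1 + (ρ/τ - 1) = ρ / τ by ring, Real.div_rpow hρ0 hτ0.le,
          le_div_iff₀ (by positivity)] at hx
        have htp : τ ^ p = τ ^ (p-1) * τ := hs_rpow_split τ p hτ0.le hp
        have ht1 : τ ^ (p-1) ≤ 1 := Real.rpow_le_one hτ0.le hτ2.le (by linarith)
        have e : (1 + p * (ρ/τ - 1)) * τ ^ p = τ ^ p + p * τ ^ (p-1) * (ρ - τ) := by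
          rw [htp]; field_simp
        rw [e] at hx
        have : p * (ρ - τ) ≤ p * τ ^ (p-1) * (ρ - τ) := by
          have h1 : 0 ≤ (1 - τ ^ (p-1)) * (τ - ρ) := mul_nonneg (by linarith) (by linarith)
          linarith [mul_nonneg (by linarith : (0:ℝ) ≤ p) h1]
        rw [hκ]; linarith
      have h3 := hA3 s hs
      have hrs : r ≤ s := by rw [hρ]; exact mul_le_of_le_one_left hs (by linarith)
      have hrsq : r ^ q ≤ s ^ q := Real.rpow_le_rpow hr hrs (by linarith)
      have : p * s ^ (p - 1) * r - (p - 1) * s ^ p + κ * s ^ p ≤ r ^ p := by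
        rw [hrps, hρ, sp]
        have h1 : 0 ≤ s ^ (p-1) * s := by positivity
        linarith [mul_le_mul_of_nonneg_right hκρ h1]
      have h4 : 0 ≤ s ^ (q-1) * r := by positivity
      linarith [mul_le_mul_of_nonneg_left hrsq hcp.le]
    · rcases le_or_gt ρ M with hρM | hρM
      · -- near cone
        have hρpos : 0 < ρ := by linarith
        have e1 : (1 - θ / τ) * (s ^ (q-1) * r) ≤ s ^ (q-1) * r - θ * s ^ q := by
          have : θ * s ≤ θ / τ * r := by
            rw [hρ, div_mul_eq_mul_div, le_div_iff₀ hτ0]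
            have : 0 ≤ θ * s * (ρ - τ) := mul_nonneg (by positivity) (by linarith)
            linarith
          rw [sq]; linarith [mul_le_mul_of_nonneg_left this hsq]
        have e2 : c * r ^ q ≤ (1 - θ / τ) * (s ^ (q-1) * r) := by
          have h1 : c * r ^ q ≤ c0 * r ^ q := mul_le_mul_of_nonneg_right (min_le_right _ _) hrq
          have h2 : r ^ q = r ^ (q-1) * r := hs_rpow_split r q hr hq
          have h3 : r ^ (q-1) ≤ M ^ (q-1) * s ^ (q-1) := by
            rw [← Real.mul_rpow hM0.le hs]
            exact Real.rpow_le_rpow hr (by rw [hρ]; exact mul_le_mul_of_nonneg_right hρM hs) (by linarith)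
          have h4 : (M ^ (q-1))⁻¹ * r ^ (q-1) ≤ s ^ (q-1) := by
            rw [inv_mul_le_iff₀ (by positivity)]; exact h3
          have h5 : 0 ≤ 1 - θ / τ := by
            have : θ / τ < 1 := (div_lt_one hτ0).2 hτ1
            linarith
          calc c * r ^ q ≤ c0 * r ^ q := h1
            _ = (1 - θ / τ) * (((M ^ (q-1))⁻¹ * r ^ (q-1)) * r) := by rw [h2, hc0]; ring
            _ ≤ _ := by gcongr
        linarith
      · have hsr : s * M ≤ r := by rw [hρ]; linarith [mul_le_mul_of_nonneg_right hρM.le hs]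
        have e1 : 2 * p * s ^ (p-1) ≤ r ^ (p-1) := by
          rw [← hM, ← Real.mul_rpow hM0.le hs]
          exact Real.rpow_le_rpow (by positivity) (by linarith) (by linarith)
        have e2 : p * s ^ (p-1) * r ≤ 1/2 * r ^ p := by
          rw [hs_rpow_split r p hr hp]; linarith [mul_le_mul_of_nonneg_right e1 hr]
        have h1 := hA1 r hr
        have e3 : θ * s ^ q ≤ s ^ (q-1) * r := by
          rw [sq]
          have h5 : θ * s ≤ r := by
            rw [hρ]; exact mul_le_mul_of_nonneg_right (by linarith) hs
          linarith [mul_le_mul_of_nonneg_left h5 hsq]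
        have h6 : 0 ≤ (p-1) * s ^ p := mul_nonneg (by linarith) hspp
        linarith

lemma hs_key (p q : ℝ) (hq : 1 < q) (hqp : q < p) :
    ∃ A B D c K : ℝ, 0 < A ∧ 0 < B ∧ 0 ≤ D ∧ 0 < c ∧ 0 ≤ K ∧
      (∀ t : ℝ, 0 ≤ t → 0 ≤ A * t ^ p - B * t ^ q + D) ∧
      ∀ t r a : ℝ, 0 ≤ t → |a| ≤ r →
        c * r ^ q + ((A * p * t ^ (p - 1) - B * q * t ^ (q - 1)) * a
          - (p - 1) * A * t ^ p + (q - 1) * B * t ^ q) + 2 * D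
          ≤ r ^ p - ((p - 1) / p) ^ p * t ^ p + K := by
  have hp : 1 < p := hq.trans hqp
  set H := (p - 1) / p with hH
  have hH0 : 0 < H := div_pos (by linarith) (by linarith)
  have hpH : p * H = p - 1 := by rw [hH]; field_simp
  set θ := (q - 1) / (q * H) with hθd
  have hθ0 : 0 < θ := div_pos (by linarith) (by positivity)
  have hθ1 : θ < 1 := by
    rw [hθd, div_lt_one (by positivity), hH, ← mul_div_assoc, lt_div_iff₀ (by linarith)]
    nlinarith
  obtain ⟨c, K, hc, hK, hcore⟩ := hs_core p q θ hq hqp hθ0 hθ1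
  set A := H ^ (p - 1) with hA
  set B := H ^ (q - 1) / q with hB
  have hA0 : 0 < A := by positivity
  have hB0 : 0 < B := by positivity
  obtain ⟨D, hD, hDD⟩ := hs_absorb q p A B (by linarith) hqp hA0 hB0.le
  refine ⟨A, B, D, c, K + 2 * D, hA0, hB0, hD, hc, by positivity, fun t ht => ?_, fun t r a ht ha => ?_⟩
  · have := hDD t ht; linarith
  · have h := hcore (H * t) r a (by positivity) ha
    rw [Real.mul_rpow hH0.le ht, Real.mul_rpow hH0.le ht, Real.mul_rpow hH0.le ht,
      Real.mul_rpow hH0.le ht, ← hA] at h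
    have e1 : H ^ (q-1) = B * q := by rw [hB]; field_simp
    have e2 : H ^ q = H ^ (q-1) * H := hs_rpow_split H q hH0.le hq
    have e3 : H ^ p = A * H := hs_rpow_split H p hH0.le hp
    have e4 : θ * (B * q * H) = (q-1) * B := by rw [hθd]; field_simp
    rw [e2, e1, e3] at h
    rw [e3]
    have e5 : θ * (B * q * H * t ^ q) = (q-1) * B * t ^ q := by rw [← mul_assoc, e4]
    rw [e5] at h
    have e6 : (p - 1) * (A * H * t ^ p) = (p-1) * A * t ^ p - A * H * t ^ p := by
      have : p * H * (A * t ^ p) = (p-1) * (A * t ^ p) := by rw [hpH]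
      nlinarith
    rw [e6] at h
    nlinarith

lemma hs_infDist_fderiv_norm {n : ℕ} (Ω : Set (EuclideanSpace ℝ (Fin n))) (ho : IsOpen Ω)
    (hne : Ω ≠ univ) (x : EuclideanSpace ℝ (Fin n)) (hx : x ∈ Ω)
    (hd : DifferentiableAt ℝ (fun y => infDist y Ωᶜ) x) :
    ‖fderiv ℝ (fun y => infDist y Ωᶜ) x‖ = 1 := by
  apply le_antisymm
  · simpa using norm_fderiv_le_of_lipschitz ℝ (f := fun y => infDist y Ωᶜ) (x₀ := x)
      (lipschitz_infDist_pt Ωᶜ)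
  · have hcl : IsClosed Ωᶜ := ho.isClosed_compl
    have hne' : (Ωᶜ).Nonempty := nonempty_compl.2 hne
    obtain ⟨y, hy, hxy⟩ := hcl.exists_infDist_eq_dist hne' x
    have hxy0 : 0 < dist x y := by
      rw [dist_pos]; rintro rfl; exact hy hx
    -- along the segment
    have hline : ∀ s ∈ Icc (0:ℝ) 1, infDist (x + s • (y - x)) Ωᶜ = (1 - s) * dist x y := by
      intro s hs
      apply le_antisymm
      · refine (infDist_le_dist_of_mem hy).trans ?_
        rw [dist_eq_norm, dist_eq_norm]
        have : x + s • (y - x) - y = (1 - s) • (x - y) := by module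
        rw [this, norm_smul, Real.norm_of_nonneg (by linarith [hs.2])]
      · have h1 := infDist_le_infDist_add_dist (s := Ωᶜ) (x := x) (y := x + s • (y - x))
        have h2 : dist x (x + s • (y - x)) = s * dist x y := by
          rw [dist_eq_norm, dist_eq_norm]
          have : x - (x + s • (y - x)) = s • (x - y) := by module
          rw [this, norm_smul, Real.norm_of_nonneg hs.1]
        rw [hxy, h2] at h1
        linarith
    set L := fderiv ℝ (fun y => infDist y Ωᶜ) x with hL
    have hder : HasDerivAt (fun s : ℝ => infDist (x + s • (y - x)) Ωᶜ) (L (y - x)) 0 := by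
      have h1 : HasFDerivAt (fun y => infDist y Ωᶜ) L (x + (0:ℝ) • (y - x)) := by
        simpa using hd.hasFDerivAt
      have h2 : HasDerivAt (fun s : ℝ => x + s • (y - x)) (y - x) 0 := by
        simpa using ((hasDerivAt_id (0:ℝ)).smul_const (y - x)).const_add x
      exact h1.comp_hasDerivAt 0 h2
    have hder2 : HasDerivWithinAt (fun s : ℝ => (1 - s) * dist x y) (L (y - x)) (Icc 0 1) 0 := by
      refine hder.hasDerivWithinAt.congr (fun s hs => (hline s hs).symm) (hline 0 (by simp)).symm
    have hder3 : HasDerivWithinAt (fun s : ℝ => (1 - s) * dist x y) (- dist x y) (Icc 0 1) 0 := by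
      have := (((hasDerivAt_id (0:ℝ)).const_sub 1).mul_const (dist x y)).hasDerivWithinAt (s := Icc 0 1)
      simpa using this
    have huniq : UniqueDiffWithinAt ℝ (Icc (0:ℝ) 1) 0 := uniqueDiffOn_Icc (by norm_num) 0 (by simp)
    have heq : L (y - x) = - dist x y := huniq.eq_deriv _ hder2 hder3
    have hle := L.le_opNorm (y - x)
    rw [heq, norm_neg, Real.norm_of_nonneg dist_nonneg, ← dist_eq_norm, dist_comm y x] at hle
    exact le_of_mul_le_mul_right (by linarith) hxy0

/-- the inner product of two linear forms -/
noncomputable def hsdot {n : ℕ} (L M : EuclideanSpace ℝ (Fin n) →L[ℝ] ℝ) : ℝ :=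
  ∑ i : Fin n, L (EuclideanSpace.single i (1 : ℝ)) * M (EuclideanSpace.single i (1 : ℝ))

lemma hsdot_eq {n : ℕ} (L M : EuclideanSpace ℝ (Fin n) →L[ℝ] ℝ) :
    hsdot L M = inner ℝ ((InnerProductSpace.toDual ℝ _).symm L)
      ((InnerProductSpace.toDual ℝ (EuclideanSpace ℝ (Fin n))).symm M) := by
  rw [← OrthonormalBasis.sum_inner_mul_inner (EuclideanSpace.basisFun (Fin n) ℝ)]
  unfold hsdot
  refine Finset.sum_congr rfl fun i _ => ?_
  rw [real_inner_comm _ (EuclideanSpace.basisFun (Fin n) ℝ i)]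
  simp [← InnerProductSpace.toDual_symm_apply]
  
lemma hsdot_self {n : ℕ} (L : EuclideanSpace ℝ (Fin n) →L[ℝ] ℝ) : hsdot L L = ‖L‖ ^ 2 := by
  rw [hsdot_eq, real_inner_self_eq_norm_sq, LinearIsometryEquiv.norm_map]

lemma hsdot_abs_le {n : ℕ} (L M : EuclideanSpace ℝ (Fin n) →L[ℝ] ℝ) :
    |hsdot L M| ≤ ‖L‖ * ‖M‖ := by
  rw [hsdot_eq]
  refine (abs_real_inner_le_norm _ _).trans ?_
  rw [LinearIsometryEquiv.norm_map, LinearIsometryEquiv.norm_map]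

lemma hsdot_add {n : ℕ} (L M N : EuclideanSpace ℝ (Fin n) →L[ℝ] ℝ) :
    hsdot L (M + N) = hsdot L M + hsdot L N := by
  simp [hsdot, mul_add, Finset.sum_add_distrib]

lemma hsdot_smul {n : ℕ} (c : ℝ) (L M : EuclideanSpace ℝ (Fin n) →L[ℝ] ℝ) :
    hsdot L (c • M) = c * hsdot L M := by
  simp only [hsdot, Finset.mul_sum, smul_apply, smul_eq_mul]
  exact Finset.sum_congr rfl fun i _ => by ring
open Filter Topology in
/-- integration by parts for smooth test functions -/
lemma hs_ibp {n : ℕ} (d ψ : EuclideanSpace ℝ (Fin n) → ℝ) (hd : LipschitzWith 1 d)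
    (hψ : ContDiff ℝ (⊤ : ℕ∞) ψ) (hcs : HasCompactSupport ψ) :
    ∫ x, d x * lapl ψ x = - ∑ i : Fin n, ∫ x, lineDeriv ℝ d x (EuclideanSpace.single i (1 : ℝ)) *
      lineDeriv ℝ ψ x (EuclideanSpace.single i (1 : ℝ)) := by
  have hg : ∀ i : Fin n, ContDiff ℝ (⊤ : ℕ∞)
      (fun y => fderiv ℝ ψ y (EuclideanSpace.single i (1 : ℝ))) := fun i =>
    (hψ.fderiv_right (m := (⊤ : ℕ∞)) (by simp)).clm_apply contDiff_const
  have hgc : ∀ i : Fin n, HasCompactSupport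
      (fun y => fderiv ℝ ψ y (EuclideanSpace.single i (1 : ℝ))) := fun i =>
    (hcs.fderiv (𝕜 := ℝ)).comp_left (g := fun L : EuclideanSpace ℝ (Fin n) →L[ℝ] ℝ =>
      L (EuclideanSpace.single i (1 : ℝ))) (by simp)
  have hdiff : Differentiable ℝ ψ := hψ.differentiable (by simp)
  unfold lapl
  simp_rw [Finset.mul_sum]
  rw [integral_finsetSum, ← Finset.sum_neg_distrib]
  · refine Finset.sum_congr rfl fun i _ => ?_
    set v := EuclideanSpace.single i (1 : ℝ) with hv
    set g := fun y => fderiv ℝ ψ y v with hgdef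
    obtain ⟨C, hC⟩ := (hg i).lipschitzWith_of_hasCompactSupport (hgc i) (by simp)
    have key := LipschitzWith.integral_lineDeriv_mul_eq (μ := volume) hd hC (hgc i) v
    have e1 : ∀ x, lineDeriv ℝ ψ x v = g x := fun x =>
      (hdiff x).lineDeriv_eq_fderiv
    simp_rw [e1]
    rw [key, ← integral_neg]
    refine integral_congr_ae (ae_of_all _ fun x => ?_)
    simp only
    rw [((hg i).differentiable (by simp) x).lineDeriv_eq_fderiv]
    simp [g]
    ring
  · intro i _
    apply Continuous.integrable_of_hasCompactSupport
    · exact hd.continuous.mul (((hg i).continuous_fderiv (by simp)).clm_apply continuous_const)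
    · apply HasCompactSupport.mul_left
      exact ((hgc i).fderiv (𝕜 := ℝ)).comp_left (g := fun L : EuclideanSpace ℝ (Fin n) →L[ℝ] ℝ =>
        L (EuclideanSpace.single i (1 : ℝ))) (by simp)

open Filter Topology in
lemma hs_lineDeriv_conv {n : ℕ} (η φ : EuclideanSpace ℝ (Fin n) → ℝ) (K : NNReal)
    (hη : ContDiff ℝ (⊤ : ℕ∞) η) (hηc : HasCompactSupport η) (hφ : LipschitzWith K φ)
    (x v : EuclideanSpace ℝ (Fin n)) :
    lineDeriv ℝ (convolution η φ (ContinuousLinearMap.lsmul ℝ ℝ) volume) x v =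
      convolution η (fun y => lineDeriv ℝ φ y v) (ContinuousLinearMap.lsmul ℝ ℝ) volume x := by
  have hψ : ContDiff ℝ (⊤ : ℕ∞) (convolution η φ (ContinuousLinearMap.lsmul ℝ ℝ) volume) :=
    hηc.contDiff_convolution_left _ hη hφ.continuous.locallyIntegrable
  have hdiff := (hψ.differentiable (by simp) x).lineDifferentiableAt (v := v)
  set ψ := convolution η φ (ContinuousLinearMap.lsmul ℝ ℝ) volume with hψdef
  have hf : LipschitzWith K (fun y => φ (x - y)) := by
    refine LipschitzWith.of_dist_le_mul fun a b => ?_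
    have := hφ.dist_le_mul (x - a) (x - b)
    rwa [dist_sub_left] at this
  have hηi : Integrable η volume := hη.continuous.integrable_of_hasCompactSupport hηc
  have h1 := LipschitzWith.integral_inv_smul_sub_mul_tendsto_integral_lineDeriv_mul (μ := volume)
    hf hηi (-v)
  have h2 : Tendsto (fun t : ℝ => t⁻¹ • (ψ (x + t • v) - ψ x)) (𝓝[>] 0)
      (𝓝 (lineDeriv ℝ ψ x v)) := by
    exact hdiff.hasLineDerivAt.tendsto_slope_zero_right
  have hint : ∀ z, Integrable (fun y => η y * φ (z - y)) := fun z => by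
    apply Continuous.integrable_of_hasCompactSupport
    · exact hη.continuous.mul (hφ.continuous.comp (by fun_prop))
    · exact hηc.mul_right
  have h3 : ∀ t : ℝ, ∫ y, (t⁻¹ • (φ (x - (y + t • (-v))) - φ (x - y))) * η y =
      t⁻¹ • (ψ (x + t • v) - ψ x) := by
    intro t
    rw [hψdef, convolution_lsmul, convolution_lsmul]
    simp only [smul_eq_mul]
    rw [← integral_sub (hint _) (hint _), ← integral_const_mul]
    congr 1
    ext y
    have : x - (y + t • (-v)) = x + t • v - y := by module
    rw [this]; ring
  simp_rw [h3] at h1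
  have h4 := tendsto_nhds_unique h2 h1
  rw [h4, convolution_lsmul]
  congr 1
  ext y
  have : lineDeriv ℝ (fun y => φ (x - y)) y (-v) = lineDeriv ℝ φ (x - y) v := by
    unfold lineDeriv
    have : (fun t : ℝ => φ (x - (y + t • (-v)))) = fun t : ℝ => φ (x - y + t • v) := by
      ext t
      have : x - (y + t • (-v)) = x - y + t • v := by module
      rw [this]
    rw [this]
  rw [this, smul_eq_mul, mul_comm]

open Filter Topology in
lemma hs_superharm {n : ℕ} (Ω : Set (EuclideanSpace ℝ (Fin n))) (ho : IsOpen Ω)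
    (hC : ∀ φ : EuclideanSpace ℝ (Fin n) → ℝ, ContDiff ℝ (⊤ : ℕ∞) φ →
          HasCompactSupport φ → tsupport φ ⊆ Ω → (∀ z, 0 ≤ φ z) →
          (∫ x in Ω, Metric.infDist x Ωᶜ * lapl φ x) ≤ 0)
    (φ : EuclideanSpace ℝ (Fin n) → ℝ) (K : NNReal) (hφ : LipschitzWith K φ)
    (hcs : HasCompactSupport φ) (hsub : tsupport φ ⊆ Ω) (hnn : ∀ z, 0 ≤ φ z) :
    0 ≤ ∫ x, hsdot (fderiv ℝ (fun y => infDist y Ωᶜ) x) (fderiv ℝ φ x) := by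
  set d : EuclideanSpace ℝ (Fin n) → ℝ := fun y => infDist y Ωᶜ with hd
  have hdL : LipschitzWith 1 d := lipschitz_infDist_pt _
  obtain ⟨δ, hδ, hδΩ⟩ := hcs.isCompact.exists_cthickening_subset_open ho hsub
  set S := cthickening δ (tsupport φ) with hS
  have hScomp : IsCompact S := hcs.isCompact.cthickening
  let ρ : ℕ → ContDiffBump (0 : EuclideanSpace ℝ (Fin n)) := fun k =>
    ⟨δ / (2 * (k + 1)), δ / (k + 1), by positivity, by
      apply div_lt_div_of_pos_left hδ (by positivity); 
      have : (0:ℝ) < k + 1 := by positivity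
      linarith⟩
  have hρout : ∀ k, (ρ k).rOut ≤ δ := fun k => by
    change δ / (k + 1) ≤ δ
    exact div_le_self hδ.le (by have : (0:ℝ) ≤ k := by positivity
                                linarith)
  let η : ℕ → EuclideanSpace ℝ (Fin n) → ℝ := fun k => (ρ k).normed volume
  let ψ : ℕ → EuclideanSpace ℝ (Fin n) → ℝ := fun k =>
    convolution (η k) φ (ContinuousLinearMap.lsmul ℝ ℝ) volume
  have hηs : ∀ k, ContDiff ℝ (⊤ : ℕ∞) (η k) := fun k => (ρ k).contDiff_normed
  have hηc : ∀ k, HasCompactSupport (η k) := fun k => (ρ k).hasCompactSupport_normed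
  have hψs : ∀ k, ContDiff ℝ (⊤ : ℕ∞) (ψ k) := fun k =>
    (hηc k).contDiff_convolution_left _ (hηs k) hφ.continuous.locallyIntegrable
  have hψsupp : ∀ k, tsupport (ψ k) ⊆ S := fun k => by
    apply closure_minimal _ isClosed_cthickening
    refine (support_convolution_subset _).trans ?_
    rintro z ⟨a, ha, b, hb, rfl⟩
    rw [(ρ k).support_normed_eq] at ha
    refine mem_cthickening_of_dist_le (a + b) b δ _ (subset_tsupport _ hb) ?_
    rw [mem_ball_zero_iff] at ha
    rw [dist_eq_norm, add_sub_cancel_right]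
    exact ha.le.trans (hρout k)
  have hψc : ∀ k, HasCompactSupport (ψ k) := fun k =>
    hScomp.of_isClosed_subset (isClosed_tsupport _) (hψsupp k)
  have hψnn : ∀ k z, 0 ≤ ψ k z := fun k z => by
    change 0 ≤ convolution (η k) φ (ContinuousLinearMap.lsmul ℝ ℝ) volume z
    rw [convolution_lsmul]
    exact integral_nonneg fun y => mul_nonneg ((ρ k).nonneg_normed _) (hnn _)
  have hneg : ∀ k, 0 ≤ ∑ i : Fin n, ∫ x, lineDeriv ℝ d x (EuclideanSpace.single i (1 : ℝ)) *
      lineDeriv ℝ (ψ k) x (EuclideanSpace.single i (1 : ℝ)) := fun k => by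
    have h1 := hC (ψ k) (hψs k) (hψc k) ((hψsupp k).trans hδΩ) (hψnn k)
    rw [setIntegral_eq_integral_of_forall_compl_eq_zero] at h1
    · have h2 := hs_ibp d (ψ k) hdL (hψs k) (hψc k)
      rw [h2] at h1
      linarith
    · intro x hx
      rw [infDist_zero_of_mem (mem_compl hx), zero_mul]
  have hlim : ∀ i : Fin n, Tendsto (fun k => ∫ x, lineDeriv ℝ d x (EuclideanSpace.single i (1 : ℝ)) *
      lineDeriv ℝ (ψ k) x (EuclideanSpace.single i (1 : ℝ))) atTop
      (𝓝 (∫ x, lineDeriv ℝ d x (EuclideanSpace.single i (1 : ℝ)) *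
      lineDeriv ℝ φ x (EuclideanSpace.single i (1 : ℝ)))) := by
    intro i
    set v := EuclideanSpace.single i (1 : ℝ) with hv
    have hφb : ∀ x, ‖lineDeriv ℝ φ x v‖ ≤ K * ‖v‖ := fun x => norm_lineDeriv_le_of_lipschitz ℝ hφ
    have hdb : ∀ x, ‖lineDeriv ℝ d x v‖ ≤ 1 * ‖v‖ := fun x => by
      simpa using norm_lineDeriv_le_of_lipschitz ℝ hdL (x₀ := x) (v := v)
    have hcv : ∀ k x, lineDeriv ℝ (ψ k) x v =
      convolution (η k) (fun y => lineDeriv ℝ φ y v) (ContinuousLinearMap.lsmul ℝ ℝ) volume x :=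
      fun k x => hs_lineDeriv_conv (η k) φ K (hηs k) (hηc k) hφ x v
    have hψb : ∀ k x, ‖lineDeriv ℝ (ψ k) x v‖ ≤ K * ‖v‖ := fun k x => by
      rw [hcv, convolution_lsmul]
      have hi : Integrable (η k) volume :=
        (hηs k).continuous.integrable_of_hasCompactSupport (hηc k)
      calc _ ≤ ∫ y, η k y * (K * ‖v‖) := by
            apply norm_integral_le_of_norm_le (hi.mul_const _)
            refine ae_of_all _ fun y => ?_
            rw [norm_smul, Real.norm_of_nonneg ((ρ k).nonneg_normed _)]
            exact mul_le_mul_of_nonneg_left (hφb _) ((ρ k).nonneg_normed _)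
        _ = K * ‖v‖ := by
            rw [integral_mul_const, (ρ k).integral_normed, one_mul]
    refine tendsto_integral_of_dominated_convergence
      (S.indicator fun _ => (1 * ‖v‖) * (K * ‖v‖)) ?_ ?_ ?_ ?_
    · intro k
      exact ((measurable_lineDeriv hdL.continuous).mul
        (measurable_lineDeriv (hψs k).continuous)).aestronglyMeasurable
    · rw [integrable_indicator_iff hScomp.measurableSet]
      exact integrableOn_const hScomp.measure_lt_top.ne
    · intro k
      refine ae_of_all _ fun x => ?_
      by_cases hx : x ∈ S
      · rw [indicator_of_mem hx, norm_mul]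
        exact mul_le_mul (hdb x) (hψb k x) (norm_nonneg _) (by positivity)
      · have : lineDeriv ℝ (ψ k) x v = 0 := by
          rw [((hψs k).differentiable (by simp) x).lineDeriv_eq_fderiv,
            fderiv_of_notMem_tsupport ℝ (fun h => hx (hψsupp k h))]
          simp
        rw [this]
        simp [indicator_of_notMem hx]
    · have hae := ContDiffBump.ae_convolution_tendsto_right_of_locallyIntegrable (μ := volume)
        (φ := ρ) (l := atTop) (K := 2) (g := fun y => lineDeriv ℝ φ y v) ?_ ?_ ?_
      · filter_upwards [hae] with x hx
        simp_rw [hcv]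
        exact hx.const_mul _
      · have := (tendsto_one_div_add_atTop_nhds_zero_nat (𝕜 := ℝ)).const_mul δ
        simpa [ρ, div_eq_mul_inv] using this
      · refine Eventually.of_forall fun k => ?_
        change δ / (k + 1) ≤ 2 * (δ / (2 * (k + 1)))
        apply le_of_eq
        field_simp
      · exact hφ.locallyIntegrable_lineDeriv v
  have hsum := tendsto_finsetSum Finset.univ fun i (_ : i ∈ Finset.univ) => hlim i
  have h0 := ge_of_tendsto' hsum hneg
  have hint : ∀ i ∈ (Finset.univ : Finset (Fin n)),
     Integrable (fun x => lineDeriv ℝ d x (EuclideanSpace.single i (1 : ℝ)) *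
      lineDeriv ℝ φ x (EuclideanSpace.single i (1 : ℝ))) volume := by
    intro i _
    set v := EuclideanSpace.single i (1 : ℝ) with hv
    refine Integrable.mono' (g := S.indicator fun _ => (1 * ‖v‖) * (K * ‖v‖)) ?_ ?_ ?_
    · rw [integrable_indicator_iff hScomp.measurableSet]
      exact integrableOn_const hScomp.measure_lt_top.ne
    · exact ((measurable_lineDeriv hdL.continuous).mul
        (measurable_lineDeriv hφ.continuous)).aestronglyMeasurable
    · refine ae_of_all _ fun x => ?_
      by_cases hx : x ∈ S
      · rw [indicator_of_mem hx, norm_mul]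
        refine mul_le_mul ?_ (norm_lineDeriv_le_of_lipschitz ℝ hφ) (norm_nonneg _) (by positivity)
        simpa using norm_lineDeriv_le_of_lipschitz ℝ hdL (x₀ := x) (v := v)
      · have hx' : x ∉ tsupport φ := fun h => hx (self_subset_cthickening _ h)
        have hev : φ =ᶠ[𝓝 x] 0 := notMem_tsupport_iff_eventuallyEq.1 hx'
        have : lineDeriv ℝ φ x v = 0 := by
          rw [hev.lineDeriv_eq]
          simp [lineDeriv]
        rw [this]
        simp [indicator_of_notMem hx]
  rw [← integral_finsetSum _ hint] at h0
  refine h0.trans (le_of_eq ?_)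
  refine integral_congr_ae ?_
  filter_upwards [hdL.ae_differentiableAt (μ := volume), hφ.ae_differentiableAt (μ := volume)]
    with x h1 h2
  unfold hsdot
  refine Finset.sum_congr rfl fun i _ => ?_
  rw [h1.lineDeriv_eq_fderiv, h2.lineDeriv_eq_fderiv]

open Filter Topology in
lemma hs_compact {n : ℕ} (Ω : Set (EuclideanSpace ℝ (Fin n))) (ho : IsOpen Ω)
    (hne : Ω ≠ univ) (hV : volume Ω ≠ ⊤) (ε : ℝ) (hε : 0 < ε) :
    IsCompact {x | ε ≤ infDist x Ωᶜ} := by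
  refine isCompact_of_isClosed_isBounded
    (isClosed_le continuous_const (continuous_infDist_pt _)) ?_
  have hne' : (Ωᶜ).Nonempty := nonempty_compl.2 hne
  have hlim : Tendsto (fun k : ℕ => volume (Ω \ ball (0 : EuclideanSpace ℝ (Fin n)) k)) atTop (𝓝 0) := by
    have h := tendsto_measure_iInter_atTop (μ := (volume : Measure (EuclideanSpace ℝ (Fin n))))
      (s := fun k : ℕ => Ω \ ball (0 : EuclideanSpace ℝ (Fin n)) k)
      (fun k => (ho.measurableSet.diff measurableSet_ball).nullMeasurableSet)
      (fun i j hij => sdiff_subset_sdiff_right (ball_subset_ball (by exact_mod_cast hij)))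
      ⟨0, ((measure_mono sdiff_subset).trans_lt (lt_top_iff_ne_top.2 hV)).ne⟩
    have h2 : ⋂ k : ℕ, Ω \ ball (0 : EuclideanSpace ℝ (Fin n)) k = ∅ := by
      ext x
      simp only [mem_iInter, mem_empty_iff_false, iff_false]
      intro hx
      obtain ⟨k, hk⟩ := exists_nat_gt ‖x‖
      exact (hx k).2 (mem_ball_zero_iff.2 hk)
    rw [h2, measure_empty] at h
    exact h
  have hpos : 0 < volume (ball (0 : EuclideanSpace ℝ (Fin n)) ε) := measure_ball_pos _ _ hε
  obtain ⟨k, hk⟩ := (hlim.eventually (gt_mem_nhds hpos)).exists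
  refine (isBounded_ball (x := (0 : EuclideanSpace ℝ (Fin n))) (r := k + ε)).subset ?_
  intro x hx
  by_contra hcon
  rw [mem_ball_zero_iff, not_lt] at hcon
  have hsub : ball x ε ⊆ Ω \ ball (0 : EuclideanSpace ℝ (Fin n)) k := by
    intro y hy
    refine ⟨?_, ?_⟩
    · by_contra hyΩ
      have h1 : infDist x Ωᶜ ≤ dist x y := infDist_le_dist_of_mem hyΩ
      rw [mem_ball, dist_comm] at hy
      have h2 : ε ≤ infDist x Ωᶜ := hx
      linarith
    · rw [mem_ball_zero_iff, not_lt]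
      rw [mem_ball, dist_eq_norm] at hy
      have := norm_sub_norm_le x y
      rw [norm_sub_rev] at this
      linarith
  have h3 := measure_mono (μ := volume) hsub
  have h4 : volume (ball x ε) = volume (ball (0 : EuclideanSpace ℝ (Fin n)) ε) :=
    Measure.addHaar_ball_center _ _ _
  rw [h4] at h3
  exact absurd hk (not_lt.2 h3)

lemma hs_lip_mul {X : Type*} [PseudoMetricSpace X] (f g : X → ℝ) (Kf Kg : NNReal)
    (hf : LipschitzWith Kf f) (hg : LipschitzWith Kg g) (Mf Mg : ℝ) 
    (hMf : ∀ x, |f x| ≤ Mf) (hMg : ∀ x, |g x| ≤ Mg) :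
    ∃ K : NNReal, LipschitzWith K (fun x => f x * g x) := by
  refine ⟨Real.toNNReal (Kf * Mg + Mf * Kg), LipschitzWith.of_dist_le_mul fun x y => ?_⟩
  refine le_trans ?_ (mul_le_mul_of_nonneg_right (Real.le_coe_toNNReal _) dist_nonneg)
  rw [Real.dist_eq]
  have h1 := hf.dist_le_mul x y
  have h2 := hg.dist_le_mul x y
  rw [Real.dist_eq] at h1 h2
  have e : f x * g x - f y * g y = (f x - f y) * g x + f y * (g x - g y) := by ring
  rw [e]
  refine (abs_add_le _ _).trans ?_
  rw [abs_mul, abs_mul]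
  have h3 := mul_le_mul h1 (hMg x) (abs_nonneg _) (by positivity)
  have h4 := mul_le_mul (hMf y) h2 (abs_nonneg _) ((abs_nonneg _).trans (hMf y))
  linarith

lemma hs_lip_pow (p ε : ℝ) (hp : 1 < p) (hε : 0 < ε) :
    ∃ K : NNReal, LipschitzWith K (fun y : ℝ => (max y ε) ^ (1 - p)) := by
  have h1 : LipschitzOnWith (Real.toNNReal ((p - 1) * ε ^ (-p))) (fun y : ℝ => y ^ (1 - p)) (Ici ε) := by
    refine (convex_Ici ε).lipschitzOnWith_of_nnnorm_hasDerivWithin_le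
      (f' := fun y => (1 - p) * y ^ (1 - p - 1)) ?_ ?_
    · intro y hy
      have hy0 : 0 < y := lt_of_lt_of_le hε hy
      exact (Real.hasDerivAt_rpow_const (Or.inl hy0.ne')).hasDerivWithinAt
    · intro y hy
      have hy0 : 0 < y := lt_of_lt_of_le hε hy
      rw [← NNReal.coe_le_coe, coe_nnnorm]
      refine le_trans ?_ (Real.le_coe_toNNReal _)
      rw [norm_mul, Real.norm_of_nonneg (by positivity : (0:ℝ) ≤ y ^ (1 - p - 1)), Real.norm_eq_abs,
        abs_of_neg (by linarith), show 1 - p - 1 = -p by ring, neg_sub]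
      exact mul_le_mul_of_nonneg_left (Real.rpow_le_rpow_of_nonpos hε hy (by linarith)) (by linarith)
  have h2 : LipschitzWith 1 (fun y : ℝ => max y ε) := LipschitzWith.id.max_const ε
  have h3 := h1.comp (s := univ) h2.lipschitzOnWith (fun y _ => le_max_right y ε)
  exact ⟨_, lipschitzOnWith_univ.1 h3⟩

lemma hs_lip_term {n : ℕ} (u d : EuclideanSpace ℝ (Fin n) → ℝ) (p ε : ℝ) (hp : 1 < p) (hε : 0 < ε)
    (hu : ContDiff ℝ (⊤ : ℕ∞) u) (hcs : HasCompactSupport u) (hd : LipschitzWith 1 d) :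
    ∃ K : NNReal, LipschitzWith K (fun x => |u x| ^ p * (max (d x) ε) ^ (1 - p)) := by
  have h1 : ContDiff ℝ 1 (fun x => |u x| ^ p) := by
    have := (hu.of_le (by simp : (1 : WithTop ℕ∞) ≤ ((⊤ : ℕ∞) : WithTop ℕ∞))).norm_rpow hp
    simpa only [Real.norm_eq_abs] using this
  have h1c : HasCompactSupport (fun x => |u x| ^ p) :=
    hcs.comp_left (g := fun t : ℝ => |t| ^ p) (by simp [Real.zero_rpow (by linarith : p ≠ 0)])
  obtain ⟨K1, hK1⟩ := h1.lipschitzWith_of_hasCompactSupport h1c (by simp)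
  obtain ⟨K2, hK2⟩ := hs_lip_pow p ε hp hε
  obtain ⟨M, hM⟩ := h1c.exists_bound_of_continuous h1.continuous
  refine hs_lip_mul _ _ K1 _ hK1 (hK2.comp hd) M (ε ^ (1 - p)) hM fun x => ?_
  change |max (d x) ε ^ (1 - p)| ≤ _
  have h3 : ε ≤ max (d x) ε := le_max_right _ _
  rw [abs_of_nonneg (by positivity)]
  exact Real.rpow_le_rpow_of_nonpos hε h3 (by linarith)

lemma hs_alg1 (p U δ : ℝ) (hU : 0 ≤ U) (hδ : 0 < δ) : U ^ p * δ ^ (1 - p) = δ * (U / δ) ^ p := by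
  rw [Real.div_rpow hU hδ.le, Real.rpow_sub hδ, Real.rpow_one]
  field_simp

lemma hs_alg2 (p u δ : ℝ) (hδ : 0 < δ) :
    |u| ^ (p - 2) * u * δ ^ (1 - p) = (|u| / δ) ^ (p - 1) * (u / |u|) := by
  by_cases h : u = 0
  · simp [h]
  have hu : 0 < |u| := abs_pos.2 h
  rw [Real.div_rpow hu.le hδ.le, show 1 - p = -(p - 1) by ring, Real.rpow_neg hδ.le,
    show p - 1 = (p - 2) + 1 by ring, Real.rpow_add_one hu.ne']
  field_simp

lemma hs_hasF {n : ℕ} (u d : EuclideanSpace ℝ (Fin n) → ℝ) (p : ℝ) (hp : 1 < p)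
    (x : EuclideanSpace ℝ (Fin n))
    (hu : DifferentiableAt ℝ u x) (hd : DifferentiableAt ℝ d x) (hd0 : 0 < d x) :
    HasFDerivAt (fun x => |u x| ^ p * (d x) ^ (1 - p))
      ((p * (|u x| / d x) ^ (p - 1) * (u x / |u x|)) • fderiv ℝ u x
        + ((1 - p) * (|u x| / d x) ^ p) • fderiv ℝ d x) x := by
  have h1 := (hasDerivAt_abs_rpow (u x) hp).comp_hasFDerivAt x hu.hasFDerivAt
  have h2 := (Real.hasDerivAt_rpow_const (p := 1 - p) (Or.inl hd0.ne')).comp_hasFDerivAt x hd.hasFDerivAt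
  have h3 := h1.mul h2
  refine h3.congr_fderiv ?_
  simp only [Function.comp]
  rw [smul_smul, smul_smul, add_comm]
  congr 2
  · rw [mul_assoc p ((|u x| / d x) ^ (p - 1)), ← hs_alg2 p (u x) (d x) hd0]; ring
  · rw [Real.div_rpow (abs_nonneg _) hd0.le, show 1 - p - 1 = -p by ring, Real.rpow_neg hd0.le]
    ring

set_option maxHeartbeats 1000000 in
open Filter Topology in
lemma hs_main_int {n : ℕ} (p q A B D c K : ℝ) (hq : 1 < q) (hqp : q < p)
    (hA : 0 < A) (hB : 0 < B) (hD : 0 ≤ D)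
    (hpos : ∀ t : ℝ, 0 ≤ t → 0 ≤ A * t ^ p - B * t ^ q + D)
    (hkey : ∀ t r a : ℝ, 0 ≤ t → |a| ≤ r →
        c * r ^ q + ((A * p * t ^ (p - 1) - B * q * t ^ (q - 1)) * a
          - (p - 1) * A * t ^ p + (q - 1) * B * t ^ q) + 2 * D
          ≤ r ^ p - ((p - 1) / p) ^ p * t ^ p + K)
    (Ω : Set (EuclideanSpace ℝ (Fin n))) (ho : IsOpen Ω)
    (hne : Ω ≠ univ) (hV : volume Ω ≠ ⊤)
    (hC : ∀ φ : EuclideanSpace ℝ (Fin n) → ℝ, ContDiff ℝ (⊤ : ℕ∞) φ →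
          HasCompactSupport φ → tsupport φ ⊆ Ω → (∀ z, 0 ≤ φ z) →
          (∫ x in Ω, Metric.infDist x Ωᶜ * lapl φ x) ≤ 0)
    (u : EuclideanSpace ℝ (Fin n) → ℝ) (hu : ContDiff ℝ (⊤ : ℕ∞) u)
    (hcs : HasCompactSupport u) (hsub : tsupport u ⊆ Ω) :
    c * ∫ y in Ω, ‖fderiv ℝ u y‖ ^ q ≤ 
      ((∫ y in Ω, ‖fderiv ℝ u y‖ ^ p) - ((p - 1) / p) ^ p *
                    ∫ y in Ω, |u y| ^ p / (Metric.infDist y Ωᶜ) ^ p) + K * (volume Ω).toReal := by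
  have hp : 1 < p := hq.trans hqp
  have hne' : (Ωᶜ).Nonempty := nonempty_compl.2 hne
  set d : EuclideanSpace ℝ (Fin n) → ℝ := fun y => infDist y Ωᶜ with hd
  have hdL : LipschitzWith 1 d := lipschitz_infDist_pt _
  have hdpos : ∀ x ∈ Ω, 0 < d x := fun x hx =>
    (ho.isClosed_compl.notMem_iff_infDist_pos hne').1 (by simpa using hx)
  have hdΩ : ∀ x, 0 < d x → x ∈ Ω := fun x hx => by
    by_contra h
    have : d x = 0 := infDist_zero_of_mem (mem_compl h)
    linarith
  obtain ⟨ε', hε', hεu'⟩ := hcs.isCompact.exists_forall_le' (f := d) hdL.continuous.continuousOn (a := 0)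
    (fun x hx => hdpos x (hsub hx))
  set ε := ε' / 2 with hεd
  have hε : 0 < ε := by positivity
  have hεu : ∀ x, u x ≠ 0 → 2 * ε ≤ d x := fun x hx => by
    have := hεu' x (subset_tsupport u hx)
    linarith
  set φ : EuclideanSpace ℝ (Fin n) → ℝ := fun x =>
    A * (|u x| ^ p * (max (d x) ε) ^ (1 - p)) - B * (|u x| ^ q * (max (d x) ε) ^ (1 - q))
      + 2 * D * max (d x - ε) 0 with hφ
  have hφ0 : ∀ x, u x = 0 → φ x = 2 * D * max (d x - ε) 0 := fun x hx => by
    simp [hφ, hx, Real.zero_rpow (by linarith : p ≠ 0), Real.zero_rpow (by linarith : q ≠ 0)]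
  have hφnn : ∀ x, 0 ≤ φ x := by
    intro x
    by_cases hx : u x = 0
    · rw [hφ0 x hx]; positivity
    · have h2 := hεu x hx
      have hdx : 0 < d x := by linarith
      have hm : max (d x) ε = d x := max_eq_left (by linarith)
      have hm2 : max (d x - ε) 0 = d x - ε := max_eq_left (by linarith)
      simp only [hφ, hm, hm2]
      rw [hs_alg1 p _ _ (abs_nonneg _) hdx, hs_alg1 q _ _ (abs_nonneg _) hdx]
      have h3 := mul_nonneg hdx.le (hpos (|u x| / d x) (by positivity))
      have h4 : D * d x ≤ 2 * D * (d x - ε) := by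
        have := mul_le_mul_of_nonneg_left h2 hD
        linarith
      linarith
  have hφsupp : tsupport φ ⊆ {x | ε ≤ d x} := by
    apply closure_minimal _ (isClosed_le continuous_const hdL.continuous)
    intro x hx
    by_contra hcon
    simp only [mem_ofPred_eq, not_le] at hcon
    apply hx
    have hux : u x = 0 := by
      by_contra h
      have := hεu x h
      linarith
    rw [hφ0 x hux, max_eq_right (by linarith), mul_zero]
  have hφΩ : tsupport φ ⊆ Ω := fun x hx => hdΩ x (lt_of_lt_of_le hε (hφsupp hx))
  have hφc : HasCompactSupport φ :=
    (hs_compact Ω ho hne hV ε hε).of_isClosed_subset (isClosed_tsupport _) hφsupp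
  obtain ⟨Kφ, hφL⟩ : ∃ Kφ : NNReal, LipschitzWith Kφ φ := by
    obtain ⟨K1, h1⟩ := hs_lip_term u d p ε hp hε hu hcs hdL
    obtain ⟨K2, h2⟩ := hs_lip_term u d q ε hq hε hu hcs hdL
    have h3 : LipschitzWith 1 (fun x => max (d x - ε) 0) := by
      have : LipschitzWith 1 (fun x => d x - ε) := by
        refine LipschitzWith.of_dist_le_mul fun a b => ?_
        have := hdL.dist_le_mul a b
        rwa [dist_sub_right]
      exact this.max_const 0
    have h4 : ∀ (a : ℝ) (f : EuclideanSpace ℝ (Fin n) → ℝ) (k : NNReal), LipschitzWith k f →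
        LipschitzWith (‖a‖₊ * k) (fun x => a * f x) := fun a f k hf => by
      exact (lipschitzWith_smul a).comp hf
    exact ⟨_, ((h4 A _ _ h1).sub (h4 B _ _ h2)).add (h4 (2 * D) _ _ h3)⟩
  have hint0 := hs_superharm Ω ho hC φ Kφ hφL hφc hφΩ hφnn
  change 0 ≤ ∫ x, hsdot (fderiv ℝ d x) (fderiv ℝ φ x) at hint0
  have hdiffu : Differentiable ℝ u := hu.differentiable (by simp)
  -- pointwise bound
  have hpt : ∀ x ∈ Ω, DifferentiableAt ℝ d x →
      c * ‖fderiv ℝ u x‖ ^ q + hsdot (fderiv ℝ d x) (fderiv ℝ φ x) ≤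
        ‖fderiv ℝ u x‖ ^ p - ((p - 1) / p) ^ p * (|u x| ^ p / (d x) ^ p) + K := by
    intro x hx hdx
    have hL1 : ‖fderiv ℝ d x‖ = 1 := hs_infDist_fderiv_norm Ω ho hne x hx hdx
    have hdx0 := hdpos x hx
    rw [← Real.div_rpow (abs_nonneg _) hdx0.le]
    rcases le_or_gt (d x) ε with hle | hgt
    · have hxs : x ∉ tsupport u := fun h => by
        have := hεu' x h
        linarith
      have hux : u x = 0 := image_eq_zero_of_notMem_tsupport hxs
      have hfu : fderiv ℝ u x = 0 := fderiv_of_notMem_tsupport ℝ hxs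
      have hφx : φ x = 0 := by rw [hφ0 x hux, max_eq_right (by linarith), mul_zero]
      have hmin : IsLocalMin φ x := Eventually.of_forall fun y => by rw [hφx]; exact hφnn y
      have hzero := hmin.fderiv_eq_zero
      have hk := hkey 0 0 0 le_rfl (by simp)
      rw [hzero, hux, hfu]
      have : hsdot (fderiv ℝ d x) 0 = 0 := by simp [hsdot]
      rw [this]
      simp only [norm_zero, abs_zero, zero_div]
      rw [mul_zero, Real.zero_rpow (by linarith : p ≠ 0), Real.zero_rpow (by linarith : q ≠ 0)] at *
      linarith
    · have hev : φ =ᶠ[𝓝 x] fun x => A * (|u x| ^ p * (d x) ^ (1 - p))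
          - B * (|u x| ^ q * (d x) ^ (1 - q)) + 2 * D * (d x - ε) := by
        filter_upwards [hdL.continuous.continuousAt.eventually (lt_mem_nhds hgt)] with y hy
        simp only [hφ]
        rw [max_eq_left hy.le, max_eq_left (by linarith)]
      have hF := (((hs_hasF u d p hp x (hdiffu x) hdx hdx0).const_mul A).sub
        ((hs_hasF u d q hq x (hdiffu x) hdx hdx0).const_mul B)).add
        ((hdx.hasFDerivAt.sub_const ε).const_mul (2 * D))
      have hfd : fderiv ℝ φ x = _ := (hF.congr_of_eventuallyEq hev).fderiv
      set t := |u x| / d x with ht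
      set G := fderiv ℝ u x with hG
      set L := fderiv ℝ d x with hL
      have hLL : hsdot L L = 1 := by rw [hsdot_self, hL1]; norm_num
      have e : fderiv ℝ φ x = ((A * p * t ^ (p - 1) - B * q * t ^ (q - 1)) * (u x / |u x|)) • G
          + (- (p - 1) * A * t ^ p + (q - 1) * B * t ^ q + 2 * D) • L := by
        rw [hfd]; module
      have ha : |(u x / |u x|) * hsdot L G| ≤ ‖G‖ := by
        rw [abs_mul, abs_div, abs_abs]
        have h1 := hsdot_abs_le L G
        rw [hL1, one_mul] at h1
        exact (mul_le_of_le_one_left (abs_nonneg _) (div_self_le_one _)).trans h1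
      have hk := hkey t ‖G‖ _ (by positivity) ha
      rw [e, hsdot_add, hsdot_smul, hsdot_smul, hLL]
      linarith
  -- integrability
  have hIp : ∀ e : ℝ, 0 < e → Integrable (fun y => ‖fderiv ℝ u y‖ ^ e) := fun e he => by
    apply Continuous.integrable_of_hasCompactSupport
    · exact (hu.continuous_fderiv (by simp)).norm.rpow_const (fun _ => Or.inr he.le)
    · exact (hcs.fderiv (𝕜 := ℝ)).comp_left
        (g := fun L : EuclideanSpace ℝ (Fin n) →L[ℝ] ℝ => ‖L‖ ^ e)
        (by simp [Real.zero_rpow he.ne'])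
  have hIu : Integrable (fun y => |u y| ^ p / (d y) ^ p) := by
    have e : (fun y => |u y| ^ p / (d y) ^ p) = fun y => |u y| ^ p / (max (d y) ε) ^ p := by
      ext y
      by_cases h : u y = 0
      · simp [h, Real.zero_rpow (by linarith : p ≠ 0)]
      · rw [max_eq_left (by linarith [hεu y h])]
    rw [e]
    apply Continuous.integrable_of_hasCompactSupport
    · refine (hu.continuous.abs.rpow_const (fun _ => Or.inr (by linarith))).div
        ((hdL.continuous.max continuous_const).rpow_const (fun _ => Or.inr (by linarith))) fun y => ?_
      have : 0 < max (d y) ε := lt_max_of_lt_right hε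
      positivity
    · exact (hcs.comp_left (g := fun t : ℝ => |t| ^ p)
        (by simp [Real.zero_rpow (by linarith : p ≠ 0)])).mul_right
  have hIh : IntegrableOn (fun x => hsdot (fderiv ℝ d x) (fderiv ℝ φ x)) Ω := by
    refine Measure.integrableOn_of_bounded (M := Kφ) hV ?_ ?_
    · unfold hsdot
      refine (Finset.measurable_sum _ fun i _ => ?_).aestronglyMeasurable
      exact (measurable_fderiv_apply_const ℝ d _).mul (measurable_fderiv_apply_const ℝ φ _)
    · refine ae_of_all _ fun x => ?_
      refine (hsdot_abs_le _ _).trans ?_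
      have h1 : ‖fderiv ℝ d x‖ ≤ 1 := by simpa using norm_fderiv_le_of_lipschitz ℝ hdL (x₀ := x)
      have h2 : ‖fderiv ℝ φ x‖ ≤ Kφ := norm_fderiv_le_of_lipschitz ℝ hφL
      calc _ ≤ 1 * (Kφ : ℝ) := mul_le_mul h1 h2 (norm_nonneg _) zero_le_one
        _ = _ := one_mul _
  have hIhΩ : ∫ x in Ω, hsdot (fderiv ℝ d x) (fderiv ℝ φ x) =
      ∫ x, hsdot (fderiv ℝ d x) (fderiv ℝ φ x) := by
    apply setIntegral_eq_integral_of_forall_compl_eq_zero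
    intro x hx
    rw [fderiv_of_notMem_tsupport ℝ (fun h => hx (hφΩ h))]
    simp [hsdot]
  have hmono : ∫ x in Ω, (c * ‖fderiv ℝ u x‖ ^ q + hsdot (fderiv ℝ d x) (fderiv ℝ φ x)) ≤
      ∫ x in Ω, (‖fderiv ℝ u x‖ ^ p - ((p - 1) / p) ^ p * (|u x| ^ p / (d x) ^ p) + K) := by
    apply integral_mono_ae
    · exact ((hIp q (by linarith)).integrableOn.const_mul c).add hIh
    · exact ((hIp p (by linarith)).integrableOn.sub (hIu.integrableOn.const_mul _)).add
        (integrableOn_const hV)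
    · filter_upwards [ae_restrict_mem ho.measurableSet,
        ae_restrict_of_ae (hdL.ae_differentiableAt (μ := volume))] with x h1 h2
      exact hpt x h1 h2
  have hR : ∫ x in Ω, (‖fderiv ℝ u x‖ ^ p - ((p - 1) / p) ^ p * (|u x| ^ p / (d x) ^ p) + K) =
      (∫ x in Ω, ‖fderiv ℝ u x‖ ^ p) - ((p - 1) / p) ^ p * (∫ x in Ω, |u x| ^ p / (d x) ^ p)
        + K * (volume Ω).toReal := by
    have i1 : IntegrableOn (fun x => ‖fderiv ℝ u x‖ ^ p) Ω := (hIp p (by linarith)).integrableOn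
    have i2 : IntegrableOn (fun x => ((p - 1) / p) ^ p * (|u x| ^ p / (d x) ^ p)) Ω :=
      hIu.integrableOn.const_mul _
    have i3 : IntegrableOn
      (fun x => ‖fderiv ℝ u x‖ ^ p - ((p - 1) / p) ^ p * (|u x| ^ p / (d x) ^ p)) Ω := i1.sub i2
    rw [integral_add i3 (integrableOn_const hV), integral_sub i1 i2, integral_const_mul,
      setIntegral_const, smul_eq_mul, mul_comm K]
    rfl
  rw [integral_add ((hIp q (by linarith)).integrableOn.const_mul c) hIh, integral_const_mul,
    hR, hIhΩ] at hmono
  linarith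

lemma hs_polar {n : ℕ} (hn : 1 ≤ n) (F : EuclideanSpace ℝ (Fin n) → ENNReal) (hF : Measurable F) :
    ∫⁻ z, F z = ∫⁻ ω : sphere (0 : EuclideanSpace ℝ (Fin n)) 1,
      (∫⁻ r in Ioi (0 : ℝ), ENNReal.ofReal (r ^ (n - 1)) * F (r • (ω : EuclideanSpace ℝ (Fin n))))
        ∂(volume : Measure (EuclideanSpace ℝ (Fin n))).toSphere := by
  have : Nonempty (Fin n) := ⟨⟨0, hn⟩⟩
  have hd : Module.finrank ℝ (EuclideanSpace ℝ (Fin n)) = n := by simp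
  have hmp := (volume : Measure (EuclideanSpace ℝ (Fin n))).measurePreserving_homeomorphUnitSphereProd
  rw [hd] at hmp
  have h1 : ∫⁻ z, F z = ∫⁻ z : ({(0)}ᶜ : Set (EuclideanSpace ℝ (Fin n))), F z.1 ∂((volume : Measure (EuclideanSpace ℝ (Fin n))).comap Subtype.val) := by
    rw [lintegral_subtype_comap (measurableSet_singleton _).compl F, restrict_compl_singleton]
  have hm : Measurable (fun y : sphere (0 : EuclideanSpace ℝ (Fin n)) 1 × Ioi (0 : ℝ) =>
      F (y.2.1 • (y.1 : EuclideanSpace ℝ (Fin n)))) := by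
    apply hF.comp
    fun_prop
  have h2 := hmp.lintegral_comp hm
  have h3 : ∀ a : ({(0)}ᶜ : Set (EuclideanSpace ℝ (Fin n))),
      F (((homeomorphUnitSphereProd (EuclideanSpace ℝ (Fin n)) a).2 : ℝ) •
        ((homeomorphUnitSphereProd (EuclideanSpace ℝ (Fin n)) a).1 : EuclideanSpace ℝ (Fin n))) = F a.1 := by
    intro a
    have : ‖a.1‖ ≠ 0 := norm_ne_zero_iff.2 a.2
    simp [smul_smul, this]
  simp only [h3] at h2
  rw [h1, h2, lintegral_prod _ hm.aemeasurable]
  refine lintegral_congr fun ω => ?_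
  rw [Measure.volumeIoiPow, lintegral_withDensity_eq_lintegral_mul _ (by fun_prop)
    (by exact hm.comp (measurable_const.prodMk measurable_id))]
  exact lintegral_subtype_comap measurableSet_Ioi
    (fun r : ℝ => ENNReal.ofReal (r ^ (n - 1)) * F (r • (ω : EuclideanSpace ℝ (Fin n))))

lemma hs_young (m : ℕ) (q G r R : ℝ) (hq : 1 < q) (hG : 0 ≤ G) (hr : 0 < r) (hR : 0 < R) :
    R ^ m * G ≤ r ^ m * G ^ q + r ^ m * (R / r) ^ (m * (q / (q - 1))) := by
  have hc : q.HolderConjugate (q / (q - 1)) := Real.HolderConjugate.conjExponent hq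
  have h := Real.young_inequality_of_nonneg hG (b := (R / r) ^ m) (by positivity) hc
  have h1 : ((R / r) ^ m) ^ (q / (q - 1)) = (R / r) ^ (m * (q / (q - 1))) := by
    rw [← Real.rpow_natCast, ← Real.rpow_mul (by positivity)]
  rw [h1] at h
  have h2 : G ^ q / q ≤ G ^ q := div_le_self (by positivity) hq.le
  have h3 : (R / r) ^ (m * (q / (q - 1))) / (q / (q - 1)) ≤ (R / r) ^ (m * (q / (q - 1))) :=
    div_le_self (by positivity) hc.symm.lt.le
  have h4 : R ^ m * G = r ^ m * (G * (R / r) ^ m) := by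
    rw [div_pow]; field_simp
  rw [h4, ← mul_add]
  gcongr
  linarith

lemma hs_radial {n : ℕ} (hn : 1 ≤ n) (q : ℝ) (hq : (n : ℝ) < q)
    (Ω : Set (EuclideanSpace ℝ (Fin n)))
    (u : EuclideanSpace ℝ (Fin n) → ℝ) (hu : ContDiff ℝ (⊤ : ℕ∞) u)
    (hcs : HasCompactSupport u) (hsub : tsupport u ⊆ Ω) (x ω : EuclideanSpace ℝ (Fin n))
    (hω : ‖ω‖ = 1) (R : ℝ) (hR : 0 < R) :
    ENNReal.ofReal (R ^ (n - 1) * |u x|) ≤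
      (∫⁻ r in Ioi (0 : ℝ), ENNReal.ofReal (r ^ (n - 1)) *
        (ENNReal.ofReal (‖fderiv ℝ u (x + r • ω)‖ ^ q) + Ω.indicator 1 (x + r • ω))) +
      ENNReal.ofReal (R ^ n / (n - (n - 1 : ℕ) * (q / (q - 1)))) := by
  have hq1 : 1 < q := lt_of_le_of_lt (by exact_mod_cast hn) hq
  set m := n - 1 with hm
  have hnm : (n : ℝ) = m + 1 := by rw [hm]; push_cast [hn]; ring
  set β : ℝ := m * (q / (q - 1)) with hβ
  have hβ0 : 0 ≤ β := by
    have : 0 < q - 1 := by linarith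
    positivity
  have hβn : β < n := by
    rw [hβ, ← mul_div_assoc, div_lt_iff₀ (by linarith), hnm]
    rw [hnm] at hq; nlinarith
  have hud : Differentiable ℝ u := hu.differentiable (by simp)
  have hcd : Continuous (fun r : ℝ => fderiv ℝ u (x + r • ω)) :=
    (hu.continuous_fderiv (by simp)).comp (by fun_prop)
  -- far point
  obtain ⟨M, hM0, hM⟩ : ∃ M : ℝ, 0 ≤ M ∧ u (x + M • ω) = 0 := by
    obtain ⟨ρ, hρ⟩ := hcs.isBounded.subset_closedBall (0 : EuclideanSpace ℝ (Fin n))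
    refine ⟨|ρ| + ‖x‖ + 1, by positivity, ?_⟩
    by_contra hne
    have h1 := hρ (subset_tsupport u hne)
    rw [mem_closedBall_zero_iff] at h1
    have h2 : ‖(|ρ| + ‖x‖ + 1) • ω‖ = |ρ| + ‖x‖ + 1 := by
      rw [norm_smul, hω, mul_one, Real.norm_of_nonneg (by positivity)]
    have h3 := norm_sub_le (x + (|ρ| + ‖x‖ + 1) • ω) x
    rw [add_sub_cancel_left, h2] at h3
    linarith [le_abs_self ρ]
  have hder : ∀ r : ℝ, HasDerivAt (fun r : ℝ => u (x + r • ω)) (fderiv ℝ u (x + r • ω) ω) r := by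
    intro r
    have h1 : HasDerivAt (fun r : ℝ => x + r • ω) ω r := by
      simpa using ((hasDerivAt_id r).smul_const ω).const_add x
    exact (hud _).hasFDerivAt.comp_hasDerivAt r h1
  have hftc := intervalIntegral.integral_eq_sub_of_hasDerivAt (a := 0) (b := M) (fun r _ => hder r)
    ((hcd.clm_apply continuous_const).intervalIntegrable _ _)
  have hux : |u x| ≤ ∫ r in (0 : ℝ)..M, ‖fderiv ℝ u (x + r • ω)‖ := by
    have h1 : |u x| = ‖∫ r in (0 : ℝ)..M, fderiv ℝ u (x + r • ω) ω‖ := by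
      rw [hftc]; simp [hM]
    rw [h1]
    refine intervalIntegral.norm_integral_le_of_norm_le hM0 ?_ (hcd.norm.intervalIntegrable _ _)
    refine Filter.Eventually.of_forall fun r _ => ?_
    simpa [hω] using (fderiv ℝ u (x + r • ω)).le_opNorm ω
  have hux2 : ENNReal.ofReal (R ^ m * |u x|) ≤
      ∫⁻ r in Ioi (0 : ℝ), ENNReal.ofReal (R ^ m * ‖fderiv ℝ u (x + r • ω)‖) := by
    calc ENNReal.ofReal (R ^ m * |u x|)
        ≤ ENNReal.ofReal (∫ r in Ioc (0 : ℝ) M, R ^ m * ‖fderiv ℝ u (x + r • ω)‖) := by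
          apply ENNReal.ofReal_le_ofReal
          rw [integral_const_mul, ← intervalIntegral.integral_of_le hM0]
          gcongr
      _ = ∫⁻ r in Ioc (0 : ℝ) M, ENNReal.ofReal (R ^ m * ‖fderiv ℝ u (x + r • ω)‖) := by
          apply ofReal_integral_eq_lintegral_ofReal
          · have h := ((hcd.norm.const_smul (R ^ m)).intervalIntegrable (μ := volume) 0 M).1
            exact h
          · exact Filter.Eventually.of_forall fun r => by positivity
      _ ≤ _ := lintegral_mono_set Ioc_subset_Ioi_self
  refine hux2.trans ?_
  have hpt : ∀ r ∈ Ioi (0 : ℝ), ENNReal.ofReal (R ^ m * ‖fderiv ℝ u (x + r • ω)‖) ≤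
      ENNReal.ofReal (r ^ m) *
        (ENNReal.ofReal (‖fderiv ℝ u (x + r • ω)‖ ^ q) + Ω.indicator 1 (x + r • ω)) +
      (Iio R).indicator (fun r => ENNReal.ofReal (r ^ m * (R / r) ^ β)) r := by
    intro r hr
    have hr : 0 < r := hr
    by_cases hG : fderiv ℝ u (x + r • ω) = 0
    · simp [hG]
    have hin : x + r • ω ∈ Ω := hsub (support_fderiv_subset ℝ hG)
    have hy := hs_young m q ‖fderiv ℝ u (x + r • ω)‖ r R hq1 (norm_nonneg _) hr hR
    rw [← hβ] at hy
    rw [indicator_of_mem hin, Pi.one_apply]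
    by_cases hrR : r < R
    · rw [indicator_of_mem (show r ∈ Iio R from hrR)]
      calc _ ≤ _ := ENNReal.ofReal_le_ofReal hy
        _ = ENNReal.ofReal (r ^ m) * ENNReal.ofReal (‖fderiv ℝ u (x + r • ω)‖ ^ q) +
            ENNReal.ofReal (r ^ m * (R / r) ^ β) := by
          rw [ENNReal.ofReal_add (by positivity) (by positivity), ENNReal.ofReal_mul (by positivity)]
        _ ≤ _ := by gcongr; exact le_self_add
    · rw [indicator_of_notMem (show r ∉ Iio R from hrR), add_zero]
      have h1 : (R / r) ^ β ≤ 1 :=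
        Real.rpow_le_one (by positivity) (by rw [div_le_one hr]; linarith) hβ0
      calc _ ≤ ENNReal.ofReal (r ^ m * (‖fderiv ℝ u (x + r • ω)‖ ^ q + 1)) := by
            apply ENNReal.ofReal_le_ofReal
            refine hy.trans ?_
            rw [← mul_add]; gcongr
        _ = _ := by
          rw [ENNReal.ofReal_mul (by positivity), ENNReal.ofReal_add (by positivity) (by positivity),
            ENNReal.ofReal_one]
  have hmeas : Measurable ((Iio R).indicator (fun r : ℝ => ENNReal.ofReal (r ^ m * (R / r) ^ β))) := by
    apply Measurable.indicator _ measurableSet_Iio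
    fun_prop
  refine (setLIntegral_mono' measurableSet_Ioi hpt).trans ?_
  rw [lintegral_add_right _ hmeas]
  gcongr
  rw [lintegral_indicator measurableSet_Iio, Measure.restrict_restrict measurableSet_Iio,
    Iio_inter_Ioi]
  have he : (-1 : ℝ) < m - β := by linarith
  have hint : ∫ r in (0 : ℝ)..R, r ^ (m - β) = R ^ (n - β) / (n - β) := by
    rw [integral_rpow (Or.inl he), hnm]
    rw [show (m : ℝ) - β + 1 = m + 1 - β by ring, Real.zero_rpow (by linarith), sub_zero]
  have hii := (intervalIntegral.intervalIntegrable_rpow' (a := 0) (b := R) he).1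
  have hRR : R ^ n / (n - β) = ∫ r in Ioc (0 : ℝ) R, R ^ β * r ^ (m - β) := by
    rw [integral_const_mul, ← intervalIntegral.integral_of_le hR.le, hint, ← mul_div_assoc,
      ← Real.rpow_add hR, ← Real.rpow_natCast]
    congr 2; ring
  rw [hRR, ofReal_integral_eq_lintegral_ofReal (hii.const_mul _)]
  · refine (lintegral_mono_set Ioo_subset_Ioc_self).trans ?_
    refine setLIntegral_mono' measurableSet_Ioc fun r hr => ?_
    apply ENNReal.ofReal_le_ofReal
    have hr0 : 0 < r := hr.1
    rw [Real.div_rpow hR.le hr0.le, Real.rpow_sub hr0, Real.rpow_natCast]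
    apply le_of_eq; ring
  · filter_upwards [ae_restrict_mem measurableSet_Ioc] with r hr
    have hr0 : 0 < r := hr.1
    simp only [Pi.zero_apply]; positivity

lemma hs_morrey {n : ℕ} (hn : 1 ≤ n) (q : ℝ) (hq : (n : ℝ) < q) :
    ∃ C1 : ℝ, 0 < C1 ∧ ∀ Ω : Set (EuclideanSpace ℝ (Fin n)), IsOpen Ω → volume Ω ≠ ⊤ →
      ∀ u : EuclideanSpace ℝ (Fin n) → ℝ, ContDiff ℝ (⊤ : ℕ∞) u →
      HasCompactSupport u → tsupport u ⊆ Ω → ∀ x, ∀ R : ℝ, 0 < R →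
      R ^ (n - 1) * |u x| ≤
        C1 * ((∫ y in Ω, ‖fderiv ℝ u y‖ ^ q) + (volume Ω).toReal + R ^ n) := by
  have : Nonempty (Fin n) := ⟨⟨0, hn⟩⟩
  have hq1 : 1 < q := lt_of_le_of_lt (by exact_mod_cast hn) hq
  set σ := (volume : Measure (EuclideanSpace ℝ (Fin n))).toSphere with hσ
  set s := σ.real univ with hs
  have hs0 : 0 < s := by
    rw [hs, measureReal_def]
    exact ENNReal.toReal_pos (by rw [Ne, Measure.measure_univ_eq_zero]; exact Measure.toSphere_ne_zero _)
      (measure_ne_top _ _)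
  set e : ℝ := (n - (n - 1 : ℕ) * (q / (q - 1))) with he
  have he0 : 0 < e := by
    have hnm : (n : ℝ) = (n - 1 : ℕ) + 1 := by push_cast [hn]; ring
    rw [he, sub_pos, ← mul_div_assoc, div_lt_iff₀ (by linarith)]
    nlinarith
  refine ⟨1 / s + 1 / e, by positivity, fun Ω ho hV u hu hcs hsub x R hR => ?_⟩
  set F : EuclideanSpace ℝ (Fin n) → ENNReal := fun z =>
    ENNReal.ofReal (‖fderiv ℝ u z‖ ^ q) + Ω.indicator 1 z with hF
  have hcf : Continuous (fderiv ℝ u) := hu.continuous_fderiv (by simp)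
  have hFm : Measurable F := by
    refine Measurable.add (f := fun z => ENNReal.ofReal (‖fderiv ℝ u z‖ ^ q)) ?_ ?_
    · exact ((hcf.norm.rpow_const (fun _ => Or.inr (by linarith))).measurable).ennreal_ofReal
    · exact measurable_one.indicator ho.measurableSet
  have hcsf : HasCompactSupport (fun z => ‖fderiv ℝ u z‖ ^ q) := by
    have := hcs.fderiv ℝ
    exact this.comp_left (g := fun L => ‖L‖ ^ q) (by
      simp only [norm_zero]; exact Real.zero_rpow (by linarith))
  have hintg : Integrable (fun z => ‖fderiv ℝ u z‖ ^ q) :=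
    (hcf.norm.rpow_const (fun _ => Or.inr (by linarith))).integrable_of_hasCompactSupport hcsf
  have hset : ∫ y in Ω, ‖fderiv ℝ u y‖ ^ q = ∫ y, ‖fderiv ℝ u y‖ ^ q := by
    apply setIntegral_eq_integral_of_forall_compl_eq_zero
    intro y hy
    have : fderiv ℝ u y = 0 := by
      by_contra h
      exact hy (hsub (support_fderiv_subset ℝ h))
    rw [this, norm_zero, Real.zero_rpow (by linarith)]
  have hFint : ∫⁻ z, F z = ENNReal.ofReal ((∫ y in Ω, ‖fderiv ℝ u y‖ ^ q) + (volume Ω).toReal) := by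
    rw [hF, lintegral_add_right _ (measurable_one.indicator ho.measurableSet),
      lintegral_indicator_one ho.measurableSet, hset,
      ENNReal.ofReal_add (integral_nonneg fun _ => by positivity) ENNReal.toReal_nonneg,
      ofReal_integral_eq_lintegral_ofReal hintg (Filter.Eventually.of_forall fun _ => by positivity),
      ENNReal.ofReal_toReal hV]
  have hpol := hs_polar hn (fun z => F (x + z)) (hFm.comp (by fun_prop))
  rw [lintegral_add_left_eq_self F x, hFint] at hpol
  have hle : σ univ * ENNReal.ofReal (R ^ (n - 1) * |u x|) ≤
      ENNReal.ofReal ((∫ y in Ω, ‖fderiv ℝ u y‖ ^ q) + (volume Ω).toReal) +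
        σ univ * ENNReal.ofReal (R ^ n / e) := by
    calc σ univ * ENNReal.ofReal (R ^ (n - 1) * |u x|)
        = ∫⁻ ω : sphere (0 : EuclideanSpace ℝ (Fin n)) 1, ENNReal.ofReal (R ^ (n - 1) * |u x|) ∂σ := by
          rw [lintegral_const, mul_comm]
      _ ≤ ∫⁻ ω : sphere (0 : EuclideanSpace ℝ (Fin n)) 1,
          ((∫⁻ r in Ioi (0 : ℝ), ENNReal.ofReal (r ^ (n - 1)) *
            F (x + r • (ω : EuclideanSpace ℝ (Fin n)))) + ENNReal.ofReal (R ^ n / e)) ∂σ := by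
          apply lintegral_mono
          intro ω
          exact hs_radial hn q hq Ω u hu hcs hsub x ω (by simp) R hR
      _ = _ := by
          rw [lintegral_add_right _ measurable_const, ← hpol, lintegral_const, mul_comm (σ univ)]
  have hσs : σ univ = ENNReal.ofReal s := by
    rw [hs, measureReal_def, ENNReal.ofReal_toReal (measure_ne_top _ _)]
  have hI0 : 0 ≤ ∫ y in Ω, ‖fderiv ℝ u y‖ ^ q := integral_nonneg fun _ => by positivity
  have hV0 : 0 ≤ (volume Ω).toReal := ENNReal.toReal_nonneg
  rw [hσs, ← ENNReal.ofReal_mul hs0.le, ← ENNReal.ofReal_mul hs0.le,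
    ← ENNReal.ofReal_add (by positivity) (by positivity),
    ENNReal.ofReal_le_ofReal_iff (by positivity)] at hle
  set T := (∫ y in Ω, ‖fderiv ℝ u y‖ ^ q) + (volume Ω).toReal
  have hT : 0 ≤ T := by positivity
  have h1 : R ^ (n - 1) * |u x| ≤ T / s + R ^ n / e := by
    rw [← sub_le_iff_le_add, le_div_iff₀ hs0]; linarith
  have h2 : (1 / s + 1 / e) * (T + R ^ n) = T / s + R ^ n / e + (T / e + R ^ n / s) := by ring
  rw [h2]
  have : 0 ≤ T / e + R ^ n / s := by positivity
  linarith

/-- Hardy–Sobolev inequality for `p > n`, distance to the boundary,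
under the condition `−Δd ≥ 0` in the sense of distributions. -/
theorem hardy_sobolev_boundary (n : ℕ) (hn : 1 ≤ n) (p : ℝ) (hp : (n : ℝ) < p) :
    ∃ C : ℝ, 0 < C ∧
      ∀ Ω : Set (EuclideanSpace ℝ (Fin n)), IsOpen Ω → IsConnected Ω →
        Ω ≠ Set.univ → volume Ω ≠ ⊤ →
        (∀ φ : EuclideanSpace ℝ (Fin n) → ℝ, ContDiff ℝ (⊤ : ℕ∞) φ →
          HasCompactSupport φ → tsupport φ ⊆ Ω → (∀ z, 0 ≤ φ z) →
          (∫ x in Ω, Metric.infDist x Ωᶜ * lapl φ x) ≤ 0) →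
        ∀ u : EuclideanSpace ℝ (Fin n) → ℝ, ContDiff ℝ (⊤ : ℕ∞) u →
          HasCompactSupport u → tsupport u ⊆ Ω →
          ∀ x ∈ Ω, |u x| ≤
            C * (volume Ω).toReal ^ (1 / (n : ℝ) - 1 / p) *
              ((∫ y in Ω, ‖fderiv ℝ u y‖ ^ p)
                - ((p - 1) / p) ^ p *
                    ∫ y in Ω, |u y| ^ p / (Metric.infDist y Ωᶜ) ^ p) ^ (1 / p) := by
  have hn1 : (1 : ℝ) ≤ n := by exact_mod_cast hn
  set q : ℝ := (n + p) / 2 with hqd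
  have hnq : (n : ℝ) < q := by rw [hqd]; linarith
  have hqp : q < p := by rw [hqd]; linarith
  have hq1 : 1 < q := by linarith
  have hp0 : 0 < p := by linarith
  obtain ⟨A, B, D, c, K, hA, hB, hD, hc, hK, hpos, hkey⟩ := hs_key p q hq1 hqp
  obtain ⟨C1, hC1, hmor⟩ := hs_morrey hn q hnq
  refine ⟨C1 * ((1 + K) / c + 2), by positivity, ?_⟩
  set C2 := C1 * ((1 + K) / c + 2) with hC2
  have hC20 : 0 < C2 := by positivity
  intro Ω ho hconn hne hV hC u hu hcs hsub x hx
  set V := (volume Ω).toReal with hVd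
  have hV0 : 0 < V := ENNReal.toReal_pos (ho.measure_pos volume ⟨x, hx⟩).ne' hV
  set I := (∫ y in Ω, ‖fderiv ℝ u y‖ ^ p)
                - ((p - 1) / p) ^ p *
                    ∫ y in Ω, |u y| ^ p / (Metric.infDist y Ωᶜ) ^ p with hI
  have hJ0 : 0 ≤ ∫ y in Ω, ‖fderiv ℝ u y‖ ^ q := integral_nonneg fun _ => by positivity
  have hud : Differentiable ℝ u := hu.differentiable (by simp)
  have hscale : ∀ l : ℝ, 0 < l →
      c * (l ^ q * ∫ y in Ω, ‖fderiv ℝ u y‖ ^ q) ≤ l ^ p * I + K * V := by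
    intro l hl
    have hsub' : tsupport (fun y => l * u y) ⊆ Ω := by
      refine (closure_mono ?_).trans hsub
      intro y hy h0
      exact hy (by simp [h0])
    have h := hs_main_int p q A B D c K hq1 hqp hA hB hD hpos hkey Ω ho hne hV hC
      (fun y => l * u y) (contDiff_const.mul hu) (hcs.mul_left) hsub'
    have hf : ∀ y, ‖fderiv ℝ (fun y => l * u y) y‖ = l * ‖fderiv ℝ u y‖ := by
      intro y
      rw [fderiv_const_mul (hud y), norm_smul, Real.norm_of_nonneg hl.le]
    have h1 : ∀ s : ℝ, ∫ y in Ω, ‖fderiv ℝ (fun y => l * u y) y‖ ^ s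
        = l ^ s * ∫ y in Ω, ‖fderiv ℝ u y‖ ^ s := by
      intro s
      rw [← integral_const_mul]
      congr 1; ext y
      rw [hf, Real.mul_rpow hl.le (norm_nonneg _)]
    have h2 : ∫ y in Ω, |l * u y| ^ p / (infDist y Ωᶜ) ^ p
        = l ^ p * ∫ y in Ω, |u y| ^ p / (infDist y Ωᶜ) ^ p := by
      rw [← integral_const_mul]
      congr 1; ext y
      rw [abs_mul, abs_of_pos hl, Real.mul_rpow hl.le (abs_nonneg _), mul_div_assoc]
    rw [h1, h1, h2] at h
    calc _ ≤ _ := h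
      _ = _ := by rw [hI]; ring
  have hI0 : 0 ≤ I := by
    by_contra hneg
    push Not at hneg
    have hl := hscale (((K * V + 1) / (-I)) ^ (1 / p))
      (Real.rpow_pos_of_pos (div_pos (by positivity) (by linarith)) _)
    have h0 : (((K * V + 1) / (-I)) ^ (1 / p)) ^ p = (K * V + 1) / (-I) := by
      rw [← Real.rpow_mul (div_pos (by positivity) (by linarith)).le, one_div_mul_cancel hp0.ne',
        Real.rpow_one]
    rw [h0] at hl
    have h1 : (K * V + 1) / (-I) * I = -(K * V + 1) := by
      have : I ≠ 0 := hneg.ne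
      field_simp
    rw [h1] at hl
    have h2 : 0 ≤ ((K * V + 1) / (-I)) ^ (1 / p) :=
      Real.rpow_nonneg (div_pos (by positivity) (by linarith)).le _
    have h3 : 0 ≤ c * ((((K * V + 1) / (-I)) ^ (1 / p)) ^ q * ∫ y in Ω, ‖fderiv ℝ u y‖ ^ q) := by
      positivity
    linarith
  -- scaled pointwise bound
  have hbd : ∀ l : ℝ, 0 < l → l ^ p * I ≤ V → |u x| ≤ C2 * V ^ (1 / (n : ℝ)) / l := by
    intro l hl hle
    have hsub' : tsupport (fun y => l * u y) ⊆ Ω := by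
      refine (closure_mono ?_).trans hsub
      intro y hy h0
      exact hy (by simp [h0])
    set R := V ^ (1 / (n : ℝ)) with hR
    have hR0 : 0 < R := by positivity
    have hRn : R ^ n = V := by
      rw [hR, ← Real.rpow_natCast, ← Real.rpow_mul hV0.le, one_div_mul_cancel (by linarith),
        Real.rpow_one]
    have h := hmor Ω ho hV (fun y => l * u y) (contDiff_const.mul hu) (hcs.mul_left) hsub' x R hR0
    have h1 : ∫ y in Ω, ‖fderiv ℝ (fun y => l * u y) y‖ ^ q
        = l ^ q * ∫ y in Ω, ‖fderiv ℝ u y‖ ^ q := by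
      rw [← integral_const_mul]
      congr 1; ext y
      rw [fderiv_const_mul (hud y), norm_smul, Real.norm_of_nonneg hl.le,
        Real.mul_rpow hl.le (norm_nonneg _)]
    rw [h1, hRn, abs_mul, abs_of_pos hl] at h
    have h2 : l ^ q * ∫ y in Ω, ‖fderiv ℝ u y‖ ^ q ≤ (1 + K) / c * V := by
      rw [div_mul_eq_mul_div, le_div_iff₀ hc]
      linarith [hscale l hl]
    have h3 : R ^ (n - 1) * (l * |u x|) ≤ C2 * V := by
      calc _ ≤ _ := h
        _ ≤ C1 * ((1 + K) / c * V + V + V) := by gcongr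
        _ = _ := by rw [hC2]; ring
    have h4 : V = R ^ (n - 1) * R := by
      rw [← pow_succ, Nat.sub_add_cancel hn, hRn]
    rw [h4] at h3
    have h5 : l * |u x| ≤ C2 * R := by
      have : 0 < R ^ (n - 1) := by positivity
      refine le_of_mul_le_mul_left ?_ this
      linarith
    rw [le_div_iff₀ hl]; linarith
  rcases hI0.eq_or_lt with hz | hIpos
  · have h0 : |u x| ≤ 0 := by
      refine le_of_forall_pos_le_add fun ε hε => ?_
      have := hbd (C2 * V ^ (1 / (n : ℝ)) / ε) (by positivity) (by rw [← hz]; simpa using hV0.le)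
      have h2 : C2 * V ^ (1 / (n : ℝ)) / (C2 * V ^ (1 / (n : ℝ)) / ε) = ε := by
        have : 0 < V ^ (1 / (n : ℝ)) := by positivity
        field_simp
      linarith
    refine h0.trans ?_
    positivity
  · have h := hbd ((V / I) ^ (1 / p)) (by positivity) (by
      rw [← Real.rpow_mul (by positivity), one_div_mul_cancel hp0.ne', Real.rpow_one]
      exact le_of_eq (by field_simp))
    refine h.trans (le_of_eq ?_)
    rw [Real.div_rpow hV0.le hI0, Real.rpow_sub hV0]
    have h1 : 0 < V ^ (1 / p) := by positivity
    have h2 : 0 < I ^ (1 / p) := by positivity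
    field_simp
end
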